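/- arXiv:2008.03812 — 2 statements merged into one kernel-verified Lean document; each statement's English description precedes it below -/
import Mathlib

section
/- There exists a constant C > 0 such that for every natural number n ≥ 5 there is an element x of the alternating group A_n — an n-cycle if n is odd, and a product of two disjoint (n/2)-cycles if n is even — such that the number of y ∈ A_n for which {x, y} invariably generates A_n is at least (1 − C·n^{−2/25}) · |A_n|. -/
/-- `{x, y}` invariably generates `G`: for all `g, h`, the conjugates
`g * x * g⁻¹` and `h * y * h⁻¹` generate `G`. -/
def InvGen {G : Type*} [Group G] (x y : G) : Prop :=
  ∀ g h : G, Subgroup.closure {g * x * g⁻¹, h * y * h⁻¹} = ⊤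

set_option linter.unusedSectionVars false
namespace IG
open Finset Equiv

section cyc
variable {α : Type*} [Fintype α] [DecidableEq α]

open Classical in
noncomputable def cycSet (σ : Perm α) (a : α) : Finset α := univ.filter (fun b => σ.SameCycle a b)

noncomputable def cyc (σ : Perm α) : Finset (Finset α) := univ.image (cycSet σ)

def Inv (σ : Perm α) (X : Finset α) : Prop := ∀ a, σ a ∈ X ↔ a ∈ X

noncomputable def ctX (σ : Perm α) (X : Finset α) : Multiset ℕ :=
  ((cyc σ).filter (· ⊆ X)).val.map Finset.card

noncomputable def ct (σ : Perm α) : Multiset ℕ := (cyc σ).val.map Finset.card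

lemma mem_cycSet {σ : Perm α} {a b : α} : b ∈ cycSet σ a ↔ σ.SameCycle a b := by
  simp [cycSet]

lemma self_mem_cycSet (σ : Perm α) (a : α) : a ∈ cycSet σ a := mem_cycSet.2 (Perm.SameCycle.refl _ _)

lemma mem_cyc {σ : Perm α} {X : Finset α} : X ∈ cyc σ ↔ ∃ a, cycSet σ a = X := by
  simp [cyc]

lemma cycSet_mem_cyc (σ : Perm α) (a : α) : cycSet σ a ∈ cyc σ := mem_cyc.2 ⟨a, rfl⟩

lemma cycSet_eq_of_mem {σ : Perm α} {a b : α} (h : b ∈ cycSet σ a) : cycSet σ b = cycSet σ a := by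
  rw [mem_cycSet] at h
  ext c
  simp only [mem_cycSet]
  exact ⟨fun k => h.trans k, fun k => h.symm.trans k⟩

lemma cyc_eq_cycSet {σ : Perm α} {X : Finset α} (hX : X ∈ cyc σ) {a : α} (ha : a ∈ X) :
    X = cycSet σ a := by
  obtain ⟨b, rfl⟩ := mem_cyc.1 hX
  exact (cycSet_eq_of_mem ha).symm

lemma cyc_nonempty {σ : Perm α} {X : Finset α} (hX : X ∈ cyc σ) : X.Nonempty := by
  obtain ⟨b, rfl⟩ := mem_cyc.1 hX
  exact ⟨b, self_mem_cycSet _ _⟩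

lemma cyc_disjoint {σ : Perm α} {X Y : Finset α} (hX : X ∈ cyc σ) (hY : Y ∈ cyc σ) (h : X ≠ Y) :
    Disjoint X Y := by
  rw [Finset.disjoint_left]
  intro a ha hb
  exact h ((cyc_eq_cycSet hX ha).trans (cyc_eq_cycSet hY hb).symm)

lemma Inv.sameCycle {σ : Perm α} {X : Finset α} (h : Inv σ X) {a b : α} (hab : σ.SameCycle a b) :
    a ∈ X ↔ b ∈ X := by
  obtain ⟨i, hi⟩ := hab.exists_nat_pow_eq
  rw [← hi]
  clear hi hab b
  induction i with
  | zero => simp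
  | succ n ih => rw [pow_succ', Perm.mul_apply, h, ih]

lemma Inv.cycSet_subset {σ : Perm α} {X : Finset α} (h : Inv σ X) {a : α} (ha : a ∈ X) :
    cycSet σ a ⊆ X := fun _ hb => (h.sameCycle (mem_cycSet.1 hb)).1 ha

lemma Inv.compl {σ : Perm α} {X : Finset α} (h : Inv σ X) : Inv σ Xᶜ := by
  intro a; simp [h a]

lemma cyc_inv {σ : Perm α} {X : Finset α} (hX : X ∈ cyc σ) : Inv σ X := by
  obtain ⟨b, rfl⟩ := mem_cyc.1 hX
  intro a
  simp [mem_cycSet]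

lemma Inv.dich {σ : Perm α} {X : Finset α} (h : Inv σ X) {Y : Finset α} (hY : Y ∈ cyc σ) :
    (¬ Y ⊆ X) ↔ Y ⊆ Xᶜ := by
  obtain ⟨b, rfl⟩ := mem_cyc.1 hY
  constructor
  · intro hb
    apply h.compl.cycSet_subset
    rw [mem_compl]
    exact fun hh => hb (h.cycSet_subset hh)
  · intro hb hb'
    exact (mem_compl.1 (hb (self_mem_cycSet σ b))) (hb' (self_mem_cycSet σ b))

lemma ct_split {σ : Perm α} {X : Finset α} (h : Inv σ X) : ct σ = ctX σ X + ctX σ Xᶜ := by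
  have : (cyc σ).filter (· ⊆ Xᶜ) = (cyc σ).filter (fun Y => ¬ Y ⊆ X) :=
    Finset.filter_congr (fun Y hY => (h.dich hY).symm)
  rw [ct, ctX, ctX, this, ← Multiset.map_add, Finset.filter_val, Finset.filter_val,
    Multiset.filter_add_not]

lemma sum_card_cyc (σ : Perm α) : ∑ X ∈ cyc σ, X.card = Fintype.card α := by
  rw [← Finset.card_biUnion (fun X hX Y hY h => cyc_disjoint hX hY h)]
  rw [← Finset.card_univ]
  congr 1
  ext a
  simp only [mem_biUnion, mem_univ, iff_true]
  exact ⟨_, cycSet_mem_cyc σ a, self_mem_cycSet σ a⟩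

/-- `X ∈ cyc σ` in terms of `ctX`. -/
lemma mem_cyc_iff {σ : Perm α} {X : Finset α} : X ∈ cyc σ ↔ X.Nonempty ∧ Inv σ X ∧ ctX σ X = {X.card} := by
  constructor
  · intro h
    refine ⟨cyc_nonempty h, cyc_inv h, ?_⟩
    have : (cyc σ).filter (· ⊆ X) = {X} := by
      ext Y
      simp only [mem_filter, mem_singleton]
      constructor
      · rintro ⟨hY, hs⟩
        by_contra hne
        have := cyc_disjoint hY h hne
        obtain ⟨a, ha⟩ := cyc_nonempty hY
        exact (Finset.disjoint_left.1 this) ha (hs ha)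
      · rintro rfl; exact ⟨h, subset_rfl⟩
    rw [ctX, this]; simp
  · rintro ⟨⟨a, ha⟩, hI, hc⟩
    have h1 : cycSet σ a ∈ (cyc σ).filter (· ⊆ X) :=
      mem_filter.2 ⟨cycSet_mem_cyc _ _, hI.cycSet_subset ha⟩
    have h2 : (cycSet σ a).card ∈ ctX σ X := by
      rw [ctX]; exact Multiset.mem_map_of_mem _ h1
    rw [hc, Multiset.mem_singleton] at h2
    have : cycSet σ a = X := Finset.eq_of_subset_of_card_le (hI.cycSet_subset ha) h2.ge
    rw [← this]; exact cycSet_mem_cyc _ _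

lemma ctX_subtypeCongr (X : Finset α) (e₁ : Perm {a // a ∈ X}) (e₂ : Perm {a // ¬ a ∈ X}) :
    ctX (Perm.subtypeCongr e₁ e₂) X = ct e₁ ∧ ctX (Perm.subtypeCongr e₁ e₂) Xᶜ = ct e₂ := by
  set σ := Perm.subtypeCongr e₁ e₂ with hσ
  have hL : ∀ a : {a // a ∈ X}, σ a = e₁ a := fun a => Perm.subtypeCongr.left_apply_subtype _ _ a
  have hR : ∀ a : {a // ¬ a ∈ X}, σ a = e₂ a := fun a => Perm.subtypeCongr.right_apply_subtype _ _ a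
  have hI : Inv σ X := by
    intro a
    by_cases ha : a ∈ X
    · have := hL ⟨a, ha⟩
      simp only at this
      rw [this]; simp [ha]
    · have := hR ⟨a, ha⟩
      simp only at this
      rw [this]; simp only [ha, iff_false]; exact (e₂ _).2
  have hLp : ∀ (i : ℕ) (a : {a // a ∈ X}), (σ ^ i) a = ((e₁ ^ i) a : {a // a ∈ X}) := by
    intro i; induction i with
    | zero => simp
    | succ n ih => intro a; rw [pow_succ, pow_succ, Perm.mul_apply, Perm.mul_apply, hL, ih]
  have hRp : ∀ (i : ℕ) (a : {a // ¬ a ∈ X}), (σ ^ i) a = ((e₂ ^ i) a : {a // ¬ a ∈ X}) := by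
    intro i; induction i with
    | zero => simp
    | succ n ih => intro a; rw [pow_succ, pow_succ, Perm.mul_apply, Perm.mul_apply, hR, ih]
  have hLs : ∀ (a b : {a // a ∈ X}), σ.SameCycle a b ↔ e₁.SameCycle a b := by
    intro a b
    constructor
    · intro h
      obtain ⟨i, hi⟩ := h.exists_nat_pow_eq
      exact ⟨i, by rw [zpow_natCast]; apply Subtype.ext; rw [← hLp, hi]⟩
    · intro h
      obtain ⟨i, hi⟩ := h.exists_nat_pow_eq
      exact ⟨i, by rw [zpow_natCast, hLp, hi]⟩
  have hRs : ∀ (a b : {a // ¬ a ∈ X}), σ.SameCycle a b ↔ e₂.SameCycle a b := by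
    intro a b
    constructor
    · intro h
      obtain ⟨i, hi⟩ := h.exists_nat_pow_eq
      exact ⟨i, by rw [zpow_natCast]; apply Subtype.ext; rw [← hRp, hi]⟩
    · intro h
      obtain ⟨i, hi⟩ := h.exists_nat_pow_eq
      exact ⟨i, by rw [zpow_natCast, hRp, hi]⟩
  have key : ∀ (p : α → Prop) [Fintype {a // p a}] (Z : Finset α) (hZ : ∀ a, a ∈ Z ↔ p a) (hIZ : Inv σ Z) (e : Perm {a // p a})
      (hs : ∀ (a b : {a // p a}), σ.SameCycle a b ↔ e.SameCycle a b), ctX σ Z = ct e := by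
    intro p _ Z hZ hIZ e hs
    have : (cyc σ).filter (· ⊆ Z) = (cyc e).map (Finset.mapEmbedding (Function.Embedding.subtype p)).toEmbedding := by
      have hmap : ∀ a : {a // p a}, (cycSet e a).map (Function.Embedding.subtype p) = cycSet σ a := by
        intro a
        ext b
        simp only [mem_map, mem_cycSet, Function.Embedding.coe_subtype]
        constructor
        · rintro ⟨c, hc, rfl⟩
          exact (hs _ _).2 hc
        · intro h
          have hb : p b := (hZ b).1 ((hIZ.sameCycle h).1 ((hZ _).2 a.2))
          exact ⟨⟨b, hb⟩, (hs a ⟨b, hb⟩).1 h, rfl⟩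
      ext Y
      simp only [mem_filter, mem_map, RelEmbedding.coe_toEmbedding, Finset.mapEmbedding_apply, mem_cyc]
      constructor
      · rintro ⟨⟨a, rfl⟩, hs⟩
        have ha : p a := (hZ a).1 (hs (self_mem_cycSet σ a))
        exact ⟨_, ⟨⟨a, ha⟩, rfl⟩, hmap _⟩
      · rintro ⟨_, ⟨a, rfl⟩, rfl⟩
        rw [hmap]
        exact ⟨⟨a, rfl⟩, hIZ.cycSet_subset ((hZ _).2 a.2)⟩
    rw [ctX, this, ct, Finset.map_val, Multiset.map_map]
    apply Multiset.map_congr rfl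
    intro Y _
    simp
  exact ⟨key _ X (fun _ => Iff.rfl) hI e₁ hLs, key _ Xᶜ (fun _ => by simp) hI.compl e₂ hRs⟩

lemma ct_conj {β : Type*} [Fintype β] [DecidableEq β] (e : α ≃ β) (σ : Perm α) :
    ct (e.permCongr σ) = ct σ := by
  have hp : ∀ (i : ℕ) (a : α), ((e.permCongr σ) ^ i) (e a) = e ((σ ^ i) a) := by
    intro i; induction i with
    | zero => simp
    | succ n ih => intro a; rw [pow_succ, pow_succ, Perm.mul_apply, Perm.mul_apply]; simp [ih, Equiv.permCongr_apply]
  have hs : ∀ a b, (e.permCongr σ).SameCycle (e a) (e b) ↔ σ.SameCycle a b := by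
    intro a b
    constructor
    · intro h
      obtain ⟨i, hi⟩ := h.exists_nat_pow_eq
      exact ⟨i, by rw [zpow_natCast]; apply e.injective; rw [← hp, hi]⟩
    · intro h
      obtain ⟨i, hi⟩ := h.exists_nat_pow_eq
      exact ⟨i, by rw [zpow_natCast, hp, hi]⟩
  have : cyc (e.permCongr σ) = (cyc σ).map (Finset.mapEmbedding e.toEmbedding).toEmbedding := by
    have hmap : ∀ a, (cycSet σ a).map e.toEmbedding = cycSet (e.permCongr σ) (e a) := by
      intro a; ext b
      obtain ⟨b, rfl⟩ := e.surjective b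
      simp [mem_cycSet, hs]
    ext Y
    simp only [mem_map, RelEmbedding.coe_toEmbedding, Finset.mapEmbedding_apply, mem_cyc]
    constructor
    · rintro ⟨a, rfl⟩
      obtain ⟨a, rfl⟩ := e.surjective a
      exact ⟨_, ⟨a, rfl⟩, hmap a⟩
    · rintro ⟨_, ⟨a, rfl⟩, rfl⟩
      exact ⟨e a, (hmap a).symm⟩
  rw [ct, this, ct, Finset.map_val, Multiset.map_map]
  apply Multiset.map_congr rfl
  intro Y _
  simp

end cyc

noncomputable def avg (n : ℕ) (F : Multiset ℕ → ℝ) : ℝ :=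
  (∑ σ : Perm (Fin n), F (ct σ)) / (n.factorial : ℝ)

section avg
variable {α : Type*} [Fintype α] [DecidableEq α]

lemma sum_ct (F : Multiset ℕ → ℝ) {n : ℕ} (hn : Fintype.card α = n) :
    ∑ σ : Perm α, F (ct σ) = n.factorial * avg n F := by
  have e : α ≃ Fin n := Fintype.equivFinOfCardEq hn
  rw [avg, mul_div_cancel₀ _ (by positivity)]
  apply Fintype.sum_equiv e.permCongr
  intro σ
  rw [ct_conj]

open Classical in
lemma sum_inv (X : Finset α) (F G : Multiset ℕ → ℝ) {n k : ℕ} (hn : Fintype.card α = n) (hk : X.card = k) :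
    ∑ σ : Perm α with Inv σ X, F (ctX σ X) * G (ctX σ Xᶜ) =
      (k.factorial * avg k F) * ((n - k).factorial * avg (n - k) G) := by
  rw [← sum_ct (α := {a // a ∈ X}) F (by simp [hk]),
    ← sum_ct (α := {a // ¬ a ∈ X}) G (by rw [Fintype.card_subtype_compl]; simp [hk, hn]),
    Finset.sum_mul_sum, ← Finset.sum_product']
  symm
  apply Finset.sum_bij (fun p _ => Perm.subtypeCongr p.1 p.2)
  · rintro ⟨e₁, e₂⟩ -
    simp only [mem_filter, mem_univ, true_and]
    intro a
    by_cases ha : a ∈ X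
    · rw [Perm.subtypeCongr.left_apply _ _ ha]; simp [ha]
    · rw [Perm.subtypeCongr.right_apply _ _ ha]; simp only [ha, iff_false]; exact (e₂ _).2
  · rintro ⟨e₁, e₂⟩ - ⟨f₁, f₂⟩ - h
    exact Perm.subtypeCongrHom_injective (fun a => a ∈ X) h
  · intro σ hσ
    simp only [mem_filter, mem_univ, true_and] at hσ
    refine ⟨(σ.subtypePerm (fun a => hσ a), σ.subtypePerm (p := fun a => ¬ a ∈ X) (fun a => not_congr (hσ a))), by simp, ?_⟩
    ext a
    by_cases ha : a ∈ X
    · simp [Perm.subtypeCongr.left_apply _ _ ha]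
    · simp [Perm.subtypeCongr.right_apply _ _ ha]
  · rintro ⟨e₁, e₂⟩ -
    rw [(ctX_subtypeCongr X e₁ e₂).1, (ctX_subtypeCongr X e₁ e₂).2]

open Classical in
lemma sum_sum_inv (F G : Multiset ℕ → ℝ) {n k : ℕ} (hn : Fintype.card α = n) (hk : k ≤ n) :
    ∑ σ : Perm α, ∑ X ∈ (powersetCard k univ).filter (Inv σ), F (ctX σ X) * G (ctX σ Xᶜ) =
      n.factorial * (avg k F * avg (n - k) G) := by
  simp_rw [Finset.sum_filter]
  rw [Finset.sum_comm]
  have : ∀ X ∈ powersetCard k (univ : Finset α),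
      (∑ σ : Perm α, if Inv σ X then F (ctX σ X) * G (ctX σ Xᶜ) else 0) =
      (k.factorial * avg k F) * ((n - k).factorial * avg (n - k) G) := by
    intro X hX
    rw [← Finset.sum_filter]
    exact sum_inv X F G hn (mem_powersetCard.1 hX).2
  rw [Finset.sum_congr rfl this, Finset.sum_const, card_powersetCard, Finset.card_univ, hn, nsmul_eq_mul]
  have := Nat.choose_mul_factorial_mul_factorial hk
  rw [← this]; push_cast; ring

noncomputable def fc (k : ℕ) : ℝ := by
  classical exact avg k (fun m => if m = {k} then 1 else 0)

lemma sum_cyc (G : ℕ → Multiset ℕ → ℝ) {n : ℕ} (hn : Fintype.card α = n) :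
    ∑ σ : Perm α, ∑ X ∈ cyc σ, G X.card (ctX σ Xᶜ) =
      n.factorial * ∑ k ∈ Icc 1 n, fc k * avg (n - k) (G k) := by
  classical
  have h1 : ∀ σ : Perm α, ∑ X ∈ cyc σ, G X.card (ctX σ Xᶜ) =
      ∑ k ∈ Icc 1 n, ∑ X ∈ (powersetCard k univ).filter (Inv σ),
        (if ctX σ X = {k} then 1 else 0) * G k (ctX σ Xᶜ) := by
    intro σ
    have : ∀ k ∈ Icc 1 n, ∑ X ∈ (powersetCard k univ).filter (Inv σ),
        (if ctX σ X = {k} then 1 else 0) * G k (ctX σ Xᶜ) =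
        ∑ X ∈ (cyc σ).filter (fun X => X.card = k), G X.card (ctX σ Xᶜ) := by
      intro k hk
      simp_rw [ite_mul, one_mul, zero_mul]
      rw [← Finset.sum_filter]
      apply Finset.sum_congr
      · ext X
        simp only [mem_filter, mem_powersetCard, subset_univ, true_and, mem_cyc_iff]
        constructor
        · rintro ⟨⟨h1, h2⟩, h3⟩
          refine ⟨⟨?_, h2, by rw [h1, h3]⟩, h1⟩
          rw [← Finset.card_pos]; have := (mem_Icc.1 hk).1; omega
        · rintro ⟨⟨h1, h2, h3⟩, h4⟩
          exact ⟨⟨h4, h2⟩, h4 ▸ h3⟩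
      · intro X hX
        rw [(mem_filter.1 hX).2]
    rw [Finset.sum_congr rfl this]
    symm
    apply Finset.sum_fiberwise_of_maps_to
    intro X hX
    rw [mem_Icc]
    exact ⟨Finset.card_pos.2 (cyc_nonempty hX), hn ▸ Finset.card_le_univ X⟩
  simp_rw [h1]
  rw [Finset.sum_comm, Finset.mul_sum]
  apply Finset.sum_congr rfl
  intro k hk
  rw [sum_sum_inv (fun m => if m = {k} then 1 else 0) (G k) hn (mem_Icc.1 hk).2, fc]

lemma avg_const (n : ℕ) (c : ℝ) : avg n (fun _ => c) = c := by
  rw [avg, Finset.sum_const, Finset.card_univ, Fintype.card_perm, Fintype.card_fin, nsmul_eq_mul]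
  field_simp

lemma fc_eq (k : ℕ) (hk : 1 ≤ k) : fc k = 1 / k := by
  have h : ∀ n : ℕ, (n : ℝ) = ∑ k ∈ Icc 1 n, fc k * k := by
    intro n
    have := sum_cyc (α := Fin n) (fun k _ => (k : ℝ)) (Fintype.card_fin n)
    simp only [avg_const] at this
    have h2 : ∀ σ : Perm (Fin n), ∑ X ∈ cyc σ, (X.card : ℝ) = n := by
      intro σ
      rw [← Nat.cast_sum, sum_card_cyc, Fintype.card_fin]
    simp only [h2] at this
    rw [Finset.sum_const, Finset.card_univ, Fintype.card_perm, Fintype.card_fin, nsmul_eq_mul] at this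
    have h0 : (n.factorial : ℝ) ≠ 0 := by positivity
    exact mul_left_cancel₀ h0 this
  obtain ⟨m, rfl⟩ : ∃ m, k = m + 1 := ⟨k - 1, by omega⟩
  have h1 := h (m + 1)
  rw [Finset.sum_Icc_succ_top (by omega), ← h m] at h1
  have : ((m + 1 : ℕ) : ℝ) ≠ 0 := by positivity
  field_simp
  push_cast at *
  linarith

lemma sum_cyc' (G : ℕ → Multiset ℕ → ℝ) {n : ℕ} (hn : Fintype.card α = n) :
    ∑ σ : Perm α, ∑ X ∈ cyc σ, G X.card (ctX σ Xᶜ) =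
      n.factorial * ∑ k ∈ Icc 1 n, (1 / (k : ℝ)) * avg (n - k) (G k) := by
  rw [sum_cyc G hn]
  congr 1
  exact Finset.sum_congr rfl fun k hk => by rw [fc_eq k (mem_Icc.1 hk).1]

end avg

noncomputable def E (w : ℕ → ℝ) (n : ℕ) : ℝ := avg n (fun m => (m.map w).prod)

lemma ct_eq_cons {α : Type*} [Fintype α] [DecidableEq α] {σ : Perm α} {X : Finset α} (hX : X ∈ cyc σ) :
    ct σ = {X.card} + ctX σ Xᶜ := by
  rw [ct_split (cyc_inv hX), (mem_cyc_iff.1 hX).2.2]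

lemma E_rec (w : ℕ → ℝ) (n : ℕ) : n * E w n = ∑ l ∈ Icc 1 n, w l * E w (n - l) := by
  have := sum_cyc' (α := Fin n) (fun k m => (k : ℝ) * (w k * (m.map w).prod)) (Fintype.card_fin n)
  have h2 : ∀ σ : Perm (Fin n), ∑ X ∈ cyc σ, (X.card : ℝ) * (w X.card * ((ctX σ Xᶜ).map w).prod) =
      n * ((ct σ).map w).prod := by
    intro σ
    have : ∀ X ∈ cyc σ, (X.card : ℝ) * (w X.card * ((ctX σ Xᶜ).map w).prod) = X.card * ((ct σ).map w).prod := by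
      intro X hX
      rw [ct_eq_cons hX]; simp
    rw [Finset.sum_congr rfl this, ← Finset.sum_mul, ← Nat.cast_sum, sum_card_cyc, Fintype.card_fin]
  rw [Finset.sum_congr rfl (fun σ _ => h2 σ), ← Finset.mul_sum] at this
  have h0 : (n.factorial : ℝ) ≠ 0 := by positivity
  rw [E, avg, ← mul_div_assoc, this, mul_div_cancel_left₀ _ h0]
  apply Finset.sum_congr rfl
  intro k hk
  have hk0 : (k : ℝ) ≠ 0 := by have := (mem_Icc.1 hk).1; positivity
  simp only [E, avg]
  rw [← Finset.mul_sum, ← Finset.mul_sum]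
  field_simp

lemma avg_sum (g : ℕ → ℝ) (n : ℕ) : avg n (fun m => (m.map g).sum) = ∑ b ∈ Icc 1 n, g b / b := by
  have := sum_cyc' (α := Fin n) (fun k _ => g k) (Fintype.card_fin n)
  simp only [avg_const] at this
  have h0 : (n.factorial : ℝ) ≠ 0 := by positivity
  rw [avg, div_eq_iff h0, mul_comm]
  rw [← Finset.sum_congr rfl (fun (b : ℕ) _ => show 1 / (b : ℝ) * g b = g b / b by ring), ← this]
  apply Finset.sum_congr rfl
  intro σ _
  rw [ct, Multiset.map_map]; rfl

lemma sum_pairs (f : ℕ → ℕ → ℝ) (n : ℕ) :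
    ∑ σ : Perm (Fin n), ∑ X ∈ cyc σ, ((ctX σ Xᶜ).map (f X.card)).sum =
      n.factorial * ∑ a ∈ Icc 1 n, (1 / (a : ℝ)) * ∑ b ∈ Icc 1 (n - a), f a b / b := by
  rw [sum_cyc' (fun k m => (m.map (f k)).sum) (Fintype.card_fin n)]
  simp_rw [avg_sum]

end IG

namespace IG
open Finset Equiv

lemma E_nonneg {w : ℕ → ℝ} (hw : ∀ l, 0 ≤ w l) (n : ℕ) : 0 ≤ E w n := by
  rw [E, avg]
  apply div_nonneg _ (by positivity)
  apply Finset.sum_nonneg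
  intro σ _
  apply Multiset.prod_nonneg
  intro a ha
  obtain ⟨b, _, rfl⟩ := Multiset.mem_map.1 ha
  exact hw b

lemma E_zero (w : ℕ → ℝ) : E w 0 = 1 := by
  have : ∀ σ : Perm (Fin 0), ct σ = 0 := by
    intro σ; rw [ct]; simp [cyc]
  simp [E, avg, this]

lemma E_sum_le {w : ℕ → ℝ} (hw : ∀ l, 0 ≤ w l) (n : ℕ) :
    ∑ j ∈ range (n + 1), E w j ≤ Real.exp (∑ l ∈ Icc 1 n, w l / l) := by
  set f : ℝ → ℝ := fun x => ∑ j ∈ range (n + 1), E w j * x ^ j with hf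
  set g : ℝ → ℝ := fun x => ∑ l ∈ Icc 1 n, w l / l * x ^ l with hg
  set f' : ℝ → ℝ := fun x => ∑ j ∈ range (n + 1), E w j * (j * x ^ (j - 1)) with hf'
  set g' : ℝ → ℝ := fun x => ∑ l ∈ Icc 1 n, w l / l * (l * x ^ (l - 1)) with hg'
  have hdf : ∀ x, HasDerivAt f (f' x) x := by
    intro x
    apply HasDerivAt.fun_sum
    intro j _
    exact (hasDerivAt_pow j x).const_mul _
  have hdg : ∀ x, HasDerivAt g (g' x) x := by
    intro x
    apply HasDerivAt.fun_sum
    intro j _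
    exact (hasDerivAt_pow j x).const_mul _
  have hle : ∀ x, 0 ≤ x → f' x ≤ g' x * f x := by
    intro x hx
    have h1 : f' x = ∑ l ∈ Icc 1 n, ∑ j ∈ Ico l (n + 1), w l * E w (j - l) * x ^ (j - 1) := by
      have : f' x = ∑ j ∈ range (n + 1), ∑ l ∈ Icc 1 j, w l * E w (j - l) * x ^ (j - 1) := by
        apply Finset.sum_congr rfl
        intro j _
        rw [← Finset.sum_mul, ← E_rec]; ring
      rw [this]
      apply Finset.sum_comm'
      intro a b
      simp only [mem_range, mem_Icc, mem_Ico]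
      omega
    rw [h1, hg', Finset.sum_mul]
    apply Finset.sum_le_sum
    intro l hl
    have hl1 := (mem_Icc.1 hl).1
    have hl0 : (l : ℝ) ≠ 0 := by positivity
    rw [Finset.sum_Ico_eq_sum_range]
    have h2 : w l / l * (l * x ^ (l - 1)) * f x =
        ∑ m ∈ range (n + 1), w l * E w m * (x ^ (l - 1) * x ^ m) := by
      rw [hf, Finset.mul_sum]
      apply Finset.sum_congr rfl
      intro m _
      field_simp
    rw [h2]
    have h3 : ∀ m ∈ range (n + 1 - l), w l * E w (l + m - l) * x ^ (l + m - 1) =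
        w l * E w m * (x ^ (l - 1) * x ^ m) := by
      intro m _
      rw [← pow_add, Nat.add_sub_cancel_left]
      congr 2; omega
    rw [Finset.sum_congr rfl h3]
    apply Finset.sum_le_sum_of_subset_of_nonneg
    · intro m; simp only [mem_range]; omega
    · intro m _ _
      have := hw l
      have := E_nonneg hw m
      positivity
  have hanti : AntitoneOn (fun x => f x * Real.exp (-g x)) (Set.Icc 0 1) := by
    apply antitoneOn_of_hasDerivWithinAt_nonpos (convex_Icc 0 1) (f' := fun x => f' x * Real.exp (-g x) + f x * (Real.exp (-g x) * (-g' x)))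
    · intro x _
      exact ((hdf x).mul ((hdg x).neg.exp)).continuousAt.continuousWithinAt
    · intro x _
      exact ((hdf x).mul ((hdg x).neg.exp)).hasDerivWithinAt
    · intro x hx
      rw [interior_Icc] at hx
      have := hle x hx.1.le
      have h2 : f' x * Real.exp (-g x) + f x * (Real.exp (-g x) * (-g' x)) = (f' x - g' x * f x) * Real.exp (-g x) := by ring
      rw [h2]
      exact mul_nonpos_of_nonpos_of_nonneg (by linarith) (Real.exp_pos _).le
  have := hanti (Set.left_mem_Icc.2 zero_le_one) (Set.right_mem_Icc.2 zero_le_one) zero_le_one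
  have hf0 : f 0 = 1 := by
    rw [hf]; simp only
    rw [Finset.sum_range_succ']
    simp [E_zero]
  have hg0 : g 0 = 0 := by
    rw [hg]; simp only
    apply Finset.sum_eq_zero
    intro l hl
    have := (mem_Icc.1 hl).1
    rw [zero_pow (by omega), mul_zero]
  simp only [hf0, hg0, neg_zero, Real.exp_zero, mul_one] at this
  have hf1 : f 1 = ∑ j ∈ range (n + 1), E w j := by simp [hf]
  have hg1 : g 1 = ∑ l ∈ Icc 1 n, w l / l := by simp [hg]
  rw [hf1, hg1, Real.exp_neg, ← div_eq_mul_inv, div_le_one (Real.exp_pos _)] at this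
  exact this

lemma E_le {w : ℕ → ℝ} (hw : ∀ l, 0 ≤ w l) {B : ℝ} (hB : ∀ l, w l ≤ B) {n : ℕ} (hn : 1 ≤ n) :
    E w n ≤ B / n * Real.exp (∑ l ∈ Icc 1 n, w l / l) := by
  have hn0 : (0 : ℝ) < n := by positivity
  have hB0 : 0 ≤ B := (hw 0).trans (hB 0)
  have h := E_rec w n
  have h1 : ∑ l ∈ Icc 1 n, w l * E w (n - l) ≤ B * ∑ j ∈ range (n + 1), E w j := by
    rw [Finset.mul_sum, ← Finset.sum_range_reflect]
    have : ∀ l ∈ Icc 1 n, w l * E w (n - l) ≤ B * E w (n + 1 - 1 - l) := by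
      intro l _
      simp only [Nat.add_sub_cancel]
      exact mul_le_mul_of_nonneg_right (hB l) (E_nonneg hw _)
    apply (Finset.sum_le_sum this).trans
    apply Finset.sum_le_sum_of_subset_of_nonneg
    · intro m; simp only [mem_range, mem_Icc]; omega
    · intro m _ _
      exact mul_nonneg hB0 (E_nonneg hw _)
  rw [← h] at h1
  have h2 := E_sum_le hw n
  rw [div_mul_eq_mul_div, le_div_iff₀ hn0, mul_comm]
  exact h1.trans (mul_le_mul_of_nonneg_left h2 hB0)

lemma harm_le (n : ℕ) : ∑ l ∈ Icc 1 n, (1 : ℝ) / l ≤ 1 + Real.log n := by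
  have := harmonic_le_one_add_log n
  rw [harmonic_eq_sum_Icc] at this
  push_cast at this
  simpa [one_div] using this

lemma le_harm (n : ℕ) : Real.log (n + 1) ≤ ∑ l ∈ Icc 1 n, (1 : ℝ) / l := by
  have := log_add_one_le_harmonic n
  rw [harmonic_eq_sum_Icc] at this
  push_cast at this
  simpa [one_div] using this

/-- constant weights -/
lemma E_const_le {t : ℝ} (ht : 0 ≤ t) {n : ℕ} (hn : 1 ≤ n) :
    E (fun _ => t) n ≤ t * Real.exp t * (n : ℝ) ^ (t - 1) := by
  have hn0 : (0 : ℝ) < n := by positivity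
  apply (E_le (w := fun _ => t) (fun _ => ht) (fun _ => le_rfl) hn).trans
  have h1 : ∑ l ∈ Icc 1 n, t / (l : ℝ) ≤ t * (1 + Real.log n) := by
    have := mul_le_mul_of_nonneg_left (harm_le n) ht
    rw [Finset.mul_sum] at this
    simpa [div_eq_mul_inv] using this
  have h2 : Real.exp (t * (1 + Real.log n)) = Real.exp t * (n : ℝ) ^ t := by
    rw [mul_add, mul_one, Real.exp_add, Real.rpow_def_of_pos hn0, mul_comm t (Real.log n)]
  calc t / n * Real.exp (∑ l ∈ Icc 1 n, t / (l : ℝ)) ≤ t / n * (Real.exp t * (n : ℝ) ^ t) := by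
        rw [← h2]; gcongr
    _ = _ := by rw [Real.rpow_sub hn0, Real.rpow_one]; ring

open Classical in
lemma E_avoid (A : Set ℕ) {n : ℕ} (hn : 1 ≤ n) :
    E (fun l => if l ∈ A then 0 else 1) n ≤
      Real.exp 1 * Real.exp (- ∑ l ∈ (Icc 1 n).filter (· ∈ A), (1 : ℝ) / l) := by
  have hn0 : (0 : ℝ) < n := by positivity
  apply (E_le (w := fun l => if l ∈ A then 0 else 1) (B := 1) (fun l => by positivity) (fun l => by split_ifs <;> norm_num) hn).trans
  have h1 : ∑ l ∈ Icc 1 n, (if l ∈ A then (0 : ℝ) else 1) / l =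
      ∑ l ∈ Icc 1 n, (1 : ℝ) / l - ∑ l ∈ (Icc 1 n).filter (· ∈ A), (1 : ℝ) / l := by
    rw [Finset.sum_filter, ← Finset.sum_sub_distrib]
    apply Finset.sum_congr rfl
    intro l _
    split_ifs <;> simp
  rw [h1]
  have h2 := harm_le n
  calc 1 / (n : ℝ) * Real.exp (∑ l ∈ Icc 1 n, (1 : ℝ) / l - ∑ l ∈ (Icc 1 n).filter (· ∈ A), (1 : ℝ) / l)
      ≤ 1 / (n : ℝ) * Real.exp ((1 + Real.log n) + - ∑ l ∈ (Icc 1 n).filter (· ∈ A), (1 : ℝ) / l) := by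
        gcongr; linarith
    _ = _ := by
        rw [Real.exp_add, Real.exp_add, Real.exp_log hn0]; field_simp

/-- all cycle lengths divisible by `d` -/
lemma E_dvd {d : ℕ} (hd : 1 ≤ d) {n : ℕ} (hn : 1 ≤ n) :
    E (fun l => if d ∣ l then 1 else 0) n ≤ 1 / n * Real.exp ((1 + Real.log n) / d) := by
  have hn0 : (0 : ℝ) < n := by positivity
  have hd0 : (0 : ℝ) < d := by positivity
  apply (E_le (w := fun l => if d ∣ l then 1 else 0) (B := 1) (fun l => by positivity) (fun l => by split_ifs <;> norm_num) hn).trans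
  gcongr
  have h1 : ∑ l ∈ Icc 1 n, (if d ∣ l then (1 : ℝ) else 0) / l ≤ (∑ j ∈ Icc 1 n, (1 : ℝ) / j) / d := by
    rw [Finset.sum_div]
    simp_rw [ite_div, zero_div]
    rw [← Finset.sum_filter]
    have hsub : (Icc 1 n).filter (d ∣ ·) ⊆ (Icc 1 n).image (fun j => d * j) := by
      intro l hl
      simp only [mem_filter, mem_Icc, mem_image] at hl ⊢
      obtain ⟨⟨h1, h2⟩, j, rfl⟩ := hl
      exact ⟨j, ⟨Nat.pos_of_ne_zero (by rintro rfl; simp at h1), (Nat.le_mul_of_pos_left j hd).trans h2⟩, rfl⟩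
    apply (Finset.sum_le_sum_of_subset_of_nonneg hsub (fun _ _ _ => by positivity)).trans
    rw [Finset.sum_image (fun a _ b _ h => Nat.eq_of_mul_eq_mul_left hd h)]
    apply Finset.sum_le_sum
    intro j _
    push_cast
    rw [div_div, mul_comm]
  apply h1.trans
  gcongr
  exact harm_le n

end IG

namespace IG
open Finset Equiv

lemma card_le_of_markov {β : Type*} [Fintype β] (P : β → Prop) [DecidablePred P] (Φ : β → ℝ)
    (h0 : ∀ b, 0 ≤ Φ b) (h1 : ∀ b, P b → 1 ≤ Φ b) :
    ((univ.filter P).card : ℝ) ≤ ∑ b, Φ b := by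
  rw [Finset.card_eq_sum_ones]
  push_cast
  calc ∑ b ∈ univ.filter P, (1 : ℝ) ≤ ∑ b ∈ univ.filter P, Φ b :=
        Finset.sum_le_sum fun b hb => h1 b (mem_filter.1 hb).2
    _ ≤ _ := Finset.sum_le_sum_of_subset_of_nonneg (filter_subset _ _) fun b _ _ => h0 b

lemma sum_E (w : ℕ → ℝ) (n : ℕ) :
    ∑ σ : Perm (Fin n), ((ct σ).map w).prod = n.factorial * E w n :=
  sum_ct (fun m => (m.map w).prod) (Fintype.card_fin n)

lemma prod_ctX {α : Type*} [Fintype α] [DecidableEq α] (w : ℕ → ℝ) (σ : Perm α) (X : Finset α) :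
    ((ctX σ X).map w).prod = ∏ Y ∈ (cyc σ).filter (· ⊆ X), w Y.card := by
  rw [ctX, Multiset.map_map]; rfl

lemma prod_ct {α : Type*} [Fintype α] [DecidableEq α] (w : ℕ → ℝ) (σ : Perm α) :
    ((ct σ).map w).prod = ∏ Y ∈ cyc σ, w Y.card := by
  rw [ct, Multiset.map_map]; rfl

lemma prod_ct_nonneg {w : ℕ → ℝ} (hw : ∀ l, 0 ≤ w l) (m : Multiset ℕ) : 0 ≤ (m.map w).prod := by
  apply Multiset.prod_nonneg
  intro a ha
  obtain ⟨b, _, rfl⟩ := Multiset.mem_map.1 ha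
  exact hw b

lemma card_ct {α : Type*} [Fintype α] [DecidableEq α] (σ : Perm α) : (ct σ).card = (cyc σ).card := by
  rw [ct, Multiset.card_map]; rfl

open Classical in
lemma bd_B0 {t c : ℝ} (ht : 1 ≤ t) {n : ℕ} (hn : 1 ≤ n) :
    ((univ.filter (fun σ : Perm (Fin n) => c ≤ (cyc σ).card)).card : ℝ) ≤
      n.factorial * (t * Real.exp t * (n : ℝ) ^ (t - 1) * t ^ (-c)) := by
  have ht0 : 0 < t := by linarith
  apply (card_le_of_markov _ (fun σ => ((ct σ).map (fun _ => t)).prod * t ^ (-c)) ?_ ?_).trans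
  · rw [← Finset.sum_mul, sum_E, mul_assoc]
    gcongr
    exact E_const_le ht0.le hn
  · intro σ
    have := prod_ct_nonneg (w := fun _ => t) (fun _ => ht0.le) (ct σ)
    positivity
  · intro σ hσ
    rw [prod_ct, Finset.prod_const, ← Real.rpow_natCast, ← Real.rpow_add ht0]
    apply Real.one_le_rpow ht
    linarith

open Classical in
lemma bd_B1 {u c : ℝ} (hu : 0 < u) (hu1 : u ≤ 1) {n k : ℕ} (hk : 1 ≤ k) (hkn : k < n) :
    ((univ.filter (fun σ : Perm (Fin n) => (cyc σ).card ≤ c ∧ ∃ X : Finset (Fin n), X.card = k ∧ Inv σ X)).card : ℝ) ≤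
      n.factorial * ((u * Real.exp u * (k : ℝ) ^ (u - 1)) * (u * Real.exp u * ((n - k : ℕ) : ℝ) ^ (u - 1)) * u ^ (-c)) := by
  apply (card_le_of_markov _ (fun σ => (∑ X ∈ (powersetCard k univ).filter (Inv σ),
    ((ctX σ X).map (fun _ => u)).prod * ((ctX σ Xᶜ).map (fun _ => u)).prod) * u ^ (-c)) ?_ ?_).trans
  · rw [← Finset.sum_mul, sum_sum_inv (fun m => (m.map fun _ => u).prod) (fun m => (m.map fun _ => u).prod)
      (Fintype.card_fin n) hkn.le, mul_assoc]
    gcongr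
    · exact E_nonneg (w := fun _ => u) (fun _ => hu.le) _
    · exact E_const_le hu.le hk
    · exact E_const_le hu.le (by omega)
  · intro σ
    apply mul_nonneg _ (by positivity)
    apply Finset.sum_nonneg
    intro X _
    exact mul_nonneg (prod_ct_nonneg (fun _ => hu.le) _) (prod_ct_nonneg (fun _ => hu.le) _)
  · rintro σ ⟨hc, X, hX, hI⟩
    have h1 : u ^ ((cyc σ).card : ℝ) ≤ ∑ X ∈ (powersetCard k univ).filter (Inv σ),
        ((ctX σ X).map (fun _ => u)).prod * ((ctX σ Xᶜ).map (fun _ => u)).prod := by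
      have : u ^ ((cyc σ).card : ℝ) = ((ctX σ X).map (fun _ => u)).prod * ((ctX σ Xᶜ).map (fun _ => u)).prod := by
        rw [← Multiset.prod_add, ← Multiset.map_add, ← ct_split hI, prod_ct, Finset.prod_const, Real.rpow_natCast]
      rw [this]
      apply Finset.single_le_sum (f := fun X => ((ctX σ X).map (fun _ => u)).prod * ((ctX σ Xᶜ).map (fun _ => u)).prod)
      · intro X _
        exact mul_nonneg (prod_ct_nonneg (fun _ => hu.le) _) (prod_ct_nonneg (fun _ => hu.le) _)
      · simp [hX, hI]
    calc (1 : ℝ) ≤ u ^ ((cyc σ).card : ℝ) * u ^ (-c) := by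
          rw [← Real.rpow_add hu]
          exact Real.one_le_rpow_of_pos_of_le_one_of_nonpos hu hu1 (by linarith)
      _ ≤ _ := by gcongr

open Classical in
lemma bd_avoid (A : Set ℕ) {n : ℕ} (hn : 1 ≤ n) :
    ((univ.filter (fun σ : Perm (Fin n) => ∀ X ∈ cyc σ, X.card ∉ A)).card : ℝ) ≤
      n.factorial * (Real.exp 1 * Real.exp (- ∑ l ∈ (Icc 1 n).filter (· ∈ A), (1 : ℝ) / l)) := by
  apply (card_le_of_markov _ (fun σ => ((ct σ).map (fun l => if l ∈ A then (0:ℝ) else 1)).prod) ?_ ?_).trans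
  · rw [sum_E]
    gcongr
    exact E_avoid A hn
  · intro σ
    exact prod_ct_nonneg (fun l => by positivity) _
  · intro σ hσ
    rw [prod_ct, Finset.prod_eq_one]
    intro X hX
    simp [hσ X hX]

open Classical in
lemma bd_B4 {l n k : ℕ} (hl : 1 ≤ l) (hk : 1 ≤ k) (hkn : k ≤ n) :
    ((univ.filter (fun σ : Perm (Fin n) => ∃ X : Finset (Fin n), X.card = k ∧ Inv σ X ∧
        ∀ Y ∈ cyc σ, Y ⊆ X → l ∣ Y.card)).card : ℝ) ≤
      n.factorial * (1 / k * Real.exp ((1 + Real.log k) / l)) := by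
  apply (card_le_of_markov _ (fun σ => (∑ X ∈ (powersetCard k univ).filter (Inv σ),
    ((ctX σ X).map (fun j => if l ∣ j then (1:ℝ) else 0)).prod * 1)) ?_ ?_).trans
  · rw [sum_sum_inv (fun m => (m.map (fun j => if l ∣ j then (1:ℝ) else 0)).prod) (fun m => 1)
      (Fintype.card_fin n) hkn, avg_const, mul_one]
    gcongr
    exact E_dvd hl hk
  · intro σ
    apply Finset.sum_nonneg
    intro X _
    exact mul_nonneg (prod_ct_nonneg (fun _ => by positivity) _) zero_le_one
  · rintro σ ⟨X, hX, hI, hd⟩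
    have : (1 : ℝ) = ((ctX σ X).map (fun j => if l ∣ j then (1:ℝ) else 0)).prod * 1 := by
      rw [prod_ctX, Finset.prod_eq_one, mul_one]
      intro Y hY
      rw [mem_filter] at hY
      simp [hd Y hY.1 hY.2]
    refine this.le.trans ?_
    apply Finset.single_le_sum (f := fun X => ((ctX σ X).map (fun j => if l ∣ j then (1:ℝ) else 0)).prod * 1)
    · intro X _
      exact mul_nonneg (prod_ct_nonneg (fun _ => by positivity) _) zero_le_one
    · simp [hX, hI]

lemma sum_inv_sq (Q n : ℕ) (hQ : 1 ≤ Q) : ∑ q ∈ Icc Q n, (1 : ℝ) / (q : ℝ) ^ 2 ≤ 2 / Q := by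
  have := sum_Ioo_inv_sq_le (α := ℝ) (Q - 1) (n + 1)
  have h2 : Icc Q n = Ioo (Q - 1) (n + 1) := by
    ext a; simp only [mem_Icc, mem_Ioo]; omega
  rw [h2]
  simp only [one_div]
  have h3 : (((Q - 1 : ℕ) : ℝ) + 1) = Q := by
    rw [Nat.cast_sub hQ]; simp
  rw [h3] at this
  exact this

open Classical in
lemma bd_B3 {n Q : ℕ} (hQ : 1 ≤ Q) :
    ((univ.filter (fun σ : Perm (Fin n) => ∃ X ∈ cyc σ, ∃ Y ∈ cyc σ, X ≠ Y ∧ ∃ q, Q ≤ q ∧ q ∣ X.card ∧ q ∣ Y.card)).card : ℝ) ≤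
      n.factorial * (2 / Q * (1 + Real.log n) ^ 2) := by
  set f : ℕ → ℕ → ℝ := fun a b => if ∃ q, Q ≤ q ∧ q ∣ a ∧ q ∣ b then 1 else 0 with hf
  have hf0 : ∀ a b, 0 ≤ f a b := fun a b => by simp only [hf]; positivity
  have hs0 : ∀ (a : ℕ) (m : Multiset ℕ), 0 ≤ (m.map (f a)).sum := by
    intro a m
    apply Multiset.sum_nonneg
    intro x hx
    obtain ⟨b, _, rfl⟩ := Multiset.mem_map.1 hx
    exact hf0 _ _
  apply (card_le_of_markov _ (fun σ => ∑ X ∈ cyc σ, ((ctX σ Xᶜ).map (f X.card)).sum) ?_ ?_).trans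
  · rw [sum_pairs]
    gcongr
    have h1 : ∀ a ∈ Icc 1 n, 1 / (a : ℝ) * ∑ b ∈ Icc 1 (n - a), f a b / b ≤
        ∑ b ∈ Icc 1 n, ∑ q ∈ Icc Q n, (if q ∣ a then 1 / (a : ℝ) else 0) * (if q ∣ b then 1 / (b : ℝ) else 0) := by
      intro a ha
      rw [Finset.mul_sum]
      apply (Finset.sum_le_sum_of_subset_of_nonneg (t := Icc 1 n) (by intro b; simp only [mem_Icc]; omega) ?_).trans
      · apply Finset.sum_le_sum
        intro b hb
        simp only [hf]
        split_ifs with h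
        · obtain ⟨q, hq1, hq2, hq3⟩ := h
          have hqm : q ∈ Icc Q n := mem_Icc.2 ⟨hq1, (Nat.le_of_dvd (mem_Icc.1 ha).1 hq2).trans (mem_Icc.1 ha).2⟩
          calc _ = (if q ∣ a then 1 / (a : ℝ) else 0) * (if q ∣ b then 1 / (b : ℝ) else 0) := by
                simp [hq2, hq3]
            _ ≤ _ := Finset.single_le_sum (f := fun q => (if q ∣ a then 1 / (a : ℝ) else 0) * (if q ∣ b then 1 / (b : ℝ) else 0))
                (fun q _ => by positivity) hqm
        · simp only [zero_div, mul_zero]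
          exact Finset.sum_nonneg fun q _ => by positivity
      · intro b _ _
        have := hf0 a b
        positivity
    apply (Finset.sum_le_sum h1).trans
    have h2 : ∑ a ∈ Icc 1 n, ∑ b ∈ Icc 1 n, ∑ q ∈ Icc Q n,
        (if q ∣ a then 1 / (a : ℝ) else 0) * (if q ∣ b then 1 / (b : ℝ) else 0) =
        ∑ q ∈ Icc Q n, (∑ a ∈ Icc 1 n, if q ∣ a then 1 / (a : ℝ) else 0) ^ 2 := by
      simp_rw [Finset.sum_comm (s := Icc 1 n) (t := Icc Q n)]
      apply Finset.sum_congr rfl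
      intro q _
      rw [sq, Finset.sum_mul_sum]
    rw [h2]
    have h3 : ∀ q ∈ Icc Q n, (∑ a ∈ Icc 1 n, if q ∣ a then 1 / (a : ℝ) else 0) ^ 2 ≤
        1 / (q : ℝ) ^ 2 * (1 + Real.log n) ^ 2 := by
      intro q hq
      have hq1 : 1 ≤ q := hQ.trans (mem_Icc.1 hq).1
      have hq0 : (0 : ℝ) < q := by positivity
      have : (∑ a ∈ Icc 1 n, if q ∣ a then 1 / (a : ℝ) else 0) ≤ 1 / q * (1 + Real.log n) := by
        rw [← Finset.sum_filter]
        have hsub : (Icc 1 n).filter (q ∣ ·) ⊆ (Icc 1 n).image (fun j => q * j) := by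
          intro l hl
          simp only [mem_filter, mem_Icc, mem_image] at hl ⊢
          obtain ⟨⟨h1, h2⟩, j, rfl⟩ := hl
          exact ⟨j, ⟨Nat.pos_of_ne_zero (by rintro rfl; simp at h1), (Nat.le_mul_of_pos_left j hq1).trans h2⟩, rfl⟩
        apply (Finset.sum_le_sum_of_subset_of_nonneg hsub (fun _ _ _ => by positivity)).trans
        rw [Finset.sum_image (fun a _ b _ h => Nat.eq_of_mul_eq_mul_left hq1 h)]
        calc _ = 1 / (q : ℝ) * ∑ j ∈ Icc 1 n, (1 : ℝ) / j := by
              rw [Finset.mul_sum]; apply Finset.sum_congr rfl; intro j _; push_cast; rw [one_div_mul_one_div]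
          _ ≤ _ := by gcongr; exact harm_le n
      calc _ ≤ (1 / q * (1 + Real.log n)) ^ 2 := by
            apply pow_le_pow_left₀ _ this
            exact Finset.sum_nonneg fun _ _ => by positivity
        _ = _ := by ring
    apply (Finset.sum_le_sum h3).trans
    rw [← Finset.sum_mul]
    gcongr
    exact sum_inv_sq Q n hQ
  · intro σ
    exact Finset.sum_nonneg fun X _ => hs0 _ _
  · rintro σ ⟨X, hX, Y, hY, hne, hq⟩
    calc (1 : ℝ) ≤ ((ctX σ Xᶜ).map (f X.card)).sum := by
          have hYX : Y ∈ (cyc σ).filter (· ⊆ Xᶜ) := by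
            rw [mem_filter]
            refine ⟨hY, ?_⟩
            have := cyc_disjoint hY hX hne.symm
            exact Finset.subset_compl_iff_disjoint_right.2 this
          rw [ctX, Multiset.map_map]
          calc (1 : ℝ) = f X.card Y.card := by simp [hf, hq]
            _ ≤ ∑ Y ∈ (cyc σ).filter (· ⊆ Xᶜ), f X.card Y.card :=
              Finset.single_le_sum (f := fun Y => f X.card Y.card) (fun _ _ => hf0 _ _) hYX
            _ = _ := rfl
      _ ≤ _ := Finset.single_le_sum (f := fun X => ((ctX σ Xᶜ).map (f X.card)).sum) (fun _ _ => hs0 _ _) hX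

end IG

namespace IG
open Finset Equiv

lemma pai {α : Type*} (g : Perm α) (x : α) : g (g⁻¹ x) = x := g.apply_symm_apply x
lemma pia {α : Type*} (g : Perm α) (x : α) : g⁻¹ (g x) = x := g.symm_apply_apply x

section prim
variable {α : Type*} [Fintype α] [DecidableEq α] {G : Subgroup (Perm α)}

lemma conn (hG : MulAction.IsPreprimitive G α) {R : α → α → Prop} (hs : ∀ x y, R x y → R y x)
    (hi : ∀ h ∈ G, ∀ x y, R x y → R (h x) (h y)) {a b : α} (hab : a ≠ b) (hR : R a b)
    (O : α → Prop) {u v : α} (hu : O u) (hv : ¬ O v) : ∃ x y, O x ∧ ¬ O y ∧ R x y := by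
  by_contra hcon
  push Not at hcon
  have hs' : ∀ x y, Relation.ReflTransGen R x y → Relation.ReflTransGen R y x :=
    fun x y h => by
      induction h with
      | refl => exact Relation.ReflTransGen.refl
      | tail _ h2 ih => exact Relation.ReflTransGen.head (hs _ _ h2) ih
  have hi' : ∀ h ∈ G, ∀ x y, Relation.ReflTransGen R x y → Relation.ReflTransGen R (h x) (h y) := by
    intro h hh x y hxy
    induction hxy with
    | refl => exact Relation.ReflTransGen.refl
    | tail _ h2 ih => exact Relation.ReflTransGen.tail ih (hi h hh _ _ h2)
  have hO : ∀ x y, Relation.ReflTransGen R x y → O x → O y := by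
    intro x y hxy hx
    induction hxy with
    | refl => exact hx
    | tail _ h2 ih =>
      by_contra hc
      exact hcon _ _ ih hc h2
  set B : Set α := {y | Relation.ReflTransGen R a y} with hB
  have hblock : MulAction.IsBlock G B := by
    rw [MulAction.isBlock_iff_smul_eq_of_mem]
    intro g x hx hgx
    have key : ∀ (g : G) (x : α), x ∈ B → g • x ∈ B → ∀ y ∈ B, g • y ∈ B := by
      intro g x hx hgx y hy
      exact (hgx : Relation.ReflTransGen R a (g • x)).trans
        (hi' g g.2 _ _ ((hs' _ _ hx).trans hy))
    ext y
    rw [Set.mem_smul_set_iff_inv_smul_mem]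
    constructor
    · intro hy
      have := key g x hx hgx _ hy
      simpa using this
    · intro hy
      exact key g⁻¹ (g • x) hgx (by simpa using hx) y hy
  rcases hG.isTrivialBlock_of_isBlock hblock with h | h
  · exact hab (h (Relation.ReflTransGen.refl : Relation.ReflTransGen R a a)
      (Relation.ReflTransGen.single hR))
  · have h1 : u ∈ B := h ▸ Set.mem_univ u
    have h2 : v ∈ B := h ▸ Set.mem_univ v
    exact hv (hO _ _ ((hs' _ _ h1).trans h2) hu)

open Classical in
noncomputable def D (G : Subgroup (Perm α)) (x y : α) : Finset α :=
  univ.filter (fun z => ¬ ∃ h ∈ G, h z = z ∧ h x = y)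

lemma mem_D {x y z : α} : z ∈ D G x y ↔ ¬ ∃ h ∈ G, h z = z ∧ h x = y := by simp [D]

lemma D_symm (x y : α) : D G x y = D G y x := by
  have key : ∀ x y, D G x y ⊆ D G y x := by
    intro x y z
    rw [mem_D, mem_D]
    rintro h1 ⟨h, hh, hz, hx⟩
    exact h1 ⟨h⁻¹, G.inv_mem hh, by rw [Perm.inv_eq_iff_eq, hz], by rw [Perm.inv_eq_iff_eq, hx]⟩
  exact (key x y).antisymm (key y x)

lemma D_tri (x y w : α) : D G x w ⊆ D G x y ∪ D G y w := by
  intro z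
  rw [mem_union, mem_D, mem_D, mem_D]
  intro h
  by_contra hc
  push Not at hc
  obtain ⟨⟨h1, hh1, hz1, hx1⟩, ⟨h2, hh2, hz2, hx2⟩⟩ := hc
  exact h ⟨h2 * h1, G.mul_mem hh2 hh1, by simp [hz1, hz2], by simp [hx1, hx2]⟩

lemma D_self (x : α) : D G x x = ∅ := by
  ext z
  simp only [mem_D, notMem_empty, iff_false, not_not]
  exact ⟨1, G.one_mem, rfl, rfl⟩

lemma D_sub (g : Perm α) (hg : g ∈ G) (x : α) : D G x (g x) ⊆ g.support := by
  intro z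
  rw [mem_D, Perm.mem_support]
  intro h hz
  exact h ⟨g, hg, hz, rfl⟩

lemma D_equiv {h : Perm α} (hh : h ∈ G) (x y : α) : D G (h x) (h y) = (D G x y).map h.toEmbedding := by
  ext z
  rw [mem_map_equiv, mem_D, mem_D, not_iff_not]
  constructor
  · rintro ⟨k, hk, h1, h2⟩
    refine ⟨h⁻¹ * k * h, G.mul_mem (G.mul_mem (G.inv_mem hh) hk) hh, ?_, ?_⟩
    · simp only [Perm.mul_apply]
      rw [show h (h.symm z) = z by simp, h1]; rfl
    · simp [Perm.mul_apply, h2]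
  · rintro ⟨k, hk, h1, h2⟩
    refine ⟨h * k * h⁻¹, G.mul_mem (G.mul_mem hh hk) (G.inv_mem hh), ?_, ?_⟩
    · simp only [Perm.mul_apply]
      rw [show h⁻¹ z = h.symm z from rfl, h1]; simp
    · simp [Perm.mul_apply, h2]

open Classical in
noncomputable def Nb (R : α → α → Prop) (x : α) : Finset α := univ.filter (R x)

lemma mem_Nb {R : α → α → Prop} {x y : α} : y ∈ Nb R x ↔ R x y := by simp [Nb]

lemma Nb_sub {R : α → α → Prop} (hi : ∀ h ∈ G, ∀ x y, R x y → R (h x) (h y)) (x w : α) :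
    Nb R x \ Nb R w ⊆ D G x w := by
  intro u
  rw [mem_sdiff, mem_Nb, mem_Nb, mem_D]
  rintro ⟨h1, h2⟩ ⟨h, hh, hu, hx⟩
  have := hi h hh _ _ h1
  rw [hu, hx] at this
  exact h2 this

lemma Nb_card (hG : MulAction.IsPretransitive G α) {R : α → α → Prop}
    (hi : ∀ h ∈ G, ∀ x y, R x y → R (h x) (h y)) (x y : α) :
    (Nb R x).card = (Nb R y).card := by
  have key : ∀ x y : α, (Nb R x).card ≤ (Nb R y).card := by
    intro x y
    obtain ⟨h, hh⟩ := hG.exists_smul_eq x y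
    apply Finset.card_le_card_of_injOn h.1
    · intro u hu
      have hu := mem_Nb.1 hu
      have := hi h.1 h.2 _ _ hu
      rw [show (h.1 x) = y from hh] at this
      exact mem_Nb.2 this
    · exact h.1.injective.injOn
  exact (key x y).antisymm (key y x)

lemma cover (hG : MulAction.IsPreprimitive G α) {R : α → α → Prop} (hs : ∀ x y, R x y → R y x)
    (hi : ∀ h ∈ G, ∀ x y, R x y → R (h x) (h y)) {a b : α} (hab : a ≠ b) (hR : R a b)
    {d : ℕ} (hd : ∀ x y, R x y → (D G x y).card ≤ d) (x : α) :
    Fintype.card α ≤ (Nb R x).card * d := by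
  have : (univ : Finset α) ⊆ (Nb R x).biUnion (fun y => D G x y) := by
    intro z _
    rw [mem_biUnion]
    set O : α → Prop := fun w => ∃ h ∈ G, h z = z ∧ h x = w with hO
    have hv : ∃ v, ¬ O v := by
      by_contra hc
      push Not at hc
      have h1 : x = z := by
        obtain ⟨h, hh, h1, h2⟩ := hc z
        exact h.injective (h2.trans h1.symm)
      obtain ⟨h, hh, h2, h3⟩ := hc a
      obtain ⟨h', hh', h2', h3'⟩ := hc b
      rw [h1, h2] at h3
      rw [h1, h2'] at h3'
      exact hab (h3.symm.trans h3')
    obtain ⟨v, hv⟩ := hv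
    obtain ⟨p, q, ⟨h, hh, h1, h2⟩, hq, hpq⟩ := conn hG hs hi hab hR O
      (u := x) ⟨1, G.one_mem, rfl, rfl⟩ hv
    refine ⟨h⁻¹ q, ?_, ?_⟩
    · rw [mem_Nb]
      have := hi h⁻¹ (G.inv_mem hh) _ _ hpq
      rwa [← h2, pia] at this
    · rw [mem_D]
      rintro ⟨k, hk, k1, k2⟩
      exact hq ⟨h * k, G.mul_mem hh hk, by simp [k1, h1], by simp [k2]⟩
  calc Fintype.card α = (univ : Finset α).card := rfl
    _ ≤ _ := card_le_card this
    _ ≤ _ := card_biUnion_le_card_mul _ _ _ (fun y hy => hd _ _ (mem_Nb.1 hy))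

/-- not doubly transitive, and all the sets `D` small -/
lemma small_orbit (hG : MulAction.IsPreprimitive G α) {M : ℕ} (hM : ∀ x y, (D G x y).card ≤ M)
    {z p q : α} (hp : p ≠ z) (hq : q ≠ z) (hpq : z ∈ D G p q) :
    Fintype.card α ≤ 4 * M ^ 2 := by
  classical
  set n := Fintype.card α
  -- choose an orbital of small valency
  have hw : ∃ w, w ≠ z ∧ 2 * (univ.filter (fun u => ∃ h ∈ G, h z = z ∧ h w = u)).card ≤ n := by
    have hdis : Disjoint (univ.filter (fun u => ∃ h ∈ G, h z = z ∧ h p = u))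
        (univ.filter (fun u => ∃ h ∈ G, h z = z ∧ h q = u)) := by
      rw [Finset.disjoint_left]
      intro u hu hv
      rw [mem_filter] at hu hv
      obtain ⟨-, h, hh, h1, h2⟩ := hu
      obtain ⟨-, k, hk, k1, k2⟩ := hv
      rw [mem_D] at hpq
      exact hpq ⟨k⁻¹ * h, G.mul_mem (G.inv_mem hk) hh, by
        rw [Perm.mul_apply, h1, Perm.inv_eq_iff_eq, k1], by
        rw [Perm.mul_apply, h2, Perm.inv_eq_iff_eq, k2]⟩
    have := card_union_of_disjoint hdis
    have h2 : (univ.filter (fun u => ∃ h ∈ G, h z = z ∧ h p = u) ∪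
        univ.filter (fun u => ∃ h ∈ G, h z = z ∧ h q = u)).card ≤ n := card_le_univ _
    by_contra hc
    push Not at hc
    have h3 := hc p hp
    have h4 := hc q hq
    omega
  obtain ⟨w, hwz, hw⟩ := hw
  set R : α → α → Prop := fun x y => ∃ h ∈ G, h z = x ∧ h w = y with hR
  have hi : ∀ h ∈ G, ∀ x y, R x y → R (h x) (h y) := by
    rintro h hh x y ⟨k, hk, rfl, rfl⟩
    exact ⟨h * k, G.mul_mem hh hk, rfl, rfl⟩
  set κ := (Nb R z).card with hκ
  have hκ2 : 2 * κ ≤ n := by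
    convert hw using 3
    ext u; simp [mem_Nb, hR]
  have hout : ∀ x, (Nb R x).card = κ := fun x => Nb_card hG.toIsPretransitive hi x z
  set R' : α → α → Prop := fun x y => R y x with hR'
  have hi' : ∀ h ∈ G, ∀ x y, R' x y → R' (h x) (h y) := fun h hh x y => hi h hh y x
  have hin : ∀ x, (Nb R' x).card = κ := by
    intro x
    have h1 := Finset.sum_card_bipartiteAbove_eq_sum_card_bipartiteBelow (s := univ) (t := univ) R
    have h2 : ∑ a : α, ((univ : Finset α).bipartiteAbove R a).card = n * κ := by
      rw [sum_const_nat (m := κ)]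
      · rfl
      · intro u _; rw [← hout u]; congr 1; ext t; simp [mem_Nb, Finset.bipartiteAbove]
    have h3 : ∑ a : α, ((univ : Finset α).bipartiteBelow R a).card = n * (Nb R' x).card := by
      rw [sum_const_nat (m := (Nb R' x).card)]
      · rfl
      · intro u _; rw [Nb_card hG.toIsPretransitive hi' x u]; congr 1; ext t; simp [mem_Nb, Finset.bipartiteBelow, hR']
    have h4 : 0 < n := Fintype.card_pos_iff.2 ⟨z⟩
    exact Nat.eq_of_mul_eq_mul_left h4 (by omega)
  -- average
  have hav : κ * n ≤ κ * κ + n * M := by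
    have h1 : ∀ x, κ ≤ (Nb R z ∩ Nb R x).card + M := by
      intro x
      have h2 := card_le_card (Nb_sub hi z x)
      have h3 := card_sdiff_add_card_inter (Nb R z) (Nb R x)
      have := hM z x
      omega
    have h4 : ∑ x : α, (Nb R z ∩ Nb R x).card = κ * κ := by
      have h1 := Finset.sum_card_bipartiteAbove_eq_sum_card_bipartiteBelow (s := univ) (t := Nb R z) R
      have h2 : ∑ a ∈ Nb R z, ((univ : Finset α).bipartiteBelow R a).card = κ * κ := by
        rw [sum_const_nat (m := κ)]
        intro u _; rw [← hin u]; congr 1; ext t; simp [mem_Nb, Finset.bipartiteBelow, hR']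
      rw [← h2, ← h1]
      apply sum_congr rfl
      intro x _
      congr 1
      ext u; simp [mem_Nb, Finset.bipartiteAbove]
    calc κ * n = ∑ x : α, κ := by simp [n, mul_comm]
      _ ≤ ∑ x : α, ((Nb R z ∩ Nb R x).card + M) := sum_le_sum (fun x _ => h1 x)
      _ = _ := by rw [sum_add_distrib, h4]; simp [n]
  have hkM : κ ≤ 2 * M := by
    have h4 : 0 < n := Fintype.card_pos_iff.2 ⟨z⟩
    have : n * κ ≤ n * (2 * M) := by nlinarith
    exact Nat.le_of_mul_le_mul_left this h4
  -- symmetric closure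
  set S : α → α → Prop := fun x y => R x y ∨ R y x with hS
  have hc := cover hG (R := S) (fun x y h => h.symm)
    (fun h hh x y hxy => hxy.imp (hi h hh x y) (hi h hh y x)) (a := z) (b := w) hwz.symm
    (Or.inl ⟨1, G.one_mem, rfl, rfl⟩) (d := M) (fun x y _ => hM x y) z
  have hSc : (Nb S z).card ≤ 2 * κ := by
    have : Nb S z ⊆ Nb R z ∪ Nb R' z := by
      intro u; simp [mem_Nb, hS, hR']
    have h1 := card_le_card this
    have h2 := card_union_le (Nb R z) (Nb R' z)
    rw [hin z] at h2
    omega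
  calc n ≤ (Nb S z).card * M := hc
    _ ≤ (2 * κ) * M := Nat.mul_le_mul_right _ hSc
    _ ≤ (2 * (2 * M)) * M := by gcongr
    _ = _ := by ring

lemma not_two_trans (hG : MulAction.IsPreprimitive G α) {g : Perm α} (hg : g ∈ G) (hg1 : g ≠ 1)
    {z p q : α} (hp : p ≠ z) (hq : q ≠ z) (hpq : z ∈ D G p q) :
    Fintype.card α ≤ 16 * g.support.card ^ 2 := by
  classical
  set d := g.support.card with hd
  obtain ⟨a, ha⟩ : ∃ a, g a ≠ a := by
    by_contra hc
    push Not at hc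
    exact hg1 (Perm.ext hc)
  set R : α → α → Prop := fun x y => ∃ h ∈ G, (h a = x ∧ h (g a) = y) ∨ (h a = y ∧ h (g a) = x) with hR
  have hi : ∀ h ∈ G, ∀ x y, R x y → R (h x) (h y) := by
    rintro h hh x y ⟨k, hk, (⟨rfl, rfl⟩ | ⟨rfl, rfl⟩)⟩
    · exact ⟨h * k, G.mul_mem hh hk, Or.inl ⟨rfl, rfl⟩⟩
    · exact ⟨h * k, G.mul_mem hh hk, Or.inr ⟨rfl, rfl⟩⟩
  have hs : ∀ x y, R x y → R y x := by
    rintro x y ⟨k, hk, h⟩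
    exact ⟨k, hk, h.symm⟩
  have hRa : R a (g a) := ⟨1, G.one_mem, Or.inl ⟨rfl, rfl⟩⟩
  have hDd : ∀ x y, R x y → (D G x y).card ≤ d := by
    rintro x y ⟨k, hk, (⟨rfl, rfl⟩ | ⟨rfl, rfl⟩)⟩
    · rw [D_equiv hk, card_map]
      exact card_le_card (D_sub g hg a)
    · rw [D_symm, D_equiv hk, card_map]
      exact card_le_card (D_sub g hg a)
  have hcov := cover hG hs hi (Ne.symm ha) hRa hDd z
  set k := (Nb R z).card with hk
  rcases Nat.lt_or_ge (3 * d) k with hkd | hkd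
  · -- all pairs at distance at most two
    have hcard : ∀ x, (Nb R x).card = k := fun x => Nb_card hG.toIsPretransitive hi x z
    have hR2 : ∀ x w, x = w ∨ R x w ∨ ∃ y, R x y ∧ R y w := by
      intro x w
      by_contra hc
      obtain ⟨y, v, hy, hv, hyv⟩ := conn hG hs hi (Ne.symm ha) hRa
        (fun w => x = w ∨ R x w ∨ ∃ y, R x y ∧ R y w) (u := x) (Or.inl rfl) hc
      apply hv
      have hDy : (D G x y).card ≤ 2 * d := by
        rcases hy with rfl | hy | ⟨t, h1, h2⟩
        · rw [D_self]; simp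
        · exact (hDd _ _ hy).trans (by omega)
        · have h3 := card_le_card (D_tri (G := G) x t y)
          have h4 := card_union_le (D G x t) (D G t y)
          have := hDd _ _ h1
          have := hDd _ _ h2
          omega
      have hDv : (D G x v).card < k := by
        have h3 := card_le_card (D_tri (G := G) x y v)
        have h4 := card_union_le (D G x y) (D G y v)
        have := hDd _ _ hyv
        omega
      right; right
      by_contra hno
      push Not at hno
      have : Nb R x ⊆ D G x v := by
        refine subset_trans ?_ (Nb_sub hi x v)
        intro u hu
        rw [mem_sdiff]
        refine ⟨hu, fun hu' => ?_⟩
        exact hno u (mem_Nb.1 hu) (hs _ _ (mem_Nb.1 hu'))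
      have := card_le_card this
      rw [hcard] at this
      omega
    have hM : ∀ x y, (D G x y).card ≤ 2 * d := by
      intro x y
      rcases hR2 x y with rfl | hy | ⟨t, h1, h2⟩
      · rw [D_self]; simp
      · exact (hDd _ _ hy).trans (by omega)
      · have h3 := card_le_card (D_tri (G := G) x t y)
        have h4 := card_union_le (D G x t) (D G t y)
        have := hDd _ _ h1
        have := hDd _ _ h2
        omega
    have := small_orbit hG hM hp hq hpq
    calc _ ≤ _ := this
      _ = _ := by ring
  · calc _ ≤ _ := hcov
      _ ≤ (3 * d) * d := Nat.mul_le_mul_right _ hkd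
      _ ≤ _ := by nlinarith

lemma three_cycle {g k : Perm α} {a : α} (ha : g a ≠ a) (hka : k a ≠ a)
    (h : ∀ x, g x ≠ x → k x ≠ x → x = a) : (g * k * g⁻¹ * k⁻¹).IsThreeCycle := by
  have hg : ∀ x, g x ≠ x → x ≠ a → k x = x := fun x h1 h2 => by
    by_contra hc; exact h2 (h x h1 hc)
  have hk : ∀ x, k x ≠ x → x ≠ a → g x = x := fun x h1 h2 => by
    by_contra hc; exact h2 (h x hc h1)
  have mg : ∀ x, g x ≠ x → g (g x) ≠ g x := fun x h1 h2 => h1 (g.injective h2)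
  have mk : ∀ x, k x ≠ x → k (k x) ≠ k x := fun x h1 h2 => h1 (k.injective h2)
  have mg' : ∀ x, g x ≠ x → g (g⁻¹ x) ≠ g⁻¹ x := fun x h1 h2 => h1 (by
    rw [pai] at h2
    nth_rewrite 1 [h2]; rw [pai])
  have mk' : ∀ x, k x ≠ x → k (k⁻¹ x) ≠ k⁻¹ x := fun x h1 h2 => h1 (by
    rw [pai] at h2
    nth_rewrite 1 [h2]; rw [pai])
  have ig : ∀ x, g x = x → g⁻¹ x = x := fun x h1 => by rw [Perm.inv_eq_iff_eq, h1]
  have ik : ∀ x, k x = x → k⁻¹ x = x := fun x h1 => by rw [Perm.inv_eq_iff_eq, h1]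
  have hne : g a ≠ k a := by
    intro hc
    have h1 := h (g a) (mg a ha) (by rw [hc]; exact mk a hka)
    exact ha h1
  have : g * k * g⁻¹ * k⁻¹ = swap a (k a) * swap a (g a) := by
    ext x
    simp only [Perm.mul_apply]
    by_cases hxa : x = a
    · subst hxa
      have h1 : k⁻¹ x ≠ x := fun hc => hka (by rw [Perm.inv_eq_iff_eq] at hc; exact hc.symm)
      rw [ig _ (hk _ (mk' _ hka) h1), pai, swap_apply_left,
        swap_apply_of_ne_of_ne ha hne]
    · by_cases hxg : x = g a
      · subst hxg
        rw [ik _ (hg _ (mg _ ha) ha), pia, hk _ (mk _ hka) hka,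
          swap_apply_right, swap_apply_left]
      · by_cases hxk : x = k a
        · subst hxk
          have h1 : g⁻¹ a ≠ a := fun hc => ha (by rw [Perm.inv_eq_iff_eq] at hc; exact hc.symm)
          rw [pia, hg _ (mg' _ ha) h1, pai,
            swap_apply_of_ne_of_ne hka hne.symm, swap_apply_right]
        · rw [swap_apply_of_ne_of_ne hxa hxg, swap_apply_of_ne_of_ne hxa hxk]
          by_cases hx1 : k x = x
          · rw [ik _ hx1]
            by_cases hx2 : g x = x
            · rw [ig _ hx2, hx1, hx2]
            · rw [hg (g⁻¹ x) (mg' _ hx2) (fun hc => hxg (by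
                rw [Perm.inv_eq_iff_eq] at hc; exact hc)), pai]
          · have h2 : k⁻¹ x ≠ a := fun hc => hxk (by rw [Perm.inv_eq_iff_eq] at hc; exact hc)
            rw [ig _ (hk _ (mk' _ hx1) h2), pai, hk x hx1 hxa]
  rw [this]
  exact Perm.isThreeCycle_swap_mul_swap_same hka.symm ha.symm hne.symm

lemma two_trans {g : Perm α} (hg : g ∈ G) (hg1 : g ≠ 1)
    (h2 : ∀ z p q : α, p ≠ z → q ≠ z → ∃ h ∈ G, h z = z ∧ h p = q)
    (hn : g.support.card ^ 2 < Fintype.card α) : ∃ t ∈ G, t.IsThreeCycle := by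
  classical
  obtain ⟨a, ha⟩ : ∃ a, g a ≠ a := by
    by_contra hc
    push Not at hc
    exact hg1 (Perm.ext hc)
  set K : Finset (Perm α) := univ.filter (fun h => h ∈ G ∧ h a = a) with hK
  set S := g.support.erase a with hS
  set T : α → α → Finset (Perm α) := fun b c => K.filter (fun h => h b = c) with hT
  have hTc : ∀ b c c', c ≠ a → c' ≠ a → (T b c).card ≤ (T b c').card := by
    intro b c c' hc hc'
    obtain ⟨k, hk, k1, k2⟩ := h2 a c c' hc hc'
    apply Finset.card_le_card_of_injOn (fun h => k * h)
    · intro h hh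
      simp only [hT, hK, coe_filter, mem_filter, mem_univ, true_and, Set.mem_ofPred_eq] at hh ⊢
      obtain ⟨⟨h1, h2⟩, h3⟩ := hh
      exact ⟨⟨G.mul_mem hk h1, by simp [h2, k1]⟩, by simp [h3, k2]⟩
    · intro h _ h' _ hh
      exact mul_left_cancel hh
  have hTn : ∀ b c, b ≠ a → c ≠ a → (Fintype.card α - 1) * (T b c).card ≤ K.card := by
    intro b c hb hc
    have h1 : K.card = ∑ c' ∈ univ.erase a, (T b c').card := by
      apply Finset.card_eq_sum_card_fiberwise
      intro h hh
      simp only [hK, coe_filter, mem_univ, true_and, Set.mem_ofPred_eq] at hh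
      simp only [coe_erase, coe_univ, Set.mem_sdiff, Set.mem_univ, Set.mem_singleton_iff, true_and]
      intro hc
      exact hb (h.injective (hc.trans hh.2.symm))
    rw [h1]
    calc _ = ∑ c' ∈ univ.erase a, (T b c).card := by
            rw [sum_const, card_erase_of_mem (mem_univ _), card_univ, smul_eq_mul]
      _ ≤ _ := sum_le_sum (fun c' hc' => hTc b c c' hc (ne_of_mem_erase hc'))
  have hex : ∃ h ∈ K, ∀ b ∈ S, h b ∉ S := by
    by_contra hcon
    push Not at hcon
    have hsub : K ⊆ (S ×ˢ S).biUnion (fun bc => T bc.1 bc.2) := by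
      intro h hh
      obtain ⟨b, hb, hb'⟩ := hcon h hh
      rw [mem_biUnion]
      exact ⟨(b, h b), by simp [hb, hb'], by simp [hT, hh]⟩
    have h1 : K.card ≤ ∑ bc ∈ S ×ˢ S, (T bc.1 bc.2).card :=
      (card_le_card hsub).trans card_biUnion_le
    have h3 : (Fintype.card α - 1) * K.card ≤ (S ×ˢ S).card * K.card := by
      calc _ ≤ (Fintype.card α - 1) * ∑ bc ∈ S ×ˢ S, (T bc.1 bc.2).card := by gcongr
        _ = ∑ bc ∈ S ×ˢ S, (Fintype.card α - 1) * (T bc.1 bc.2).card := mul_sum _ _ _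
        _ ≤ ∑ bc ∈ S ×ˢ S, K.card := sum_le_sum (fun bc hbc => by
            rw [mem_product] at hbc
            exact hTn _ _ (ne_of_mem_erase hbc.1) (ne_of_mem_erase hbc.2))
        _ = _ := by simp
    have hKpos : 0 < K.card := card_pos.2 ⟨1, by simp [hK, G.one_mem]⟩
    have h4 := Nat.le_of_mul_le_mul_right h3 hKpos
    rw [card_product, hS, card_erase_of_mem (by simp [ha])] at h4
    have h5 : 1 ≤ g.support.card := card_pos.2 ⟨a, by simp [ha]⟩
    obtain ⟨m, hm⟩ := Nat.exists_eq_add_of_le h5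
    rw [hm] at h4 hn
    have h6 : 1 + m - 1 = m := by omega
    rw [h6] at h4
    have : m * m + 1 ≤ (1 + m)^2 := by nlinarith
    omega
  obtain ⟨h, hh, hS'⟩ := hex
  simp only [hK, mem_filter, mem_univ, true_and] at hh
  have hinv : h⁻¹ a = a := by rw [Perm.inv_eq_iff_eq, hh.2]
  refine ⟨_, ?_, three_cycle (g := g) (k := h * g * h⁻¹) (a := a) ha ?_ ?_⟩
  · have hk : h * g * h⁻¹ ∈ G := G.mul_mem (G.mul_mem hh.1 hg) (G.inv_mem hh.1)
    exact G.mul_mem (G.mul_mem (G.mul_mem hg hk) (G.inv_mem hg)) (G.inv_mem hk)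
  · simp only [Perm.mul_apply, hinv]
    intro hc
    exact ha (h.injective (hc.trans hh.2.symm))
  · intro x hx1 hx2
    by_contra hxa
    have h3 : h⁻¹ x ∈ S := by
      rw [hS, mem_erase, Perm.mem_support]
      refine ⟨fun hc => hxa ?_, fun hc => hx2 ?_⟩
      · rw [Perm.inv_eq_iff_eq, hh.2] at hc; exact hc
      · simp only [Perm.mul_apply, hc]; simp
    apply hS' _ h3
    rw [pai, hS, mem_erase, Perm.mem_support]
    exact ⟨hxa, hx1⟩

theorem alt_le_of_small (hG : MulAction.IsPreprimitive G α) {g : Perm α} (hg : g ∈ G) (hg1 : g ≠ 1)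
    (hn : 16 * g.support.card ^ 2 < Fintype.card α) : alternatingGroup α ≤ G := by
  by_cases h2 : ∀ z p q : α, p ≠ z → q ≠ z → ∃ h ∈ G, h z = z ∧ h p = q
  · obtain ⟨t, ht, ht3⟩ := two_trans hg hg1 h2 (by omega)
    exact Equiv.Perm.alternatingGroup_le_of_isPreprimitive_of_isThreeCycle_mem hG ht3 ht
  · push Not at h2
    obtain ⟨z, p, q, hp, hq, hpq⟩ := h2
    have := not_two_trans hG hg hg1 hp hq (mem_D.2 (by push Not; exact hpq))
    omega

end prim
end IG

namespace IG
open Finset Equiv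

section struct
variable {α : Type*} [Fintype α] [DecidableEq α]

lemma card_cycSet (y : Perm α) (a : α) : (cycSet y a).card = Function.minimalPeriod y a := by
  have hpos : 0 < Function.minimalPeriod y a := by
    apply Function.IsPeriodicPt.minimalPeriod_pos (orderOf_pos y)
    rw [Function.IsPeriodicPt, Function.IsFixedPt, Perm.iterate_eq_pow, pow_orderOf_eq_one]; rfl
  have : cycSet y a = (range (Function.minimalPeriod y a)).image (fun i => y^[i] a) := by
    ext b
    rw [mem_cycSet, mem_image]
    constructor
    · intro h
      obtain ⟨i, hi⟩ := h.exists_nat_pow_eq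
      refine ⟨i % Function.minimalPeriod y a, mem_range.2 (Nat.mod_lt _ hpos), ?_⟩
      rw [Function.iterate_mod_minimalPeriod_eq, Perm.iterate_eq_pow, hi]
    · rintro ⟨i, _, rfl⟩
      rw [Perm.iterate_eq_pow]
      exact ⟨i, by simp⟩
  rw [this, card_image_of_injOn, card_range]
  intro i hi j hj hij
  exact Function.iterate_injOn_Iio_minimalPeriod (by simpa using hi) (by simpa using hj) hij

lemma pow_fix (y : Perm α) (a : α) (k : ℕ) : (y ^ k) a = a ↔ (cycSet y a).card ∣ k := by
  rw [card_cycSet, ← Function.isPeriodicPt_iff_minimalPeriod_dvd, Function.IsPeriodicPt,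
    Function.IsFixedPt, Perm.iterate_eq_pow]

lemma pp_dvd_lcm {ι : Type*} [DecidableEq ι] (s : Finset ι) (f : ι → ℕ) {p e : ℕ} (hp : p.Prime) (he : e ≠ 0)
    (hf : ∀ i ∈ s, f i ≠ 0) (h : p ^ e ∣ s.lcm f) : ∃ i ∈ s, p ^ e ∣ f i := by
  induction s using Finset.induction_on with
  | empty =>
    simp only [Finset.lcm_empty, Nat.dvd_one] at h
    exact absurd h (by rw [Nat.pow_eq_one]; push Not; exact ⟨hp.one_lt.ne', he⟩)
  | insert i s hi ih =>
    rw [Finset.lcm_insert] at h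
    have h1 : f i ≠ 0 := hf i (mem_insert_self _ _)
    have h2 : s.lcm f ≠ 0 := by
      rw [Ne, Finset.lcm_eq_zero_iff]
      push Not
      intro j hj
      exact hf j (mem_insert_of_mem hj)
    have h3 : p ^ e ∣ Nat.lcm (f i) (s.lcm f) := h
    rw [hp.pow_dvd_iff_le_factorization (Nat.lcm_ne_zero h1 h2), Nat.factorization_lcm h1 h2,
      Finsupp.sup_apply, le_sup_iff, ← hp.pow_dvd_iff_le_factorization h1,
      ← hp.pow_dvd_iff_le_factorization h2] at h3
    rcases h3 with h3 | h3
    · exact ⟨i, mem_insert_self _ _, h3⟩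
    · obtain ⟨j, hj, hj'⟩ := ih (fun j hj => hf j (mem_insert_of_mem hj)) h3
      exact ⟨j, mem_insert_of_mem hj, hj'⟩

section blocks
variable {β : Type*} [Fintype β] [DecidableEq β] {F : α → β} {y : Perm α} {yb : Perm β}

lemma F_pow (hF : ∀ a, F (y a) = yb (F a)) (i : ℕ) (a : α) : F ((y ^ i) a) = (yb ^ i) (F a) := by
  induction i with
  | zero => simp
  | succ i ih => rw [pow_succ', pow_succ', Perm.mul_apply, Perm.mul_apply, hF, ih]

lemma F_mem (hF : ∀ a, F (y a) = yb (F a)) {a b : α} (h : b ∈ cycSet y a) :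
    F b ∈ cycSet yb (F a) := by
  rw [mem_cycSet] at h ⊢
  obtain ⟨i, hi⟩ := h.exists_nat_pow_eq
  rw [← hi, F_pow hF]
  exact ⟨i, by simp⟩

lemma F_fiber (hF : ∀ a, F (y a) = yb (F a)) (a : α) :
    (cycSet y a).card = (cycSet yb (F a)).card * ((cycSet y a).filter (fun b => F b = F a)).card := by
  rw [card_eq_sum_card_fiberwise (f := F) (t := cycSet yb (F a)) (fun b hb => F_mem hF hb)]
  rw [sum_const_nat]
  intro b hb
  rw [mem_cycSet] at hb
  obtain ⟨i, hi⟩ := hb.exists_nat_pow_eq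
  symm
  apply card_bij (fun c _ => (y ^ i) c)
  · intro c hc
    rw [mem_filter, mem_cycSet] at hc ⊢
    refine ⟨?_, by rw [F_pow hF, hc.2, hi]⟩
    exact hc.1.trans ⟨i, by simp⟩
  · intro c _ d _ h
    exact (y ^ i).injective h
  · intro c hc
    rw [mem_filter, mem_cycSet] at hc
    refine ⟨(y ^ i)⁻¹ c, ?_, pai _ _⟩
    rw [mem_filter, mem_cycSet]
    constructor
    · exact hc.1.trans ⟨-i, by simp⟩
    · apply (yb ^ i).injective
      rw [← F_pow hF, pai, hc.2, hi]

lemma F_dvd (hF : ∀ a, F (y a) = yb (F a)) (a : α) :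
    (cycSet yb (F a)).card ∣ (cycSet y a).card := ⟨_, F_fiber hF a⟩

lemma pre_inv (hF : ∀ a, F (y a) = yb (F a)) {T : Finset β} (hT : Inv yb T) :
    Inv y (univ.filter (fun a => F a ∈ T)) := by
  intro a
  simp [hF, hT (F a)]

lemma pre_card {s : ℕ} (hs : ∀ b, (univ.filter (fun a => F a = b)).card = s) (T : Finset β) :
    (univ.filter (fun a => F a ∈ T)).card = T.card * s := by
  rw [card_eq_sum_card_fiberwise (f := F) (t := T) (fun b hb => by simpa using hb)]
  rw [sum_const_nat]
  intro b hb
  rw [← hs b, filter_filter]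
  congr 1
  ext a
  simp only [mem_filter, mem_univ, true_and]
  exact ⟨fun h => h.2, fun h => ⟨h ▸ hb, h⟩⟩

lemma cyc_card_le (hF : ∀ a, F (y a) = yb (F a)) (hsur : Function.Surjective F) :
    (cyc yb).card ≤ (cyc y).card := by
  classical
  have : ∀ T ∈ cyc yb, ∃ X ∈ cyc y, X.image F ⊆ T := by
    intro T hT
    obtain ⟨b, rfl⟩ := mem_cyc.1 hT
    obtain ⟨a, rfl⟩ := hsur b
    refine ⟨cycSet y a, cycSet_mem_cyc _ _, ?_⟩
    intro c hc
    obtain ⟨d, hd, rfl⟩ := mem_image.1 hc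
    exact F_mem hF hd
  choose! g hg1 hg2 using this
  apply card_le_card_of_injOn g hg1
  intro T hT T' hT' h
  by_contra hne
  have hd := cyc_disjoint hT hT' hne
  obtain ⟨a, ha⟩ := cyc_nonempty (hg1 T hT)
  exact Finset.disjoint_left.1 hd (hg2 T hT (mem_image_of_mem F ha))
    (hg2 T' hT' (mem_image_of_mem F (by rw [← h]; exact ha)))

end blocks

structure Good (y : Perm α) (c0 R0 M Q S0 : ℕ) : Prop where
  h0 : (cyc y).card ≤ c0
  h1 : ∀ r, 2 ≤ r → r ∣ Fintype.card α → r ≤ R0 → ∀ l, 1 ≤ l → l < r →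
    ¬ ∃ X : Finset α, X.card = l * (Fintype.card α / r) ∧ Inv y X
  h2 : ∀ p, p.Prime → p ∣ Fintype.card α → ∃ X ∈ cyc y, M ≤ X.card ∧ ¬ p ∣ X.card
  h3 : ∀ X ∈ cyc y, ∀ Y ∈ cyc y, X ≠ Y → ∀ q, Q ≤ q → q ∣ X.card → ¬ q ∣ Y.card
  h4 : ∀ s, s ∣ Fintype.card α → S0 < s → R0 < Fintype.card α / s → ∀ l, l ≤ Fintype.card α / s →
    Fintype.card α / s ≤ l * c0 →
    ¬ ∃ X : Finset α, X.card = l * s ∧ Inv y X ∧ ∀ Y ∈ cyc y, Y ⊆ X → l ∣ Y.card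
  h5 : ∃ X ∈ cyc y, 16 * X.card ^ 2 < Fintype.card α ∧ ∃ p e : ℕ, p.Prime ∧ Q ≤ p ^ e ∧ p ^ e ∣ X.card

lemma no_blocks {y : Perm α} {c0 R0 M Q S0 : ℕ} (h : Good y c0 R0 M Q S0)
    (hM : Q * S0 ≤ M) {β : Type*} [Fintype β] [DecidableEq β] {F : α → β} {yb : Perm β}
    (hF : ∀ a, F (y a) = yb (F a)) (hsur : Function.Surjective F) {s : ℕ}
    (hs : ∀ b, (univ.filter (fun a => F a = b)).card = s) (hs1 : 1 < s)
    (hr1 : 1 < Fintype.card β) : False := by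
  set n := Fintype.card α with hn
  set r := Fintype.card β with hr
  have hrs : r * s = n := by
    have := pre_card hs univ
    simp only [mem_univ, filter_true, card_univ] at this
    exact this.symm
  have hns : n / s = r := by rw [← hrs]; exact Nat.mul_div_cancel _ (by omega)
  have hnr : n / r = s := by rw [← hrs]; exact Nat.mul_div_cancel_left _ (by omega)
  rcases Nat.lt_or_ge S0 s with hS | hS
  · rcases Nat.lt_or_ge R0 r with hR | hR
    · -- large number of blocks
      have hex : ∃ T ∈ cyc yb, r ≤ T.card * c0 := by
        by_contra hc
        push Not at hc
        have h1 := sum_card_cyc yb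
        have h2 : (cyc yb).card ≤ c0 := (cyc_card_le hF hsur).trans h.h0
        have hne : (cyc yb).Nonempty := by
          have : 0 < Fintype.card β := by omega
          obtain ⟨b⟩ := Fintype.card_pos_iff.1 this
          exact ⟨_, cycSet_mem_cyc yb b⟩
        have h3 : (∑ T ∈ cyc yb, T.card) * c0 < ∑ T ∈ cyc yb, r := by
          rw [sum_mul]
          exact sum_lt_sum_of_nonempty hne hc
        rw [h1, sum_const, smul_eq_mul] at h3
        have : (cyc yb).card * r ≤ c0 * r := Nat.mul_le_mul_right _ h2
        have h5 : Fintype.card β * c0 = c0 * r := by rw [hr]; ring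
        omega
      obtain ⟨T, hT, hTr⟩ := hex
      refine h.h4 s ⟨r, by rw [← hn, ← hrs, mul_comm]⟩ hS (by rw [← hn, hns]; exact hR) T.card
        (by rw [← hn, hns]; exact card_le_univ _) (by rw [← hn, hns]; exact hTr)
        ⟨univ.filter (fun a => F a ∈ T), pre_card hs T, pre_inv hF (cyc_inv hT), ?_⟩
      intro Y hY hYT
      obtain ⟨a, rfl⟩ := mem_cyc.1 hY
      have ha := hYT (self_mem_cycSet y a)
      rw [mem_filter] at ha
      rw [cyc_eq_cycSet hT ha.2]
      exact F_dvd hF a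
    · -- few blocks
      obtain ⟨p, hp, hpr⟩ := Nat.exists_prime_and_dvd (n := r) (by omega)
      obtain ⟨X, hX, -, hXp⟩ := h.h2 p hp (by rw [← hn, ← hrs]; exact Dvd.dvd.mul_right hpr _)
      obtain ⟨a, rfl⟩ := mem_cyc.1 hX
      set T := cycSet yb (F a) with hT
      have hTd : T.card ∣ _ := F_dvd hF a
      have hTr : T.card ≠ r := by
        intro hc
        exact hXp (hpr.trans (hc ▸ hTd))
      have hT2 : T.card ≤ r := card_le_univ _
      refine h.h1 r (by omega) ⟨s, by rw [← hn, hrs]⟩ hR T.card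
        (card_pos.2 ⟨_, self_mem_cycSet _ _⟩) (by omega)
        ⟨univ.filter (fun a => F a ∈ T), by rw [pre_card hs T, ← hn, hnr],
          pre_inv hF (cyc_inv (cycSet_mem_cyc _ _))⟩
  · -- small blocks
    obtain ⟨p, hp, hps⟩ := Nat.exists_prime_and_dvd (n := s) (by omega)
    obtain ⟨X, hX, hXM, hXp⟩ := h.h2 p hp (by rw [← hn, ← hrs]; exact Dvd.dvd.mul_left hps _)
    obtain ⟨a, rfl⟩ := mem_cyc.1 hX
    have hfib := F_fiber hF a
    set lam := ((cycSet y a).filter (fun b => F b = F a)).card with hlam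
    have hsub : (cycSet y a).filter (fun b => F b = F a) ⊆ univ.filter (fun b => F b = F a) :=
      filter_subset_filter _ (subset_univ _)
    have hls : lam ≤ s := by rw [← hs (F a)]; exact card_le_card hsub
    have hne : lam ≠ s := by
      intro hc
      apply hXp
      rw [hfib, hc]
      exact Dvd.dvd.mul_left hps _
    have hex : ∃ b, F b = F a ∧ b ∉ cycSet y a := by
      by_contra hc
      push Not at hc
      apply hne
      rw [← hs (F a), hlam]
      congr 1
      ext b
      simp only [mem_filter, mem_univ, true_and]
      exact ⟨fun h => h.2, fun h => ⟨hc b h, h⟩⟩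
    obtain ⟨b, hb1, hb2⟩ := hex
    have hlQ : Q ≤ (cycSet yb (F a)).card := by
      by_contra hc
      push Not at hc
      have h1 : (cycSet yb (F a)).card * lam ≤ (cycSet yb (F a)).card * S0 :=
        Nat.mul_le_mul_left _ (hls.trans hS)
      have h2 : 0 < S0 := by omega
      have h3 : (cycSet yb (F a)).card * S0 < Q * S0 := Nat.mul_lt_mul_of_pos_right hc h2
      omega
    refine h.h3 _ hX _ (cycSet_mem_cyc y b) ?_ _ hlQ (F_dvd hF a) ?_
    · intro hc
      exact hb2 (hc ▸ self_mem_cycSet y b)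
    · rw [← hb1]; exact F_dvd hF b

open Pointwise in
lemma exists_blocks {H : Subgroup (Perm α)} (ht : MulAction.IsPretransitive H α)
    {B : Set α} (hB : MulAction.IsBlock H B) (hB1 : ¬ MulAction.IsTrivialBlock B) :
    ∃ f : α → Set α, (∀ a b, f a = f b ↔ b ∈ f a) ∧
      (∀ h ∈ H, ∀ a b, f a = f b → f (h a) = f (h b)) ∧ (∀ a, (f a).ncard = B.ncard) ∧
      1 < B.ncard ∧ B ≠ Set.univ := by
  rw [MulAction.IsTrivialBlock] at hB1
  push Not at hB1
  obtain ⟨hB1, hB2⟩ := hB1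
  have hB1' : B.Nontrivial := Set.not_subsingleton_iff.1 (by simpa using hB1)
  obtain ⟨b0, hb0⟩ := hB1'.nonempty
  choose g hg using fun a => ht.exists_smul_eq b0 a
  have hsm := MulAction.isBlock_iff_smul_eq_smul_of_nonempty.1 hB
  have hmem : ∀ a, a ∈ g a • B := fun a => by
    have : g a • b0 ∈ g a • B := Set.smul_mem_smul_set hb0
    rwa [hg] at this
  have heq : ∀ (h : H) a, a ∈ h • B → h • B = g a • B := fun h a ha => hsm ⟨a, ha, hmem a⟩
  refine ⟨fun a => g a • B, ?_, ?_, ?_, ?_, hB2⟩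
  · intro a b
    constructor
    · intro h
      have h' : g a • B = g b • B := h
      show b ∈ g a • B
      rw [h']
      exact hmem b
    · intro h
      exact heq _ _ h
  · intro h hh a b hab
    have key : ∀ c, (⟨h, hh⟩ * g c : H) • B = g (h c) • B := by
      intro c
      apply heq
      rw [mul_smul]
      exact Set.smul_mem_smul_set (a := (⟨h, hh⟩ : H)) (hmem c)
    show g (h a) • B = g (h b) • B
    rw [← key, ← key, mul_smul, mul_smul]
    have : g a • B = g b • B := hab
    rw [this]
  · intro a
    exact Set.ncard_smul_set (g a) B
  · rw [Set.one_lt_ncard_iff_nontrivial]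
    exact hB1'

theorem alt_le {H : Subgroup (Perm α)} {x y : Perm α} (hxH : x ∈ H) (hyH : y ∈ H)
    (hx : ∀ X : Finset α, Inv x X → X.card = 0 ∨ 2 * X.card = Fintype.card α ∨ X.card = Fintype.card α)
    {c0 R0 M Q S0 : ℕ} (h : Good y c0 R0 M Q S0) (hM : Q * S0 ≤ M) (hR0 : 2 ≤ R0) (hQ : 2 ≤ Q)
    : alternatingGroup α ≤ H := by
  classical
  have ht : MulAction.IsPretransitive H α := by
    constructor
    intro a b
    set X : Finset α := univ.filter (fun c => ∃ k ∈ H, k a = c) with hX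
    have hInv : ∀ z ∈ H, Inv z X := by
      intro z hz c
      simp only [hX, mem_filter, mem_univ, true_and]
      constructor
      · rintro ⟨k, hk, h1⟩
        exact ⟨z⁻¹ * k, H.mul_mem (H.inv_mem hz) hk, by rw [Perm.mul_apply, h1, pia]⟩
      · rintro ⟨k, hk, h1⟩
        exact ⟨z * k, H.mul_mem hz hk, by rw [Perm.mul_apply, h1]⟩
    have haX : a ∈ X := by simp only [hX, mem_filter, mem_univ, true_and]; exact ⟨1, H.one_mem, rfl⟩
    rcases hx X (hInv x hxH) with h1 | h1 | h1
    · rw [card_eq_zero] at h1; rw [h1] at haX; simp at haX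
    · exfalso
      refine h.h1 2 le_rfl ⟨_, h1.symm⟩ hR0 1 le_rfl (by norm_num) ⟨X, by omega, hInv y hyH⟩
    · have : X = univ := by rw [← card_eq_iff_eq_univ]; exact h1
      have hb : b ∈ X := this ▸ mem_univ b
      simp only [hX, mem_filter, mem_univ, true_and] at hb
      obtain ⟨k, hk, h2⟩ := hb
      exact ⟨⟨k, hk⟩, h2⟩
  have hprim : MulAction.IsPreprimitive H α := by
    refine { toIsPretransitive := ht, isTrivialBlock_of_isBlock := ?_ }
    intro B hB
    by_contra hB1
    obtain ⟨f, hf1, hf2, hf3, hf4, hf5⟩ := exists_blocks ht hB hB1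
    let st : Setoid α := Setoid.ker f
    let F : α → Quotient st := Quotient.mk st
    have hFeq : ∀ a b, F a = F b ↔ f a = f b := fun a b => Quotient.eq (r := st)
    let yb : Perm (Quotient st) := Quotient.congr y (fun a b => by
      show f a = f b ↔ f (y a) = f (y b)
      refine ⟨hf2 y hyH a b, fun hh => ?_⟩
      have := hf2 y⁻¹ (H.inv_mem hyH) _ _ hh
      rwa [pia, pia] at this)
    have hsur : Function.Surjective F := Quotient.mk_surjective
    have hs : ∀ b, (univ.filter (fun a => F a = b)).card = B.ncard := by
      intro b
      obtain ⟨a, rfl⟩ := hsur b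
      rw [← hf3 a, Set.ncard_eq_toFinset_card']
      congr 1
      ext c
      simp only [mem_filter, mem_univ, true_and, Set.mem_toFinset]
      rw [hFeq, ← hf1 a c]
      exact eq_comm
    refine no_blocks h hM (F := F) (yb := yb) (fun a => rfl) hsur hs hf4 ?_
    by_contra hc
    have hsub : Subsingleton (Quotient st) := by
      rw [← Fintype.card_le_one_iff_subsingleton]; omega
    apply hf5
    obtain ⟨a, -⟩ : B.Nonempty := by
      rw [← Set.ncard_pos]; omega
    have hfa : f a = Set.univ := by
      rw [Set.eq_univ_iff_forall]
      intro b
      rw [← hf1, ← hFeq]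
      exact Subsingleton.elim _ _
    apply Set.eq_of_subset_of_ncard_le (Set.subset_univ _)
    rw [← hf3 a, hfa]
  obtain ⟨X, hX, hXn, p, e, hp, hq, hqX⟩ := h.h5
  set N := ((cyc y).erase X).lcm Finset.card with hN
  obtain ⟨a, rfl⟩ := mem_cyc.1 hX
  have he : e ≠ 0 := by rintro rfl; simp at hq; omega
  have hsupp : (y ^ N).support ⊆ cycSet y a := by
    intro b hb
    rw [Perm.mem_support, Ne, pow_fix] at hb
    by_contra hc
    apply hb
    apply Finset.dvd_lcm
    rw [mem_erase]
    exact ⟨fun h => hc (h ▸ self_mem_cycSet y b), cycSet_mem_cyc _ _⟩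
  refine alt_le_of_small hprim (g := y ^ N) (H.pow_mem hyH _) ?_ ?_
  · intro h1
    have h2 : (y ^ N) a = a := by rw [h1]; rfl
    rw [pow_fix] at h2
    obtain ⟨Y, hY, hYq⟩ := pp_dvd_lcm _ _ hp he (fun Y hY => by
      have := card_pos.2 (cyc_nonempty (mem_of_mem_erase hY)); omega) (hqX.trans h2)
    rw [mem_erase] at hY
    exact h.h3 _ hX _ hY.2 (Ne.symm hY.1) _ hq hqX hYq
  · refine lt_of_le_of_lt ?_ hXn
    have := card_le_card hsupp
    gcongr

end struct
end IG

namespace IG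
open Finset Equiv

lemma inv_conj {α : Type*} [Fintype α] [DecidableEq α] {x k : Perm α} {X : Finset α} (h : Inv (k * x * k⁻¹) X) :
    Inv x (X.map (k⁻¹ : Perm α).toEmbedding) := by
  intro a
  have := h (k a)
  simp only [Perm.mul_apply, pia] at this
  rw [mem_map_equiv, mem_map_equiv]
  exact this

lemma invgen_of_good {n : ℕ} {x y : alternatingGroup (Fin n)}
    (hx : ∀ X : Finset (Fin n), Inv (x : Perm (Fin n)) X → X.card = 0 ∨ 2 * X.card = n ∨ X.card = n)
    {c0 R0 M Q S0 : ℕ} (hy : Good (y : Perm (Fin n)) c0 R0 M Q S0) (hM : Q * S0 ≤ M) (hR0 : 2 ≤ R0)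
    (hQ : 2 ≤ Q) (g h : alternatingGroup (Fin n)) :
    Subgroup.closure {g * x * g⁻¹, h * y * h⁻¹} = ⊤ := by
  set K := Subgroup.closure {g * x * g⁻¹, h * y * h⁻¹} with hK
  have hxK : g * x * g⁻¹ ∈ K := Subgroup.subset_closure (by simp)
  have hyK : h * y * h⁻¹ ∈ K := Subgroup.subset_closure (by simp)
  set H : Subgroup (Perm (Fin n)) :=
    K.map ((alternatingGroup (Fin n)).subtype.comp (MulAut.conj h⁻¹).toMonoidHom) with hH
  have hxH : ((h⁻¹ * g : alternatingGroup (Fin n)) : Perm (Fin n)) * x * (h⁻¹ * g : alternatingGroup (Fin n))⁻¹ ∈ H := by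
    refine ⟨_, hxK, ?_⟩
    simp [mul_assoc]
  have hyH : (y : Perm (Fin n)) ∈ H := by
    refine ⟨_, hyK, ?_⟩
    simp [mul_assoc]
  have key := alt_le hxH hyH (fun X hX => by
    have := hx _ (inv_conj hX)
    rw [card_map] at this
    rw [Fintype.card_fin]
    exact this) hy hM hR0 hQ
  rw [eq_top_iff]
  intro a _
  have h1 : ((h⁻¹ * a * h : alternatingGroup (Fin n)) : Perm (Fin n)) ∈ H :=
    key (h⁻¹ * a * h).2
  obtain ⟨k, hk, hk'⟩ := h1
  have h2 : h⁻¹ * k * h = h⁻¹ * a * h := by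
    apply Subtype.ext
    rw [← hk']
    simp
  have h3 : k = a := mul_left_cancel (mul_right_cancel h2)
  rw [← h3]; exact hk

lemma cycSet_card_of_type {n k m : ℕ} {σ : Perm (Fin n)} (hσ : σ.cycleType = Multiset.replicate k m)
    (hkm : k * m = n) (a : Fin n) : (cycSet σ a).card = m := by
  have hsupp : σ.support = univ := by
    rw [← card_eq_iff_eq_univ, ← Perm.sum_cycleType, hσ, Multiset.sum_replicate, smul_eq_mul, hkm,
      Fintype.card_fin]
  have ha : a ∈ σ.support := hsupp ▸ mem_univ a
  have h1 : cycSet σ a = (σ.cycleOf a).support := by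
    ext b
    rw [mem_cycSet, Perm.mem_support_cycleOf_iff]
    exact ⟨fun h => ⟨h, ha⟩, fun h => h.1⟩
  have h2 : (σ.cycleOf a).support.card ∈ σ.cycleType := by
    rw [Perm.cycleType_def]
    refine Multiset.mem_map.2 ⟨σ.cycleOf a, ?_, rfl⟩
    exact Perm.cycleOf_mem_cycleFactorsFinset_iff.2 ha
  rw [hσ] at h2
  rw [h1]
  exact Multiset.eq_of_mem_replicate h2

lemma exists_x {n : ℕ} (hn : 5 ≤ n) : ∃ x : alternatingGroup (Fin n),
    (Odd n → (x : Perm (Fin n)).IsCycle ∧ (x : Perm (Fin n)).support.card = n) ∧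
    (Even n → ∃ c d : Perm (Fin n), c.IsCycle ∧ d.IsCycle ∧ c.support.card = n / 2 ∧
      d.support.card = n / 2 ∧ c.Disjoint d ∧ (x : Perm (Fin n)) = c * d) ∧
    ∀ X : Finset (Fin n), Inv (x : Perm (Fin n)) X → X.card = 0 ∨ 2 * X.card = n ∨ X.card = n := by
  rcases Nat.even_or_odd n with he | ho
  · obtain ⟨m, hm⟩ := he
    obtain ⟨σ, hσ⟩ := (Perm.exists_with_cycleType_iff (Fin n) (m := Multiset.replicate 2 m)).2 ⟨by
      simp [hm, two_mul], fun a ha => by rw [Multiset.eq_of_mem_replicate ha]; omega⟩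
    have hsign : Perm.sign σ = 1 := by
      rw [Perm.sign_of_cycleType, hσ]
      simp only [Multiset.sum_replicate, Multiset.card_replicate, smul_eq_mul]
      exact Even.neg_one_pow ⟨m + 1, by ring⟩
    refine ⟨⟨σ, by rw [Perm.mem_alternatingGroup]; exact hsign⟩, ?_, ?_, ?_⟩
    · intro h
      exact absurd h (by rw [Nat.not_odd_iff_even]; exact ⟨m, hm⟩)
    · intro _
      have h2 : σ.cycleFactorsFinset.card = 2 := by
        have := congrArg Multiset.card hσ
        rw [Perm.cycleType_def, Multiset.card_map, Multiset.card_replicate] at this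
        exact this
      obtain ⟨c, d, hcd, hcd2⟩ := card_eq_two.1 h2
      have hc : c ∈ σ.cycleFactorsFinset := by rw [hcd2]; simp
      have hd : d ∈ σ.cycleFactorsFinset := by rw [hcd2]; simp
      have key : ∀ c ∈ σ.cycleFactorsFinset, c.support.card = n / 2 := by
        intro c hc
        have h3 : c.support.card ∈ σ.cycleType := by
          rw [Perm.cycleType_def]
          exact Multiset.mem_map.2 ⟨c, hc, rfl⟩
        rw [hσ] at h3
        rw [Multiset.eq_of_mem_replicate h3]; omega
      have hdis : c.Disjoint d := Perm.cycleFactorsFinset_pairwise_disjoint σ hc hd hcd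
      refine ⟨c, d, (Perm.mem_cycleFactorsFinset_iff.1 hc).1, (Perm.mem_cycleFactorsFinset_iff.1 hd).1,
        key c hc, key d hd, hdis, ?_⟩
      show σ = c * d
      obtain ⟨-, h5, h4⟩ := Perm.cycleFactorsFinset_eq_finset.1 hcd2
      rw [← h4, Finset.noncommProd_insert_of_notMem _ _ _ _ (by simpa using hcd), Finset.noncommProd_singleton]
      rfl
    · intro X hX
      have hX : Inv σ X := hX
      have hcs : ∀ a, (cycSet σ a).card = m := cycSet_card_of_type hσ (by omega)
      rcases X.eq_empty_or_nonempty with rfl | ⟨a, ha⟩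
      · left; simp
      · right
        by_cases h1 : X ⊆ cycSet σ a
        · left
          have : X = cycSet σ a := h1.antisymm (hX.cycSet_subset ha)
          rw [this, hcs]; omega
        · right
          rw [Finset.not_subset] at h1
          obtain ⟨b, hb, hba⟩ := h1
          have hdis : Disjoint (cycSet σ a) (cycSet σ b) :=
            cyc_disjoint (cycSet_mem_cyc _ _) (cycSet_mem_cyc _ _)
              (fun h => hba (h ▸ self_mem_cycSet σ b))
          have h2 := card_le_card (union_subset (hX.cycSet_subset ha) (hX.cycSet_subset hb))
          rw [card_union_of_disjoint hdis, hcs, hcs] at h2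
          have h3 := card_le_univ X
          rw [Fintype.card_fin] at h3
          omega
  · obtain ⟨σ, hσ⟩ := (Perm.exists_with_cycleType_iff (Fin n) (m := Multiset.replicate 1 n)).2 ⟨by
      simp, fun a ha => by rw [Multiset.eq_of_mem_replicate ha]; omega⟩
    have hsign : Perm.sign σ = 1 := by
      rw [Perm.sign_of_cycleType, hσ]
      simp only [Multiset.sum_replicate, Multiset.card_replicate, smul_eq_mul]
      obtain ⟨m, hm⟩ := ho
      exact Even.neg_one_pow ⟨m + 1, by omega⟩
    refine ⟨⟨σ, by rw [Perm.mem_alternatingGroup]; exact hsign⟩, ?_, ?_, ?_⟩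
    · intro _
      refine ⟨?_, ?_⟩
      · rw [← Perm.card_cycleType_eq_one]
        show σ.cycleType.card = 1
        rw [hσ]; simp
      · show σ.support.card = n
        rw [← Perm.sum_cycleType, hσ]; simp
    · intro h
      exact absurd h (by rw [Nat.not_even_iff_odd]; exact ho)
    · intro X hX
      have hX : Inv σ X := hX
      have hcs : ∀ a, (cycSet σ a).card = n := cycSet_card_of_type hσ (by omega)
      rcases X.eq_empty_or_nonempty with rfl | ⟨a, ha⟩
      · left; simp
      · right; right
        have h2 := card_le_card (hX.cycSet_subset ha)
        rw [hcs] at h2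
        have h3 := card_le_univ X
        rw [Fintype.card_fin] at h3
        omega

open Classical in
lemma final_count {n : ℕ} (hn : 5 ≤ n) {x : alternatingGroup (Fin n)}
    (hx : ∀ X : Finset (Fin n), Inv (x : Perm (Fin n)) X → X.card = 0 ∨ 2 * X.card = n ∨ X.card = n)
    {c0 R0 M Q S0 : ℕ} (hM : Q * S0 ≤ M) (hR0 : 2 ≤ R0) (hQ : 2 ≤ Q) {δ : ℝ}
    (hb : ((univ.filter (fun σ : Perm (Fin n) => ¬ Good σ c0 R0 M Q S0)).card : ℝ) ≤ n.factorial * δ)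
    (P : alternatingGroup (Fin n) → Prop)
    (hP : ∀ y, (∀ g h : alternatingGroup (Fin n), Subgroup.closure {g * x * g⁻¹, h * y * h⁻¹} = ⊤) → P y) :
    (Nat.card {y : alternatingGroup (Fin n) // P y} : ℝ) ≥
      (1 - 2 * δ) * Nat.card (alternatingGroup (Fin n)) := by
  have h1 : Nat.card {y : alternatingGroup (Fin n) // P y} +
      Nat.card {y : alternatingGroup (Fin n) // ¬ P y} = Nat.card (alternatingGroup (Fin n)) := by
    rw [Nat.card_eq_fintype_card, Nat.card_eq_fintype_card, Nat.card_eq_fintype_card,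
      Fintype.card_subtype_compl]
    have := Fintype.card_subtype_le P
    omega
  have h2 : Nat.card {y : alternatingGroup (Fin n) // ¬ P y} ≤
      (univ.filter (fun σ : Perm (Fin n) => ¬ Good σ c0 R0 M Q S0)).card := by
    rw [Nat.card_eq_fintype_card, ← Fintype.card_coe]
    refine Fintype.card_le_of_injective (fun y => ⟨y.1.1, ?_⟩) ?_
    · rw [mem_filter]
      refine ⟨mem_univ _, fun hg => y.2 (hP _ (fun g h => invgen_of_good hx hg hM hR0 hQ g h))⟩
    · intro y z hyz
      simp only [Subtype.mk.injEq] at hyz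
      exact Subtype.ext (Subtype.ext hyz)
  have h3 : (2 * Nat.card (alternatingGroup (Fin n))) = n.factorial := by
    have : Nontrivial (Fin n) := Fin.nontrivial_iff_two_le.2 (by omega)
    have := two_mul_nat_card_alternatingGroup (α := Fin n)
    rw [this, Nat.card_perm, Nat.card_eq_fintype_card, Fintype.card_fin]
  have h1' : (Nat.card {y : alternatingGroup (Fin n) // P y} : ℝ) +
      Nat.card {y : alternatingGroup (Fin n) // ¬ P y} = Nat.card (alternatingGroup (Fin n)) := by
    exact_mod_cast h1
  have h2' : (Nat.card {y : alternatingGroup (Fin n) // ¬ P y} : ℝ) ≤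
      (univ.filter (fun σ : Perm (Fin n) => ¬ Good σ c0 R0 M Q S0)).card := by exact_mod_cast h2
  have h3' : (2 * Nat.card (alternatingGroup (Fin n)) : ℝ) = n.factorial := by exact_mod_cast h3
  rw [← h3'] at hb
  nlinarith

end IG

namespace IG
open Finset Equiv

lemma sum_dvd_le {d : ℕ} (hd : 1 ≤ d) (n : ℕ) :
    ∑ l ∈ (Icc 1 n).filter (d ∣ ·), (1 : ℝ) / l ≤ (1 + Real.log n) / d := by
  have hd0 : (0 : ℝ) < d := by positivity
  have hsub : (Icc 1 n).filter (d ∣ ·) ⊆ (Icc 1 n).image (fun j => d * j) := by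
    intro l hl
    simp only [mem_filter, mem_Icc, mem_image] at hl ⊢
    obtain ⟨⟨h1, h2⟩, j, rfl⟩ := hl
    exact ⟨j, ⟨Nat.pos_of_ne_zero (by rintro rfl; simp at h1), (Nat.le_mul_of_pos_left j hd).trans h2⟩, rfl⟩
  apply (Finset.sum_le_sum_of_subset_of_nonneg hsub (fun _ _ _ => by positivity)).trans
  rw [Finset.sum_image (fun a _ b _ h => Nat.eq_of_mul_eq_mul_left hd h)]
  have : ∑ j ∈ Icc 1 n, (1 : ℝ) / ((d * j : ℕ) : ℝ) = (∑ j ∈ Icc 1 n, (1 : ℝ) / j) / d := by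
    rw [Finset.sum_div]
    apply Finset.sum_congr rfl
    intro j _
    push_cast
    rw [div_div, mul_comm]
  rw [this]
  gcongr
  exact harm_le n

open ArithmeticFunction in
lemma mertens {N : ℕ} (hN : 1 ≤ N) :
    ∑ d ∈ Ioc 0 N, vonMangoldt d / d ≤ Real.log N + 6 := by
  have hN0 : (0 : ℝ) < N := by positivity
  have h1 := sum_Ioc_mul_zeta_eq_sum vonMangoldt N
  rw [vonMangoldt_mul_zeta] at h1
  have h2 : ∑ n ∈ Ioc 0 N, ArithmeticFunction.log n ≤ N * Real.log N := by
    calc _ ≤ ∑ n ∈ Ioc 0 N, Real.log N := by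
          apply Finset.sum_le_sum
          intro n hn
          rw [mem_Ioc] at hn
          rw [ArithmeticFunction.log_apply]
          apply Real.log_le_log
          · exact_mod_cast hn.1
          · exact_mod_cast hn.2
      _ = _ := by simp
  have h3 : ∑ d ∈ Ioc 0 N, vonMangoldt d * ((N : ℝ) / d - 1) ≤
      ∑ n ∈ Ioc 0 N, vonMangoldt n * ((N / n : ℕ) : ℝ) := by
    apply Finset.sum_le_sum
    intro d hd
    rw [mem_Ioc] at hd
    apply mul_le_mul_of_nonneg_left _ vonMangoldt_nonneg
    have hd0 : (0 : ℝ) < d := by exact_mod_cast hd.1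
    have h4 : N < d * (N / d + 1) := Nat.lt_mul_div_succ N hd.1
    have h5 : (N : ℝ) < d * (((N / d : ℕ) : ℝ) + 1) := by exact_mod_cast h4
    rw [sub_le_iff_le_add, div_le_iff₀ hd0]
    linarith
  have h4 : ∑ d ∈ Ioc 0 N, vonMangoldt d ≤ (Real.log 4 + 4) * N := by
    have := Chebyshev.psi_le_const_mul_self (x := (N : ℝ)) hN0.le
    rw [Chebyshev.psi, Nat.floor_natCast] at this
    exact this
  have h5 : ∑ d ∈ Ioc 0 N, vonMangoldt d * ((N : ℝ) / d - 1) =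
      N * ∑ d ∈ Ioc 0 N, vonMangoldt d / d - ∑ d ∈ Ioc 0 N, vonMangoldt d := by
    rw [Finset.mul_sum, ← Finset.sum_sub_distrib]
    apply Finset.sum_congr rfl
    intro d _
    ring
  have h6 : Real.log 4 ≤ 2 := by
    have : (4 : ℝ) = 2 ^ 2 := by norm_num
    rw [this, Real.log_pow]
    have := Real.log_two_lt_d9
    push_cast
    linarith
  have h7 : (N : ℝ) * ∑ d ∈ Ioc 0 N, vonMangoldt d / d ≤ N * (Real.log N + 6) := by
    have : (Real.log 4 + 4) * N ≤ 6 * N := by nlinarith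
    linarith
  exact le_of_mul_le_mul_left h7 hN0

open Classical in
lemma bad_sum {Q m : ℕ} (hQ : 1 ≤ Q) (hm : 1 ≤ m) :
    ∑ c ∈ (Icc 1 m).filter (fun c => ∀ d, d ∣ c → IsPrimePow d → d < Q), Real.log c / c ≤
      (Real.log Q + 6) * (1 + Real.log m) := by
  have hlm : 0 ≤ Real.log m := Real.log_natCast_nonneg m
  calc _ ≤ ∑ c ∈ (Icc 1 m).filter (fun c => ∀ d, d ∣ c → IsPrimePow d → d < Q),
          ∑ d ∈ Ioc 0 Q, if d ∣ c then ArithmeticFunction.vonMangoldt d / c else 0 := by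
        apply Finset.sum_le_sum
        intro c hc
        rw [mem_filter, mem_Icc] at hc
        rw [← ArithmeticFunction.vonMangoldt_sum, Finset.sum_div, ← Finset.sum_filter]
        rw [← Finset.sum_filter_ne_zero]
        apply Finset.sum_le_sum_of_subset_of_nonneg
        swap
        · intro d _ _
          exact div_nonneg ArithmeticFunction.vonMangoldt_nonneg (by positivity)
        intro d hd0
        obtain ⟨hd, hne⟩ := mem_filter.1 hd0
        have h1 : ArithmeticFunction.vonMangoldt d ≠ 0 := fun h => hne (by rw [h, zero_div])
        rw [ArithmeticFunction.vonMangoldt_ne_zero_iff] at h1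
        have h2 := Nat.dvd_of_mem_divisors hd
        rw [mem_filter, mem_Ioc]
        exact ⟨⟨h1.pos, (hc.2 d h2 h1).le⟩, h2⟩
    _ ≤ ∑ c ∈ Icc 1 m,
          ∑ d ∈ Ioc 0 Q, if d ∣ c then ArithmeticFunction.vonMangoldt d / c else 0 := by
        apply Finset.sum_le_sum_of_subset_of_nonneg (filter_subset _ _)
        intro c _ _
        apply Finset.sum_nonneg
        intro d _
        split_ifs
        · exact div_nonneg ArithmeticFunction.vonMangoldt_nonneg (by positivity)
        · exact le_rfl
    _ = ∑ d ∈ Ioc 0 Q, ArithmeticFunction.vonMangoldt d * ∑ c ∈ (Icc 1 m).filter (d ∣ ·), (1 : ℝ) / c := by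
        rw [Finset.sum_comm]
        apply Finset.sum_congr rfl
        intro d _
        rw [← Finset.sum_filter, Finset.mul_sum]
        apply Finset.sum_congr rfl
        intro c _
        ring
    _ ≤ ∑ d ∈ Ioc 0 Q, ArithmeticFunction.vonMangoldt d * ((1 + Real.log m) / d) := by
        apply Finset.sum_le_sum
        intro d hd
        rw [mem_Ioc] at hd
        exact mul_le_mul_of_nonneg_left (sum_dvd_le hd.1 m) ArithmeticFunction.vonMangoldt_nonneg
    _ = (∑ d ∈ Ioc 0 Q, ArithmeticFunction.vonMangoldt d / d) * (1 + Real.log m) := by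
        rw [Finset.sum_mul]
        apply Finset.sum_congr rfl
        intro d _
        ring
    _ ≤ _ := mul_le_mul_of_nonneg_right (mertens hQ) (by linarith)

/-- half of the harmonic sum avoids multiples of `p` -/
lemma half_sum {p M n : ℕ} (hp : 2 ≤ p) :
    (Real.log n - (1 + Real.log M)) / 2 ≤
      ∑ l ∈ (Icc 1 n).filter (fun l => M ≤ l ∧ ¬ p ∣ l), (1 : ℝ) / l := by
  rcases Nat.eq_zero_or_pos n with rfl | hn
  · simp
    have := Real.log_natCast_nonneg M
    linarith
  have h1 : ∑ l ∈ (Icc 1 n).filter (fun l => M < l ∧ p ∣ l), (1 : ℝ) / l ≤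
      ∑ l ∈ (Icc 1 n).filter (fun l => M ≤ l ∧ ¬ p ∣ l), (1 : ℝ) / l := by
    have hpos : ∀ l ∈ (Icc 1 n).filter (fun l => M < l ∧ p ∣ l), 2 ≤ l := by
      intro l hl
      rw [mem_filter, mem_Icc] at hl
      exact hp.trans (Nat.le_of_dvd (by omega) hl.2.2)
    calc _ ≤ ∑ l ∈ (Icc 1 n).filter (fun l => M < l ∧ p ∣ l), (1 : ℝ) / (((l - 1 : ℕ) : ℕ) : ℝ) := by
          apply Finset.sum_le_sum
          intro l hl
          have := hpos l hl
          apply one_div_le_one_div_of_le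
          · exact_mod_cast (by omega : 0 < l - 1)
          · exact_mod_cast (by omega : l - 1 ≤ l)
      _ = ∑ l ∈ ((Icc 1 n).filter (fun l => M < l ∧ p ∣ l)).image (fun l : ℕ => (l - 1 : ℕ)), (1 : ℝ) / (l : ℝ) := by
          rw [Finset.sum_image]
          intro a ha b hb hab
          have := hpos a ha
          have := hpos b hb
          simp only at hab
          omega
      _ ≤ _ := by
          apply Finset.sum_le_sum_of_subset_of_nonneg
          · intro l hl
            rw [mem_image] at hl
            obtain ⟨k, hk, rfl⟩ := hl
            have h2 := hpos k hk
            rw [mem_filter, mem_Icc] at hk ⊢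
            refine ⟨by omega, by omega, fun hd => ?_⟩
            have h3 := (Nat.dvd_sub hk.2.2 hd)
            rw [show k - (k - 1) = 1 by omega, Nat.dvd_one] at h3
            omega
          · intro _ _ _; positivity
  have h2 : ∑ l ∈ Icc 1 n, (1 : ℝ) / l ≤ ∑ l ∈ Icc 1 M, (1 : ℝ) / l +
      (∑ l ∈ (Icc 1 n).filter (fun l => M < l ∧ p ∣ l), (1 : ℝ) / l +
      ∑ l ∈ (Icc 1 n).filter (fun l => M ≤ l ∧ ¬ p ∣ l), (1 : ℝ) / l) := by
    have hsub : Icc 1 n ⊆ Icc 1 M ∪ ((Icc 1 n).filter (fun l => M < l ∧ p ∣ l) ∪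
      (Icc 1 n).filter (fun l => M ≤ l ∧ ¬ p ∣ l)) := by
      intro l hl
      simp only [mem_union, mem_filter]
      rw [mem_Icc] at hl ⊢
      by_cases h : p ∣ l
      · by_cases h3 : M < l
        · exact Or.inr (Or.inl ⟨by simpa using hl, h3, h⟩)
        · exact Or.inl ⟨hl.1, by omega⟩
      · by_cases h3 : M ≤ l
        · exact Or.inr (Or.inr ⟨by simpa using hl, h3, h⟩)
        · exact Or.inl ⟨hl.1, by omega⟩
    refine (Finset.sum_le_sum_of_subset_of_nonneg hsub (fun _ _ _ => by positivity)).trans ?_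
    have hu : ∀ s t : Finset ℕ, ∑ l ∈ s ∪ t, (1 : ℝ) / l ≤ ∑ l ∈ s, (1 : ℝ) / l + ∑ l ∈ t, (1 : ℝ) / l := by
      intro s t
      rw [← Finset.sum_union_inter]
      exact le_add_of_nonneg_right (Finset.sum_nonneg (fun _ _ => by positivity))
    refine (hu _ _).trans ?_
    gcongr
    exact hu _ _
  have h3 := le_harm n
  have h4 := harm_le M
  have h5 : Real.log n ≤ Real.log (n + 1) := Real.log_le_log (by exact_mod_cast hn) (by linarith)
  linarith

lemma log144 : (0.364 : ℝ) ≤ Real.log 1.44 := by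
  rw [Real.le_log_iff_exp_le (by norm_num)]
  refine (Real.exp_bound' (by norm_num) (by norm_num) (n := 6) (by norm_num)).trans ?_
  norm_num [Finset.sum_range_succ, Nat.factorial]

lemma log2518 : Real.log (25/18) ≤ 0.3287 := by
  rw [Real.log_le_iff_le_exp (by norm_num)]
  refine le_trans ?_ (Real.sum_le_exp_of_nonneg (by norm_num) 6)
  norm_num [Finset.sum_range_succ, Nat.factorial]

open Filter in
lemma ev_exp {ε : ℝ} (hε : 0 < ε) (K : ℝ) (k : ℕ) :
    ∀ᶠ n : ℕ in atTop, K * (1 + Real.log n) ^ k ≤ Real.exp (ε * Real.log n) := by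
  have h1 := (isLittleO_pow_exp_pos_mul_atTop k hε).def (c := Real.exp (-ε) / (|K| + 1)) (by positivity)
  have h2 : Tendsto (fun n : ℕ => 1 + Real.log n) atTop atTop :=
    tendsto_atTop_add_const_left _ _ (Real.tendsto_log_atTop.comp tendsto_natCast_atTop_atTop)
  filter_upwards [h2.eventually h1] with n hn
  have hL : 0 ≤ Real.log n := Real.log_natCast_nonneg n
  rw [Real.norm_of_nonneg (by positivity), Real.norm_of_nonneg (by positivity), mul_add, mul_one, Real.exp_add] at hn
  have h3 : K * (1 + Real.log n) ^ k ≤ (|K| + 1) * (1 + Real.log n) ^ k := by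
    gcongr
    have := le_abs_self K
    linarith
  refine h3.trans ?_
  calc _ ≤ (|K| + 1) * (Real.exp (-ε) / (|K| + 1) * (Real.exp ε * Real.exp (ε * Real.log n))) := by gcongr
    _ = (Real.exp (-ε) * Real.exp ε) * Real.exp (ε * Real.log n) := by field_simp
    _ = _ := by rw [← Real.exp_add]; simp

end IG

namespace IG
open Finset Equiv

open Classical in
noncomputable def cnt {n : ℕ} (P : Perm (Fin n) → Prop) : ℝ := ((univ.filter P).card : ℝ)

lemma cnt_eq {n : ℕ} (P : Perm (Fin n) → Prop) [DecidablePred P] :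
    cnt P = ((univ.filter P).card : ℝ) := by
  unfold cnt
  congr!

lemma cnt_mono {n : ℕ} {P R : Perm (Fin n) → Prop} (h : ∀ σ, P σ → R σ) : cnt P ≤ cnt R := by
  classical
  unfold cnt
  exact_mod_cast Finset.card_le_card (fun σ hσ => by
    rw [mem_filter] at hσ ⊢
    exact ⟨hσ.1, h σ hσ.2⟩)

lemma cnt_or {n : ℕ} (P R : Perm (Fin n) → Prop) : cnt (fun σ => P σ ∨ R σ) ≤ cnt P + cnt R := by
  classical
  rw [cnt_eq, cnt_eq, cnt_eq, Finset.filter_or]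
  exact_mod_cast Finset.card_union_le _ _

lemma cnt_ex {n : ℕ} {ι : Type*} (s : Finset ι) (P : ι → Perm (Fin n) → Prop) {b : ℝ}
    (hb : ∀ i ∈ s, cnt (P i) ≤ b) : cnt (fun σ => ∃ i ∈ s, P i σ) ≤ s.card * b := by
  classical
  have h1 : cnt (fun σ => ∃ i ∈ s, P i σ) ≤ ∑ i ∈ s, cnt (P i) := by
    simp only [cnt_eq]
    have : (univ.filter (fun σ => ∃ i ∈ s, P i σ)) ⊆ s.biUnion (fun i => univ.filter (P i)) := by
      intro σ hσ
      simpa using hσ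
    have h2 := (Finset.card_le_card this).trans Finset.card_biUnion_le
    exact_mod_cast h2
  refine h1.trans ((Finset.sum_le_sum hb).trans ?_)
  rw [Finset.sum_const, nsmul_eq_mul]

noncomputable def pc (n : ℕ) : ℕ := ⌊1.44 * Real.log n⌋₊
noncomputable def pR (n : ℕ) : ℕ := ⌊Real.exp (0.002 * Real.log n)⌋₊
noncomputable def pQ (n : ℕ) : ℕ := ⌈Real.exp (0.081 * Real.log n)⌉₊
noncomputable def pS (n : ℕ) : ℕ := ⌊Real.exp (0.6 * Real.log n)⌋₊
noncomputable def eb (n : ℕ) : ℝ := Real.exp (-0.08 * Real.log n)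

lemma pc_le (n : ℕ) : (pc n : ℝ) ≤ 1.44 * Real.log n :=
  Nat.floor_le (by have := Real.log_natCast_nonneg n; positivity)
lemma pR_le (n : ℕ) : (pR n : ℝ) ≤ Real.exp (0.002 * Real.log n) := Nat.floor_le (by positivity)
lemma pS_le (n : ℕ) : (pS n : ℝ) ≤ Real.exp (0.6 * Real.log n) := Nat.floor_le (by positivity)
lemma le_pQ (n : ℕ) : Real.exp (0.081 * Real.log n) ≤ (pQ n : ℝ) := Nat.le_ceil _
lemma pQ_pos (n : ℕ) : 1 ≤ pQ n := Nat.one_le_ceil_iff.2 (by positivity)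
lemma pQ_le (n : ℕ) : (pQ n : ℝ) ≤ 2 * Real.exp (0.081 * Real.log n) := by
  have h1 := Nat.ceil_lt_add_one (a := Real.exp (0.081 * Real.log n)) (by positivity)
  have h2 : 1 ≤ Real.exp (0.081 * Real.log n) :=
    Real.one_le_exp (by have := Real.log_natCast_nonneg n; positivity)
  unfold pQ
  linarith

open Filter in
lemma ev0 : ∀ᶠ n : ℕ in atTop, cnt (fun σ : Perm (Fin n) => ¬ (cyc σ).card ≤ pc n) ≤
    n.factorial * eb n := by
  filter_upwards [ev_exp (ε := 0.004) (by norm_num) (1.44 * Real.exp 1.44) 0, eventually_ge_atTop 1]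
    with n hn h1
  have hL : 0 ≤ Real.log n := Real.log_natCast_nonneg n
  have hn0 : (0 : ℝ) < n := by exact_mod_cast h1
  have hb := bd_B0 (t := 1.44) (c := 1.44 * Real.log n) (by norm_num) h1
  rw [← cnt_eq] at hb
  refine (cnt_mono (R := fun σ => 1.44 * Real.log n ≤ (cyc σ).card) ?_).trans (hb.trans ?_)
  · intro σ hσ
    rw [not_le] at hσ
    exact (Nat.lt_of_floor_lt hσ).le
  · gcongr
    have e1 : (n : ℝ) ^ ((1.44 : ℝ) - 1) = Real.exp (0.44 * Real.log n) := by
      rw [Real.rpow_def_of_pos hn0]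
      congr 1; ring
    have e2 : (1.44 : ℝ) ^ (-(1.44 * Real.log n)) ≤ Real.exp (-0.52416 * Real.log n) := by
      rw [Real.rpow_def_of_pos (by norm_num)]
      apply Real.exp_le_exp.2
      nlinarith [log144]
    rw [pow_zero, mul_one] at hn
    rw [e1]
    calc _ ≤ Real.exp (0.004 * Real.log n) * Real.exp (0.44 * Real.log n) * Real.exp (-0.52416 * Real.log n) := by
          gcongr
      _ = Real.exp (-0.08016 * Real.log n) := by
          rw [← Real.exp_add, ← Real.exp_add]; congr 1; ring
      _ ≤ _ := by
          unfold eb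
          apply Real.exp_le_exp.2
          linarith

open Filter in
lemma ev1 : ∀ᶠ n : ℕ in atTop, cnt (fun σ : Perm (Fin n) => (cyc σ).card ≤ pc n ∧
    ∃ r l : ℕ, r ∣ n ∧ r ≤ pR n ∧ 1 ≤ l ∧ l < r ∧ ∃ X : Finset (Fin n), X.card = l * (n / r) ∧ Inv σ X) ≤
    n.factorial * eb n := by
  filter_upwards [ev_exp (ε := 0.001) (by norm_num) ((0.72 * Real.exp 0.72) * (0.72 * Real.exp 0.72)) 0,
    eventually_ge_atTop 1] with n hn h1
  have hL : 0 ≤ Real.log n := Real.log_natCast_nonneg n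
  have hn0 : (0 : ℝ) < n := by exact_mod_cast h1
  rw [pow_zero, mul_one] at hn
  have hnexp : Real.exp (Real.log n) = n := Real.exp_log hn0
  set s : Finset (ℕ × ℕ) := (Icc 1 (pR n) ×ˢ Icc 1 (pR n)).filter (fun q => q.1 ∣ n ∧ q.2 < q.1) with hs
  have hcard : (s.card : ℝ) ≤ Real.exp (0.004 * Real.log n) := by
    have h2 : s.card ≤ pR n * pR n := by
      refine (card_filter_le _ _).trans ?_
      simp
    calc (s.card : ℝ) ≤ (pR n : ℝ) * pR n := by exact_mod_cast h2
      _ ≤ Real.exp (0.002 * Real.log n) * Real.exp (0.002 * Real.log n) := by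
          have := pR_le n
          gcongr
      _ = _ := by rw [← Real.exp_add]; congr 1; ring
  have key : ∀ q ∈ s, cnt (fun σ : Perm (Fin n) => ((cyc σ).card : ℝ) ≤ 1.44 * Real.log n ∧
      ∃ X : Finset (Fin n), X.card = q.2 * (n / q.1) ∧ Inv σ X) ≤
      n.factorial * Real.exp (-0.084552 * Real.log n) := by
    rintro ⟨r, l⟩ hq
    simp only [hs, mem_filter, mem_product, mem_Icc] at hq
    obtain ⟨⟨⟨hr1, hrR⟩, hl1, -⟩, ⟨m, hm⟩, hlr⟩ := hq
    simp only
    have hmr : n / r = m := by rw [hm]; exact Nat.mul_div_cancel_left _ hr1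
    rw [hmr]
    have hm0 : 0 < m := Nat.pos_of_ne_zero (by rintro rfl; omega)
    have hmle : Real.exp (0.998 * Real.log n) ≤ m := by
      have h3 : (n : ℝ) ≤ Real.exp (0.002 * Real.log n) * m := by
        have : (n : ℝ) = r * m := by exact_mod_cast hm
        have h4 : (r : ℝ) ≤ Real.exp (0.002 * Real.log n) := le_trans (by exact_mod_cast hrR) (pR_le n)
        calc (n : ℝ) = r * m := this
          _ ≤ _ := by gcongr
      have h4 : Real.exp (0.002 * Real.log n) * Real.exp (0.998 * Real.log n) = n := by
        rw [← Real.exp_add, ← hnexp, Real.log_exp]; congr 1; ring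
      exact le_of_mul_le_mul_left (h4.le.trans h3) (Real.exp_pos _)
    have hlm : m ≤ l * m := Nat.le_mul_of_pos_left m hl1
    have hlm2 : m ≤ n - l * m := by
      rw [hm, ← Nat.sub_mul]
      exact Nat.le_mul_of_pos_left m (by omega)
    have hb := bd_B1 (u := 0.72) (c := 1.44 * Real.log n) (by norm_num) (by norm_num) (n := n) (k := l * m)
      (by omega) (by omega)
    rw [← cnt_eq] at hb
    refine hb.trans ?_
    gcongr
    have hpw : ∀ j : ℕ, m ≤ j → (j : ℝ) ^ ((0.72 : ℝ) - 1) ≤ Real.exp (-0.27944 * Real.log n) := by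
      intro j hj
      have : Real.exp (0.998 * Real.log n) ≤ j := hmle.trans (by exact_mod_cast hj)
      refine (Real.rpow_le_rpow_of_nonpos (by positivity) this (by norm_num)).trans ?_
      rw [← Real.exp_mul]
      apply Real.exp_le_exp.2
      linarith
    have e2 : (0.72 : ℝ) ^ (-(1.44 * Real.log n)) ≤ Real.exp (0.473328 * Real.log n) := by
      rw [Real.rpow_def_of_pos (by norm_num)]
      apply Real.exp_le_exp.2
      have : Real.log 0.72 = - Real.log (25/18) := by
        rw [← Real.log_inv]; norm_num
      rw [this]
      nlinarith [log2518]
    calc _ ≤ (0.72 * Real.exp 0.72 * Real.exp (-0.27944 * Real.log n)) *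
          (0.72 * Real.exp 0.72 * Real.exp (-0.27944 * Real.log n)) * Real.exp (0.473328 * Real.log n) := by
          gcongr
          · exact hpw _ hlm
          · exact hpw _ hlm2
      _ = ((0.72 * Real.exp 0.72) * (0.72 * Real.exp 0.72)) * (Real.exp (-0.27944 * Real.log n) *
          Real.exp (-0.27944 * Real.log n) * Real.exp (0.473328 * Real.log n)) := by ring
      _ ≤ Real.exp (0.001 * Real.log n) * (Real.exp (-0.27944 * Real.log n) *
          Real.exp (-0.27944 * Real.log n) * Real.exp (0.473328 * Real.log n)) := by gcongr
      _ = _ := by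
          rw [← Real.exp_add, ← Real.exp_add, ← Real.exp_add]; congr 1; ring
  have := cnt_ex s _ key
  refine (cnt_mono ?_).trans (this.trans ?_)
  · rintro σ ⟨hc, r, l, h2, h3, h4, h5, h6⟩
    refine ⟨(r, l), ?_, le_trans (by exact_mod_cast hc) (pc_le n), h6⟩
    simp only [hs, mem_filter, mem_product, mem_Icc]
    exact ⟨⟨⟨by omega, h3⟩, h4, by omega⟩, h2, h5⟩
  · calc _ ≤ Real.exp (0.004 * Real.log n) * (n.factorial * Real.exp (-0.084552 * Real.log n)) := by gcongr
      _ = n.factorial * Real.exp (-0.080552 * Real.log n) := by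
          rw [mul_left_comm, ← Real.exp_add]; congr 2; ring
      _ ≤ _ := by
          unfold eb
          gcongr
          linarith

end IG

namespace IG
open Finset Equiv

lemma pS_pos (n : ℕ) : 1 ≤ pS n := by
  apply Nat.le_floor
  have := Real.log_natCast_nonneg n
  simpa using Real.one_le_exp (by positivity : 0 ≤ 0.6 * Real.log n)

lemma card_pf {n : ℕ} (hn : 1 ≤ n) : (n.primeFactors.card : ℝ) ≤ 2 * (1 + Real.log n) := by
  have h1 : 2 ^ n.primeFactors.card ≤ n := by
    calc 2 ^ n.primeFactors.card ≤ ∏ p ∈ n.primeFactors, p := by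
          apply Finset.pow_card_le_prod
          intro p hp
          exact (Nat.prime_of_mem_primeFactors hp).two_le
      _ ≤ n := Nat.le_of_dvd hn (Nat.prod_primeFactors_dvd n)
  have h2 : Real.log ((2 : ℝ) ^ n.primeFactors.card) ≤ Real.log n := by
    apply Real.log_le_log (by positivity)
    exact_mod_cast h1
  rw [Real.log_pow] at h2
  have := Real.log_two_gt_d9
  nlinarith [(Nat.cast_nonneg n.primeFactors.card : (0 : ℝ) ≤ _)]

lemma logM_le (n : ℕ) : Real.log ((pQ n * pS n : ℕ) : ℝ) ≤ 0.681 * Real.log n + 1 := by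
  have h1 := pQ_pos n
  have h2 := pS_pos n
  have h3 : ((pQ n * pS n : ℕ) : ℝ) ≤ 2 * Real.exp (0.681 * Real.log n) := by
    push_cast
    calc _ ≤ 2 * Real.exp (0.081 * Real.log n) * Real.exp (0.6 * Real.log n) := by
          have := pQ_le n
          have := pS_le n
          gcongr
      _ = _ := by rw [mul_assoc, ← Real.exp_add]; congr 2; ring
  have h4 : (0 : ℝ) < ((pQ n * pS n : ℕ) : ℝ) := by
    have := Nat.mul_pos h1 h2
    exact_mod_cast this
  refine (Real.log_le_log h4 h3).trans ?_
  rw [Real.log_mul (by norm_num) (by positivity), Real.log_exp]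
  have := Real.log_two_lt_d9
  linarith

lemma bd_avoid' (A : Set ℕ) {n : ℕ} (hn : 1 ≤ n) (S : Finset ℕ) (hS : ∀ l ∈ S, l ∈ Icc 1 n ∧ l ∈ A) :
    cnt (fun σ : Perm (Fin n) => ∀ X ∈ cyc σ, X.card ∉ A) ≤
      n.factorial * (Real.exp 1 * Real.exp (- ∑ l ∈ S, (1 : ℝ) / l)) := by
  classical
  have hb := bd_avoid A hn
  rw [← cnt_eq] at hb
  refine hb.trans ?_
  refine mul_le_mul_of_nonneg_left ?_ (Nat.cast_nonneg _)
  refine mul_le_mul_of_nonneg_left ?_ (Real.exp_pos _).le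
  apply Real.exp_le_exp.2
  apply neg_le_neg
  apply Finset.sum_le_sum_of_subset_of_nonneg
  · intro l hl
    exact mem_filter.2 (hS l hl)
  · intro _ _ _
    positivity

open Filter in
lemma ev2 : ∀ᶠ n : ℕ in atTop, cnt (fun σ : Perm (Fin n) =>
    ∃ p ∈ n.primeFactors, ∀ X ∈ cyc σ, ¬ (pQ n * pS n ≤ X.card ∧ ¬ p ∣ X.card)) ≤
    n.factorial * eb n := by
  filter_upwards [ev_exp (ε := 0.01) (by norm_num) (2 * Real.exp 2) 1,
    eventually_ge_atTop 1] with n hn h1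
  have hL : 0 ≤ Real.log n := Real.log_natCast_nonneg n
  have hn0 : (0 : ℝ) < n := by exact_mod_cast h1
  rw [pow_one] at hn
  have key : ∀ p ∈ n.primeFactors, cnt (fun σ : Perm (Fin n) =>
      ∀ X ∈ cyc σ, ¬ (pQ n * pS n ≤ X.card ∧ ¬ p ∣ X.card)) ≤
      n.factorial * (Real.exp 2 * Real.exp (-0.1595 * Real.log n)) := by
    intro p hp
    have h2 := half_sum (p := p) (M := pQ n * pS n) (n := n) (Nat.prime_of_mem_primeFactors hp).two_le
    refine (bd_avoid' {l | pQ n * pS n ≤ l ∧ ¬ p ∣ l} h1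
      ((Icc 1 n).filter (fun l => pQ n * pS n ≤ l ∧ ¬ p ∣ l)) (fun l hl => mem_filter.1 hl)).trans ?_
    refine mul_le_mul_of_nonneg_left ?_ (Nat.cast_nonneg _)
    rw [← Real.exp_add, ← Real.exp_add]
    apply Real.exp_le_exp.2
    have h3 := logM_le n
    linarith
  refine (cnt_ex _ _ key).trans ?_
  calc _ ≤ (2 * (1 + Real.log n)) * (n.factorial * (Real.exp 2 * Real.exp (-0.1595 * Real.log n))) := by
        have := card_pf h1
        gcongr
    _ = n.factorial * ((2 * Real.exp 2 * (1 + Real.log n)) * Real.exp (-0.1595 * Real.log n)) := by ring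
    _ ≤ n.factorial * (Real.exp (0.01 * Real.log n) * Real.exp (-0.1595 * Real.log n)) := by gcongr
    _ ≤ _ := by
        unfold eb
        rw [← Real.exp_add]
        gcongr
        linarith

open Filter in
lemma ev3 : ∀ᶠ n : ℕ in atTop, cnt (fun σ : Perm (Fin n) =>
    ∃ X ∈ cyc σ, ∃ Y ∈ cyc σ, X ≠ Y ∧ ∃ q, pQ n ≤ q ∧ q ∣ X.card ∧ q ∣ Y.card) ≤
    n.factorial * eb n := by
  filter_upwards [ev_exp (ε := 0.001) (by norm_num) 2 2] with n hn
  have hL : 0 ≤ Real.log n := Real.log_natCast_nonneg n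
  classical
  have hb := bd_B3 (n := n) (pQ_pos n)
  rw [← cnt_eq] at hb
  refine hb.trans ?_
  gcongr
  have h2 := le_pQ n
  calc _ ≤ 2 / Real.exp (0.081 * Real.log n) * (1 + Real.log n) ^ 2 := by gcongr
    _ = (2 * (1 + Real.log n) ^ 2) / Real.exp (0.081 * Real.log n) := by ring
    _ ≤ Real.exp (0.001 * Real.log n) / Real.exp (0.081 * Real.log n) := by gcongr
    _ = _ := by rw [← Real.exp_sub]; unfold eb; congr 1; ring

open Filter in
lemma ev4 : ∀ᶠ n : ℕ in atTop, cnt (fun σ : Perm (Fin n) =>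
    ∃ s l : ℕ, s ∣ n ∧ pS n < s ∧ pR n < n / s ∧ l ≤ n / s ∧ n / s ≤ l * pc n ∧
      ∃ X : Finset (Fin n), X.card = l * s ∧ Inv σ X ∧ ∀ Y ∈ cyc σ, Y ⊆ X → l ∣ Y.card) ≤
    n.factorial * eb n := by
  filter_upwards [ev_exp (ε := 0.002) (by norm_num) 1.44 2,
    ev_exp (ε := 0.1) (by norm_num) (1.44 * Real.exp 1) 1,
    eventually_ge_atTop 1] with n hn hn' h1
  have hL : 0 ≤ Real.log n := Real.log_natCast_nonneg n
  have hn0 : (0 : ℝ) < n := by exact_mod_cast h1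
  rw [pow_one] at hn'
  have hnexp : Real.exp (Real.log n) = n := Real.exp_log hn0
  set N : ℕ := ⌊Real.exp (0.4 * Real.log n)⌋₊ with hN
  have hNle : (N : ℝ) ≤ Real.exp (0.4 * Real.log n) := Nat.floor_le (by positivity)
  set s : Finset (ℕ × ℕ) := (Icc 1 N ×ˢ Icc 1 N).filter
    (fun q => q.1 ∣ n ∧ pR n < q.1 ∧ q.2 ≤ q.1 ∧ q.1 ≤ q.2 * pc n) with hs
  have hcard : (s.card : ℝ) ≤ Real.exp (0.8 * Real.log n) := by
    have h2 : s.card ≤ N * N := by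
      refine (card_filter_le _ _).trans ?_
      simp
    calc (s.card : ℝ) ≤ (N : ℝ) * N := by exact_mod_cast h2
      _ ≤ Real.exp (0.4 * Real.log n) * Real.exp (0.4 * Real.log n) := by
          gcongr
      _ = _ := by rw [← Real.exp_add]; congr 1; ring
  have key : ∀ q ∈ s, cnt (fun σ : Perm (Fin n) => 
      ∃ X : Finset (Fin n), X.card = q.2 * (n / q.1) ∧ Inv σ X ∧ ∀ Y ∈ cyc σ, Y ⊆ X → q.2 ∣ Y.card) ≤
      n.factorial * (1.44 * Real.log n / n * Real.exp 1) := by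
    rintro ⟨r, l⟩ hq
    simp only [hs, mem_filter, mem_product, mem_Icc] at hq
    obtain ⟨⟨⟨hr1, hrR⟩, hl1, -⟩, ⟨m, hm⟩, hRr, hlr, hrc⟩ := hq
    simp only
    have hmr : n / r = m := by rw [hm]; exact Nat.mul_div_cancel_left _ hr1
    rw [hmr]
    have hm0 : 0 < m := Nat.pos_of_ne_zero (by rintro rfl; omega)
    have hkn : l * m ≤ n := by rw [hm]; exact Nat.mul_le_mul_right m hlr
    have hk1 : 1 ≤ l * m := Nat.mul_pos hl1 hm0
    have hb := bd_B4 (l := l) (n := n) (k := l * m) hl1 hk1 hkn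
    classical
    rw [← cnt_eq] at hb
    refine hb.trans ?_
    have hk0 : (0 : ℝ) < ((l * m : ℕ) : ℝ) := by exact_mod_cast hk1
    have hc := pc_le n
    have hc0 : (0 : ℝ) < pc n := by
      have : 0 < pc n := Nat.pos_of_ne_zero (by intro h; rw [h] at hrc; omega)
      exact_mod_cast this
    have hnk : (n : ℝ) ≤ pc n * ((l * m : ℕ) : ℝ) := by
      have : n ≤ pc n * (l * m) := by
        calc n = r * m := hm
          _ ≤ (l * pc n) * m := Nat.mul_le_mul_right m hrc
          _ = _ := by ring
      exact_mod_cast this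
    have hl0 : (0 : ℝ) < l := by exact_mod_cast hl1
    refine mul_le_mul_of_nonneg_left ?_ (Nat.cast_nonneg _)
    refine mul_le_mul ?_ (Real.exp_le_exp.2 ?_) (Real.exp_pos _).le (by positivity)
    · rw [div_le_div_iff₀ hk0 hn0]
      nlinarith
    · rw [div_le_one hl0]
      have h3 : Real.log ((l * m : ℕ) : ℝ) ≤ Real.log n := Real.log_le_log hk0 (by exact_mod_cast hkn)
      have h4 : Real.exp (0.002 * Real.log n) < r := (Nat.floor_lt (by positivity)).1 hRr
      have h5 : (r : ℝ) ≤ l * pc n := by exact_mod_cast hrc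
      have h6 : (1 + Real.log n) * pc n ≤ l * pc n := by
        refine le_trans ?_ (hn.trans (h4.le.trans h5))
        nlinarith
      have := le_of_mul_le_mul_right h6 hc0
      linarith
  refine (cnt_mono ?_).trans ((cnt_ex s _ key).trans ?_)
  · rintro σ ⟨t, l, ⟨r, hr⟩, h2, h3, h4, h5, h6⟩
    have ht0 : 0 < t := by omega
    have hnt : n / t = r := by rw [hr]; exact Nat.mul_div_cancel_left _ ht0
    rw [hnt] at h3 h4 h5
    have hr0 : 0 < r := by omega
    have hl0 : 0 < l := Nat.pos_of_ne_zero (by rintro rfl; omega)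
    have hnr : n / r = t := by rw [hr]; exact Nat.mul_div_cancel _ hr0
    have hrN : r ≤ N := by
      apply Nat.le_floor
      have h7 : Real.exp (0.6 * Real.log n) < t := (Nat.floor_lt (by positivity)).1 h2
      have h8 : Real.exp (0.6 * Real.log n) * r ≤ Real.exp (0.6 * Real.log n) * Real.exp (0.4 * Real.log n) := by
        have h9 : (n : ℝ) = t * r := by exact_mod_cast hr
        have h10 : Real.exp (0.6 * Real.log n) * Real.exp (0.4 * Real.log n) = n := by
          rw [← Real.exp_add, ← hnexp, Real.log_exp]; congr 1; ring
        rw [h10]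
        calc _ ≤ (t : ℝ) * r := by gcongr
          _ = n := h9.symm
      exact le_of_mul_le_mul_left h8 (Real.exp_pos _)
    refine ⟨(r, l), ?_, ?_⟩
    · simp only [hs, mem_filter, mem_product, mem_Icc]
      exact ⟨⟨⟨hr0, hrN⟩, hl0, by omega⟩, ⟨t, by rw [hr, mul_comm]⟩, h3, h4, h5⟩
    · simp only [hnr]
      exact h6
  · calc _ ≤ Real.exp (0.8 * Real.log n) * (n.factorial * (1.44 * Real.log n / n * Real.exp 1)) := by gcongr
      _ = n.factorial * ((1.44 * Real.exp 1 * Real.log n) * (Real.exp (0.8 * Real.log n) / n)) := by ring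
      _ ≤ n.factorial * (Real.exp (0.1 * Real.log n) * (Real.exp (0.8 * Real.log n) / Real.exp (Real.log n))) := by
          rw [hnexp]
          gcongr
          refine le_trans ?_ hn'
          gcongr
          linarith
      _ ≤ _ := by
          rw [← Real.exp_sub, ← Real.exp_add]
          unfold eb
          gcongr
          linarith

end IG

namespace IG
open Finset Equiv

lemma sum_union_le' (s t : Finset ℕ) :
    ∑ l ∈ s ∪ t, (1 : ℝ) / l ≤ ∑ l ∈ s, (1 : ℝ) / l + ∑ l ∈ t, (1 : ℝ) / l := by
  rw [← Finset.sum_union_inter]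
  exact le_add_of_nonneg_right (Finset.sum_nonneg (fun _ _ => by positivity))

open Classical in
lemma sumA {n : ℕ} (hn : 25 ≤ n) :
    0.0975 * Real.log n - 56 ≤ ∑ c ∈ (Icc 1 n).filter (fun c => 16 * c ^ 2 < n ∧
      ∃ p e : ℕ, p.Prime ∧ pQ n ≤ p ^ e ∧ p ^ e ∣ c), (1 : ℝ) / c := by
  set L := Real.log n with hLdef
  have hn0 : (0 : ℝ) < n := by exact_mod_cast (by omega : 0 < n)
  have hL1 : 1 ≤ L := by
    rw [hLdef, Real.le_log_iff_exp_le hn0]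
    have h3 := Real.exp_one_lt_d9
    have : (25 : ℝ) ≤ n := by exact_mod_cast hn
    linarith
  set A := (Icc 1 n).filter (fun c => 16 * c ^ 2 < n ∧
      ∃ p e : ℕ, p.Prime ∧ pQ n ≤ p ^ e ∧ p ^ e ∣ c) with hA
  set m := Nat.sqrt n / 5 with hm
  have hsq : Nat.sqrt n * Nat.sqrt n ≤ n := Nat.sqrt_le n
  have hsq5 : 5 ≤ Nat.sqrt n := Nat.le_sqrt.2 (by omega)
  have hm1 : 1 ≤ m := by omega
  have h5m : 5 * m ≤ Nat.sqrt n := by omega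
  have h25 : 25 * (m * m) ≤ n := by nlinarith
  have hlogm : Real.log m ≤ L / 2 := by
    have : Real.log ((m : ℝ) ^ 2) ≤ L := by
      apply Real.log_le_log
      · have : (0 : ℝ) < m := by exact_mod_cast hm1
        positivity
      · exact_mod_cast (by nlinarith : m ^ 2 ≤ n)
    rw [Real.log_pow] at this
    push_cast at this
    linarith
  have hlogm0 : 0 ≤ Real.log m := Real.log_natCast_nonneg m
  have hlogm1 : L / 2 - 2 ≤ Real.log (m + 1) := by
    have h1 : n < (Nat.sqrt n + 1) * (Nat.sqrt n + 1) := Nat.lt_succ_sqrt n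
    have h2 : Nat.sqrt n + 1 ≤ 5 * (m + 1) := by omega
    have h3 : n ≤ 25 * (m + 1) ^ 2 := by nlinarith
    have h4 : L ≤ Real.log (25 * ((m : ℝ) + 1) ^ 2) := by
      apply Real.log_le_log hn0
      exact_mod_cast h3
    rw [Real.log_mul (by norm_num) (by positivity), Real.log_pow] at h4
    have h5 : Real.log 25 ≤ 4 := by
      rw [Real.log_le_iff_le_exp (by norm_num)]
      refine le_trans ?_ (Real.sum_le_exp_of_nonneg (by norm_num) 5)
      norm_num [Finset.sum_range_succ, Nat.factorial]
    push_cast at h4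
    linarith
  set D := ⌊Real.exp (0.2 * L)⌋₊ with hD
  have hD1 : (1 : ℕ) ≤ D := Nat.le_floor (by simpa using Real.one_le_exp (by positivity : 0 ≤ 0.2 * L))
  have hlogD : Real.log D ≤ 0.2 * L := by
    rw [← Real.log_exp (0.2 * L)]
    exact Real.log_le_log (by exact_mod_cast hD1) (Nat.floor_le (by positivity))
  have hlogQ : Real.log (pQ n) ≤ 0.081 * L + 1 := by
    refine (Real.log_le_log (by exact_mod_cast pQ_pos n) (pQ_le n)).trans ?_
    rw [Real.log_mul (by norm_num) (by positivity), Real.log_exp]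
    have := Real.log_two_lt_d9
    linarith
  set B := (Icc 1 m).filter (fun c => ∀ d, d ∣ c → IsPrimePow d → d < pQ n) with hB
  have hbs := bad_sum (Q := pQ n) (m := m) (pQ_pos n) hm1
  have hBsum : ∑ c ∈ B.filter (D < ·), (1 : ℝ) / c ≤ 0.2025 * L + 53 := by
    have h1 : 0.2 * L * ∑ c ∈ B.filter (D < ·), (1 : ℝ) / c ≤ ∑ c ∈ B, Real.log c / c := by
      rw [Finset.mul_sum]
      calc _ ≤ ∑ c ∈ B.filter (D < ·), Real.log c / c := by
            apply Finset.sum_le_sum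
            intro c hc
            rw [mem_filter] at hc
            have h2 : Real.exp (0.2 * L) < c := (Nat.floor_lt (by positivity)).1 hc.2
            have hc0 : (0 : ℝ) < c := (Real.exp_pos _).trans h2
            have h3 : 0.2 * L ≤ Real.log c := by
              rw [Real.le_log_iff_exp_le hc0]; exact h2.le
            rw [mul_one_div]
            gcongr
        _ ≤ _ := by
            apply Finset.sum_le_sum_of_subset_of_nonneg (filter_subset _ _)
            intro c _ _
            exact div_nonneg (Real.log_natCast_nonneg c) (by positivity)
    have hQ0 : 0 ≤ Real.log (pQ n) := Real.log_natCast_nonneg _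
    have h2 : (Real.log (pQ n) + 6) * (1 + Real.log m) ≤ (0.081 * L + 7) * (1 + L / 2) := by
      gcongr ?_ * ?_
      · linarith
      · linarith
    have h3 : 0.2 * L * ∑ c ∈ B.filter (D < ·), (1 : ℝ) / c ≤ 0.2 * L * (0.2025 * L + 53) := by
      refine (h1.trans (hbs.trans h2)).trans ?_
      nlinarith
    exact le_of_mul_le_mul_left h3 (by positivity)
  have hsub : Icc 1 m ⊆ Icc 1 D ∪ (A ∪ B.filter (D < ·)) := by
    intro c hc
    rw [mem_Icc] at hc
    by_cases h1 : D < c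
    · by_cases h2 : c ∈ B
      · exact mem_union_right _ (mem_union_right _ (mem_filter.2 ⟨h2, h1⟩))
      · apply mem_union_right
        apply mem_union_left
        rw [hB, mem_filter] at h2
        push Not at h2
        obtain ⟨d, hd, hpp, hQd⟩ := h2 (mem_Icc.2 hc)
        obtain ⟨p, e, hp, -, rfl⟩ := hpp
        rw [hA, mem_filter, mem_Icc]
        have h3 : c * c ≤ m * m := Nat.mul_le_mul hc.2 hc.2
        refine ⟨⟨hc.1, by nlinarith⟩, by nlinarith, p, e, hp.nat_prime, hQd, hd⟩
    · exact mem_union_left _ (mem_Icc.2 ⟨hc.1, by omega⟩)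
  have h1 := (Finset.sum_le_sum_of_subset_of_nonneg hsub (f := fun c : ℕ => (1 : ℝ) / c)
    (fun _ _ _ => by positivity)).trans (sum_union_le' _ _)
  have h2 := sum_union_le' A (B.filter (D < ·))
  have h3 := le_harm m
  have h4 := harm_le D
  linarith

open Filter in
lemma ev5 : ∀ᶠ n : ℕ in atTop, cnt (fun σ : Perm (Fin n) =>
    ∀ X ∈ cyc σ, ¬ (16 * X.card ^ 2 < n ∧ ∃ p e : ℕ, p.Prime ∧ pQ n ≤ p ^ e ∧ p ^ e ∣ X.card)) ≤
    n.factorial * eb n := by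
  filter_upwards [ev_exp (ε := 0.01) (by norm_num) (Real.exp 57) 0, eventually_ge_atTop 25] with n hn h1
  have hL : 0 ≤ Real.log n := Real.log_natCast_nonneg n
  rw [pow_zero, mul_one] at hn
  classical
  have h2 := sumA h1
  generalize hSd : (Icc 1 n).filter (fun c => 16 * c ^ 2 < n ∧
      ∃ p e : ℕ, p.Prime ∧ pQ n ≤ p ^ e ∧ p ^ e ∣ c) = S at h2
  refine (bd_avoid' {c | 16 * c ^ 2 < n ∧ ∃ p e : ℕ, p.Prime ∧ pQ n ≤ p ^ e ∧ p ^ e ∣ c} (n := n) (by omega)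
    S (fun l hl => mem_filter.1 (hSd ▸ hl))).trans ?_
  refine mul_le_mul_of_nonneg_left ?_ (Nat.cast_nonneg _)
  rw [Real.exp_le_exp] at hn
  unfold eb
  rw [← Real.exp_add]
  apply Real.exp_le_exp.2
  linarith

end IG

namespace IG
open Finset Equiv

lemma not_good {n : ℕ} (σ : Perm (Fin n)) (h : ¬ Good σ (pc n) (pR n) (pQ n * pS n) (pQ n) (pS n)) (hn : 1 ≤ n) :
    (¬ (cyc σ).card ≤ pc n) ∨
    ((cyc σ).card ≤ pc n ∧
    ∃ r l : ℕ, r ∣ n ∧ r ≤ pR n ∧ 1 ≤ l ∧ l < r ∧ ∃ X : Finset (Fin n), X.card = l * (n / r) ∧ Inv σ X) ∨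
    (∃ p ∈ n.primeFactors, ∀ X ∈ cyc σ, ¬ (pQ n * pS n ≤ X.card ∧ ¬ p ∣ X.card)) ∨
    (∃ X ∈ cyc σ, ∃ Y ∈ cyc σ, X ≠ Y ∧ ∃ q, pQ n ≤ q ∧ q ∣ X.card ∧ q ∣ Y.card) ∨
    (∃ s l : ℕ, s ∣ n ∧ pS n < s ∧ pR n < n / s ∧ l ≤ n / s ∧ n / s ≤ l * pc n ∧
      ∃ X : Finset (Fin n), X.card = l * s ∧ Inv σ X ∧ ∀ Y ∈ cyc σ, Y ⊆ X → l ∣ Y.card) ∨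
    (∀ X ∈ cyc σ, ¬ (16 * X.card ^ 2 < n ∧ ∃ p e : ℕ, p.Prime ∧ pQ n ≤ p ^ e ∧ p ^ e ∣ X.card)) := by
  by_contra hc
  simp only [not_or] at hc
  obtain ⟨h0, h1, h2, h3, h4, h5⟩ := hc
  rw [not_not] at h0
  apply h
  refine ⟨h0, ?_, ?_, ?_, ?_, ?_⟩
  · intro r hr hrn hrR l hl hlr hX
    rw [Fintype.card_fin] at hrn hX
    exact h1 ⟨h0, r, l, hrn, hrR, hl, hlr, hX⟩
  · intro p hp hpn
    rw [Fintype.card_fin] at hpn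
    by_contra hX
    exact h2 ⟨p, Nat.mem_primeFactors.2 ⟨hp, hpn, by omega⟩, fun X hXm hX2 => hX ⟨X, hXm, hX2⟩⟩
  · intro X hX Y hY hXY q hq hqX hqY
    exact h3 ⟨X, hX, Y, hY, hXY, q, hq, hqX, hqY⟩
  · intro s hs hS hR l hl hlc hX
    rw [Fintype.card_fin] at hs hR hl hlc
    exact h4 ⟨s, l, hs, hS, hR, hl, hlc, hX⟩
  · by_contra hX
    apply h5
    intro X hXm hX2
    apply hX
    rw [Fintype.card_fin]
    exact ⟨X, hXm, hX2⟩

open Filter in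
lemma ev_good : ∀ᶠ n : ℕ in atTop, cnt (fun σ : Perm (Fin n) =>
    ¬ Good σ (pc n) (pR n) (pQ n * pS n) (pQ n) (pS n)) ≤ n.factorial * (6 * eb n) := by
  filter_upwards [ev0, ev1, ev2, ev3, ev4, ev5, eventually_ge_atTop 1] with n h0 h1 h2 h3 h4 h5 hn
  refine (cnt_mono (fun σ hσ => not_good σ hσ hn)).trans ?_
  refine (cnt_or _ _).trans ?_
  have a1 := cnt_or (fun σ : Perm (Fin n) => (cyc σ).card ≤ pc n ∧
    ∃ r l : ℕ, r ∣ n ∧ r ≤ pR n ∧ 1 ≤ l ∧ l < r ∧ ∃ X : Finset (Fin n), X.card = l * (n / r) ∧ Inv σ X) _ |>.trans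
    (add_le_add h1 ((cnt_or _ _).trans (add_le_add h2 ((cnt_or _ _).trans (add_le_add h3 ((cnt_or _ _).trans (add_le_add h4 h5)))))))
  refine (add_le_add h0 a1).trans (le_of_eq ?_)
  ring

open Filter in
lemma ev_par : ∀ᶠ n : ℕ in atTop, 2 ≤ pR n ∧ 2 ≤ pQ n := by
  filter_upwards [ev_exp (ε := 0.002) (by norm_num) 2 0] with n hn
  have hL : 0 ≤ Real.log n := Real.log_natCast_nonneg n
  rw [pow_zero, mul_one] at hn
  refine ⟨Nat.le_floor (by exact_mod_cast hn), ?_⟩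
  have h1 := le_pQ n
  have h2 : Real.exp (0.002 * Real.log n) ≤ Real.exp (0.081 * Real.log n) :=
    Real.exp_le_exp.2 (by linarith)
  exact_mod_cast hn.trans (h2.trans h1)

lemma eb_eq {n : ℕ} (hn : 1 ≤ n) : eb n = (n : ℝ) ^ (-(2 : ℝ) / 25) := by
  rw [Real.rpow_def_of_pos (by exact_mod_cast hn)]
  unfold eb
  congr 1
  ring

end IG

theorem stmt_1 :
    ∃ C : ℝ, 0 < C ∧
      ∀ n : ℕ, 5 ≤ n →
        ∃ x : alternatingGroup (Fin n),
          (Odd n → (x : Equiv.Perm (Fin n)).IsCycle ∧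
            (x : Equiv.Perm (Fin n)).support.card = n) ∧
          (Even n → ∃ c d : Equiv.Perm (Fin n), c.IsCycle ∧ d.IsCycle ∧
            c.support.card = n / 2 ∧ d.support.card = n / 2 ∧ c.Disjoint d ∧
            (x : Equiv.Perm (Fin n)) = c * d) ∧
          (Nat.card {y : alternatingGroup (Fin n) // InvGen x y} : ℝ) ≥
            (1 - C * (n : ℝ) ^ (-(2 : ℝ) / 25)) *
              Nat.card (alternatingGroup (Fin n)) := by
  have hev := (IG.ev_good.and IG.ev_par)
  rw [Filter.eventually_atTop] at hev
  obtain ⟨N, hN⟩ := hev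
  refine ⟨12 + N, by positivity, ?_⟩
  intro n hn
  obtain ⟨x, hx1, hx2, hx3⟩ := IG.exists_x hn
  refine ⟨x, hx1, hx2, ?_⟩
  have hn0 : (0 : ℝ) < n := by exact_mod_cast (by omega : 0 < n)
  have hpow : 0 < (n : ℝ) ^ (-(2 : ℝ) / 25) := Real.rpow_pos_of_pos hn0 _
  by_cases hNn : N ≤ n
  · obtain ⟨hg, hR, hQ⟩ := hN n hNn
    have h1 := IG.final_count hn hx3 le_rfl hR hQ (δ := 6 * IG.eb n) (by rw [← IG.cnt_eq]; exact hg) (InvGen x) (fun y hy => hy)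
    refine ge_trans h1 ?_
    rw [IG.eb_eq (by omega)]
    apply mul_le_mul_of_nonneg_right _ (Nat.cast_nonneg _)
    have : (0 : ℝ) ≤ N * (n : ℝ) ^ (-(2 : ℝ) / 25) := by positivity
    linarith
  · have h2 : (1 : ℝ) ≤ (12 + N) * (n : ℝ) ^ (-(2 : ℝ) / 25) := by
      have h3 : (n : ℝ) ≤ 12 + N := by
        have : (n : ℝ) ≤ N := by exact_mod_cast (by omega : n ≤ N)
        linarith
      calc (1 : ℝ) ≤ (n : ℝ) ^ ((1 : ℝ) + -(2 : ℝ) / 25) :=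
            Real.one_le_rpow (by exact_mod_cast (by omega : 1 ≤ n)) (by norm_num)
        _ = n * (n : ℝ) ^ (-(2 : ℝ) / 25) := by rw [Real.rpow_add hn0, Real.rpow_one]
        _ ≤ _ := by gcongr
    have h4 : (1 - (12 + N) * (n : ℝ) ^ (-(2 : ℝ) / 25)) * (Nat.card (alternatingGroup (Fin n)) : ℝ) ≤ 0 :=
      mul_nonpos_of_nonpos_of_nonneg (by linarith) (Nat.cast_nonneg _)
    exact ge_iff_le.2 (h4.trans (Nat.cast_nonneg _))
end

section
/- There exists a constant C > 0 such that for every finite field F, writing q = |F|, d = gcd(2, q−1) and G = PSL₂(F), there exist elements x₁, x₂ ∈ G with x₁ of order (q−1)/d and x₂ of order (q+1)/d such that the number of y ∈ G for which {x₁, y} invariably generates G or {x₂, y} invariably generates G is at least (1 − C/q) · |G|. -/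
/-- The projective special linear group `PSL₂(F) = SL₂(F) / Z(SL₂(F))`. -/
abbrev PSL2 (F : Type*) [Field F] :=
  Matrix.SpecialLinearGroup (Fin 2) F ⧸
    Subgroup.center (Matrix.SpecialLinearGroup (Fin 2) F)

local notation "SL" F => Matrix.SpecialLinearGroup (Fin 2) F

/-- commutator determinant -/
def cI {F : Type*} [Field F] (g t : Matrix (Fin 2) (Fin 2) F) : F := (g * t - t * g).det

lemma cI_swap {F : Type*} [Field F] (g t : Matrix (Fin 2) (Fin 2) F) : cI g t = cI t g := by
  simp only [cI, Matrix.det_fin_two, Matrix.sub_apply, Matrix.mul_apply, Fin.sum_univ_two]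
  ring

lemma cI_conj {F : Type*} [Field F] (g t : Matrix (Fin 2) (Fin 2) F) :
    cI (g.adjugate * t * g) t = cI g t * ((4 * t.det - t.trace ^ 2) * g.det - cI g t) := by
  simp only [cI, Matrix.det_fin_two, Matrix.trace_fin_two, Matrix.adjugate_fin_two,
    Matrix.sub_apply, Matrix.mul_apply, Fin.sum_univ_two, Matrix.of_apply, Matrix.cons_val', Matrix.cons_val_zero, Matrix.cons_val_one,
    Matrix.cons_val_fin_one]
  ring

lemma cI_fricke {F : Type*} [Field F] (g t : Matrix (Fin 2) (Fin 2) F) (hg : g.det = 1) (ht : t.det = 1) :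
    cI g t = 4 - g.trace ^ 2 - t.trace ^ 2 - (g * t).trace ^ 2 + g.trace * t.trace * (g * t).trace := by
  have : cI g t = 4 * g.det * t.det - g.trace ^ 2 * t.det - t.trace ^ 2 * g.det - (g * t).trace ^ 2
    + g.trace * t.trace * (g * t).trace := by
    simp only [cI, Matrix.det_fin_two, Matrix.trace_fin_two, 
      Matrix.sub_apply, Matrix.mul_apply, Fin.sum_univ_two]
    ring
  rw [this, hg, ht]; ring

lemma cI_lin {F : Type*} [Field F] (g t : Matrix (Fin 2) (Fin 2) F) (x z : F) :
    cI (x • 1 + z • g) t = z ^ 2 * cI g t := by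
  have : (x • 1 + z • g) * t - t * (x • 1 + z • g) = z • (g * t - t * g) := by
    simp only [add_mul, mul_add, smul_mul_assoc, mul_smul_comm, one_mul, mul_one, smul_sub]
    abel
  rw [cI, this, Matrix.det_smul]; simp [cI]

lemma cI_double {F : Type*} [Field F] (g t s u : Matrix (Fin 2) (Fin 2) F) (hs : s.det = 1) (hu : u.det = 1)
    (cs : s * t = t * s) (cu : u * t = t * u) : cI (s * g * u) t = cI g t := by
  have : (s * g * u) * t - t * (s * g * u) = s * (g * t - t * g) * u := by
    rw [mul_assoc _ u t, cu, ← mul_assoc t, ← mul_assoc t, ← cs]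
    noncomm_ring
  rw [cI, this, Matrix.det_mul, Matrix.det_mul, hs, hu]; simp [cI]

lemma cI_split {F : Type*} [Field F] (g t : Matrix (Fin 2) (Fin 2) F) (hg : g.det = 1) (ht : t.det = 1)
    (l : F) (hl : l ^ 2 - g.trace * l + 1 = 0) (hd : g.trace ^ 2 ≠ 4) (h : cI g t = 0) :
    ∃ m : F, m ^ 2 - t.trace * m + 1 = 0 := by
  rw [cI_fricke g t hg ht] at h
  generalize (g * t).trace = z at *
  generalize g.trace = x at *
  generalize t.trace = y at *
  have l0 : l ≠ 0 := by rintro rfl; simp at hl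
  have hx : x = l + l⁻¹ := by field_simp; linear_combination -hl
  have hk : l - l⁻¹ ≠ 0 := by
    intro h; apply hd; rw [hx]
    have : l * l⁻¹ = 1 := mul_inv_cancel₀ l0
    linear_combination (l - l⁻¹) * h + 4 * this
  refine ⟨(z - y * l⁻¹) / (l - l⁻¹), ?_⟩
  subst hx
  have hli : l * l⁻¹ = 1 := mul_inv_cancel₀ l0
  generalize l⁻¹ = k at *
  field_simp
  linear_combination -h + (-2 + y * y-2) * hli
def upU {F : Type*} [Field F] (x : F) : SL F := ⟨!![1, x; 0, 1], by simp⟩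
def loU {F : Type*} [Field F] (x : F) : SL F := ⟨!![1, 0; x, 1], by simp⟩
def dgU {F : Type*} [Field F] (x : Fˣ) : SL F := ⟨!![(x : F), 0; 0, ((x⁻¹ : Fˣ) : F)], by simp⟩

lemma upU_val {F : Type*} [Field F] (x : F) : (upU x).1 = !![1, x; 0, 1] := rfl
lemma loU_val {F : Type*} [Field F] (x : F) : (loU x).1 = !![1, 0; x, 1] := rfl
lemma dgU_val {F : Type*} [Field F] (x : Fˣ) : (dgU x).1 = !![(x : F), 0; 0, ((x⁻¹ : Fˣ) : F)] := rfl

lemma dgU_pow {F : Type*} [Field F] (x : Fˣ) (n : ℕ) : dgU x ^ n = dgU (x ^ n) := by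
  induction n with
  | zero => ext i j; fin_cases i <;> fin_cases j <;> simp [dgU_val]
  | succ k ih =>
    rw [pow_succ, ih]
    ext i j; fin_cases i <;> fin_cases j <;> simp [dgU_val, pow_succ, Matrix.mul_apply, Fin.sum_univ_two, mul_comm]

lemma top_of_unip {F : Type*} [Field F] (N : Subgroup (SL F)) (hu : ∀ x, upU x ∈ N) (hl : ∀ x, loU x ∈ N) :
    N = ⊤ := by
  have key : ∀ g : SL F, g.1 1 0 ≠ 0 → g ∈ N := by
    intro g hg
    have hd := g.2
    rw [Matrix.det_fin_two] at hd
    have : g = upU ((g.1 0 0 - 1) / g.1 1 0) * loU (g.1 1 0) * upU ((g.1 1 1 - 1) / g.1 1 0) := by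
      ext i j; fin_cases i <;> fin_cases j <;> simp [upU_val, loU_val, Matrix.mul_apply, Fin.sum_univ_two]
      · field_simp; ring
      · field_simp; linear_combination -hd
      · field_simp; ring
    rw [this]
    exact N.mul_mem (N.mul_mem (hu _) (hl _)) (hu _)
  rw [eq_top_iff]
  intro g _
  by_cases hg : g.1 1 0 = 0
  · have hd := g.2
    rw [Matrix.det_fin_two, hg] at hd
    have h2 : loU 1 * g ∈ N := by
      apply key
      have : g.1 0 0 ≠ 0 := by intro h; simp [h] at hd
      simpa [loU_val, Matrix.mul_apply, Fin.sum_univ_two, hg] using this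
    have := N.mul_mem (N.inv_mem (hl 1)) h2
    simpa using this
  · exact key g hg

lemma top_of_index {F : Type*} [Field F] [Fintype F] (H : Subgroup (SL F)) (K : ℕ) (hK : H.index ≤ K)
    (hq : 2 * K.factorial + 1 < Fintype.card F) : H = ⊤ := by
  classical
  have hpow : ∀ g : SL F, g ^ K.factorial ∈ H.normalCore := by
    intro g b
    have : b * g ^ K.factorial * b⁻¹ = (b * g * b⁻¹) ^ K.factorial := by simp
    rw [this]
    apply Subgroup.pow_mem_of_index_ne_zero_of_dvd
    · exact Subgroup.index_ne_zero_of_finite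
    · intro m h0 hm
      exact Nat.dvd_factorial h0 (hm.trans hK)
  obtain ⟨z, hz⟩ := IsCyclic.exists_generator (α := Fˣ)
  have hord : orderOf z = Fintype.card F - 1 := by
    rw [orderOf_eq_card_of_forall_mem_zpowers hz, Nat.card_eq_fintype_card, Fintype.card_units]
  set s := z ^ K.factorial with hs
  have hs2 : (s : F) ^ 2 - 1 ≠ 0 := by
    intro h
    have h1 : s ^ 2 = 1 := by
      ext; push_cast; linear_combination h
    rw [hs, ← pow_mul] at h1
    have := Nat.le_of_dvd (by positivity) (orderOf_dvd_of_pow_eq_one h1)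
    omega
  have hmem : dgU s ∈ H.normalCore := by rw [hs, ← dgU_pow]; exact hpow _
  have comm : ∀ u : SL F, dgU s * (u * (dgU s)⁻¹ * u⁻¹) ∈ H.normalCore := by
    intro u
    exact Subgroup.mul_mem _ hmem ((Subgroup.normalCore_normal H).conj_mem _ (Subgroup.inv_mem _ hmem) u)
  have hN : H.normalCore = ⊤ := by
    have s0 : (s : F) ≠ 0 := s.ne_zero
    apply top_of_unip
    · intro x
      have := comm (upU (x / ((s : F) ^ 2 - 1)))
      convert this using 1
      ext i j; fin_cases i <;> fin_cases j <;>
        simp [upU_val, dgU_val, Matrix.mul_apply, Fin.sum_univ_two, Matrix.SpecialLinearGroup.coe_inv, Matrix.adjugate_fin_two]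
      field_simp; ring
    · intro x
      have := comm (loU (x / (((s : F) ^ 2)⁻¹ - 1)))
      have h3 : ((s : F) ^ 2)⁻¹ - 1 ≠ 0 := by
        intro h
        apply hs2
        field_simp at h
        linear_combination -h
      convert this using 1
      ext i j; fin_cases i <;> fin_cases j <;>
        simp [loU_val, dgU_val, Matrix.mul_apply, Fin.sum_univ_two, Matrix.SpecialLinearGroup.coe_inv, Matrix.adjugate_fin_two]
      have h4 : 1 - (s : F) ^ 2 ≠ 0 := by intro h; apply hs2; linear_combination -h
      field_simp; ring
  exact top_le_iff.mp (hN ▸ Subgroup.normalCore_le H)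

lemma card_trace {F : Type*} [Field F] [Fintype F] [DecidableEq F] (T : F) :
    (Finset.univ.filter (fun g : SL F => g.1.trace = T)).card ≤ 3 * Fintype.card F ^ 2 := by
  set A := Finset.univ.filter (fun g : SL F => g.1.trace = T) with hA
  have hd : ∀ g : SL F, g.1 0 0 * g.1 1 1 - g.1 0 1 * g.1 1 0 = 1 := by
    intro g; have := g.2; rwa [Matrix.det_fin_two] at this
  have ht : ∀ g ∈ A, g.1 1 1 = T - g.1 0 0 := by
    intro g hg
    simp only [hA, Finset.mem_filter, Matrix.trace_fin_two] at hg
    linear_combination hg.2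
  have hF2 : (Finset.univ : Finset (F × F)).card = Fintype.card F ^ 2 := by
    simp [sq]
  have h1 : (A.filter (fun g => g.1 0 1 ≠ 0)).card ≤ Fintype.card F ^ 2 := by
    rw [← hF2]
    apply Finset.card_le_card_of_injOn (fun g => (g.1 0 0, g.1 0 1)) (by simp)
    intro g hg h hh e
    simp only [Finset.coe_filter, Set.mem_ofPred_eq, Prod.mk.injEq] at hg hh e
    have e1 := hd g; have e2 := hd h
    have e3 := ht g hg.1; have e4 := ht h hh.1
    rw [e3] at e1; rw [e4, ← e.1, ← e.2] at e2
    have : g.1 1 0 = h.1 1 0 := by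
      apply mul_left_cancel₀ hg.2; linear_combination e2 - e1
    ext i j; fin_cases i <;> fin_cases j
    · exact e.1
    · exact e.2
    · exact this
    · simp only [Fin.mk_one]; rw [e3, e4, e.1]
  have h2 : (A.filter (fun g => g.1 1 0 ≠ 0)).card ≤ Fintype.card F ^ 2 := by
    rw [← hF2]
    apply Finset.card_le_card_of_injOn (fun g => (g.1 0 0, g.1 1 0)) (by simp)
    intro g hg h hh e
    simp only [Finset.coe_filter, Set.mem_ofPred_eq, Prod.mk.injEq] at hg hh e
    have e1 := hd g; have e2 := hd h
    have e3 := ht g hg.1; have e4 := ht h hh.1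
    rw [e3] at e1; rw [e4, ← e.1, ← e.2] at e2
    have : g.1 0 1 = h.1 0 1 := by
      apply mul_right_cancel₀ hg.2; linear_combination e2 - e1
    ext i j; fin_cases i <;> fin_cases j
    · exact e.1
    · exact this
    · exact e.2
    · simp only [Fin.mk_one]; rw [e3, e4, e.1]
  have h3 : (A.filter (fun g => g.1 0 1 = 0 ∧ g.1 1 0 = 0)).card ≤ Fintype.card F ^ 2 := by
    rw [← hF2]
    apply Finset.card_le_card_of_injOn (fun g => (g.1 0 0, g.1 1 0)) (by simp)
    intro g hg h hh e
    simp only [Finset.coe_filter, Set.mem_ofPred_eq, Prod.mk.injEq] at hg hh e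
    have e3 := ht g hg.1; have e4 := ht h hh.1
    ext i j; fin_cases i <;> fin_cases j
    · exact e.1
    · exact hg.2.1.trans hh.2.1.symm
    · exact e.2
    · simp only [Fin.mk_one]; rw [e3, e4, e.1]
  have hU : A ⊆ A.filter (fun g => g.1 0 1 ≠ 0) ∪ A.filter (fun g => g.1 1 0 ≠ 0) ∪
      A.filter (fun g => g.1 0 1 = 0 ∧ g.1 1 0 = 0) := by
    intro g hg
    simp only [Finset.mem_union, Finset.mem_filter]
    tauto
  have := Finset.card_le_card hU
  have := Finset.card_union_le (A.filter (fun g => g.1 0 1 ≠ 0) ∪ A.filter (fun g => g.1 1 0 ≠ 0)) (A.filter (fun g => g.1 0 1 = 0 ∧ g.1 1 0 = 0))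
  have := Finset.card_union_le (A.filter (fun g => g.1 0 1 ≠ 0)) (A.filter (fun g => g.1 1 0 ≠ 0))
  omega

lemma card_SL_le {F : Type*} [Field F] [Fintype F] : Nat.card (SL F) ≤ 3 * Fintype.card F ^ 3 := by
  classical
  rw [Nat.card_eq_fintype_card, ← Finset.card_univ,
    Finset.card_eq_sum_card_fiberwise (f := fun g : SL F => g.1.trace) (t := Finset.univ) (by simp)]
  refine (Finset.sum_le_sum (fun T _ => card_trace T)).trans ?_
  simp; exact le_of_eq (by ring)

lemma le_card_SL {F : Type*} [Field F] [Fintype F] :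
    Fintype.card F ^ 2 * (Fintype.card F - 1) ≤ Nat.card (SL F) := by
  classical
  have : Nat.card (F × F × Fˣ) = Fintype.card F ^ 2 * (Fintype.card F - 1) := by
    simp [Fintype.card_units]; ring
  rw [← this]
  apply Nat.card_le_card_of_injective (fun p : F × F × Fˣ =>
    (⟨!![(p.2.2 : F), p.1; p.2.1, (1 + p.1 * p.2.1) * ((p.2.2⁻¹ : Fˣ) : F)], by
      rw [Matrix.det_fin_two]; simp
      have : (p.2.2 : F) ≠ 0 := p.2.2.ne_zero
      field_simp; ring⟩ : SL F))
  rintro ⟨a, b, c⟩ ⟨a', b', c'⟩ h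
  have h := congrArg Subtype.val h
  have h00 := congrFun (congrFun h 0) 0
  have h01 := congrFun (congrFun h 0) 1
  have h10 := congrFun (congrFun h 1) 0
  simp at h00 h01 h10
  simp [h01, h10, Units.ext h00]
lemma sq_mat {F : Type*} [Field F] (t : Matrix (Fin 2) (Fin 2) F) (ht : t.det = 1) :
    t * t = t.trace • t - 1 := by
  rw [Matrix.det_fin_two] at ht
  ext i j; fin_cases i <;> fin_cases j <;>
    simp [Matrix.mul_apply, Fin.sum_univ_two, Matrix.trace_fin_two]
  · linear_combination -ht
  · ring
  · ring
  · linear_combination -ht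

lemma pow_lin {F : Type*} [Field F] (t0 : SL F) (n : ℕ) :
    ∃ x z : F, (t0 ^ n).1 = x • 1 + z • t0.1 := by
  induction n with
  | zero => exact ⟨1, 0, by simp⟩
  | succ k ih =>
    obtain ⟨x, z, h⟩ := ih
    refine ⟨-z, x + z * t0.1.trace, ?_⟩
    rw [pow_succ, Matrix.SpecialLinearGroup.coe_mul, h, add_mul, smul_mul_assoc, smul_mul_assoc,
      sq_mat _ t0.2, one_mul]
    module

lemma mem_lin {F : Type*} [Field F] [Fintype F] (t0 t : SL F) (h : t ∈ Subgroup.zpowers t0) :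
    ∃ x z : F, t.1 = x • 1 + z • t0.1 := by
  classical
  rw [← mem_powers_iff_mem_zpowers] at h
  obtain ⟨n, rfl⟩ := h
  exact pow_lin t0 n

lemma det_lin {F : Type*} [Field F] (t0 : SL F) (x z : F) :
    (x • (1 : Matrix (Fin 2) (Fin 2) F) + z • t0.1).det = x ^ 2 + t0.1.trace * x * z + z ^ 2 := by
  have := t0.2
  rw [Matrix.det_fin_two] at this
  rw [Matrix.det_fin_two, Matrix.trace_fin_two]
  simp
  linear_combination z ^ 2 * this

lemma adj_lin {F : Type*} [Field F] (t0 : SL F) (x z : F) :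
    (x • (1 : Matrix (Fin 2) (Fin 2) F) + z • t0.1).adjugate = (x + t0.1.trace * z) • 1 + (-z) • t0.1 := by
  rw [Matrix.adjugate_fin_two, Matrix.trace_fin_two]
  ext i j; fin_cases i <;> fin_cases j <;> simp <;> ring

lemma four_lin {F : Type*} [Field F] (t0 t u : SL F) (x z x' z' : F) (ht : t.1 = x • 1 + z • t0.1)
    (hu : u.1 = x' • 1 + z' • t0.1) (h : z ^ 2 = z' ^ 2) : t = u ∨ t = -u ∨ t = u⁻¹ ∨ t = -u⁻¹ := by
  have dt := t.2
  have du := u.2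
  rw [ht, det_lin] at dt
  rw [hu, det_lin] at du
  have ui : (u⁻¹).1 = (x' + t0.1.trace * z') • 1 + (-z') • t0.1 := by
    rw [Matrix.SpecialLinearGroup.coe_inv, hu, adj_lin]
  rcases sq_eq_sq_iff_eq_or_eq_neg.mp h with rfl | rfl
  · have : (x - x') * (x + x' + t0.1.trace * z) = 0 := by linear_combination dt - du
    rcases mul_eq_zero.mp this with h | h
    · left; apply Subtype.ext; rw [ht, hu, sub_eq_zero.mp h]
    · right; right; right; apply Subtype.ext
      rw [Matrix.SpecialLinearGroup.coe_neg, ht, ui]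
      have : x = - x' - t0.1.trace * z := by linear_combination h
      rw [this]; module
  · have : (x + x') * (x - x' - t0.1.trace * z') = 0 := by linear_combination dt - du
    rcases mul_eq_zero.mp this with h | h
    · right; left; apply Subtype.ext
      rw [Matrix.SpecialLinearGroup.coe_neg, ht, hu]
      have : x = - x' := by linear_combination h
      rw [this]; module
    · right; right; left; apply Subtype.ext
      rw [ht, ui]
      have : x = x' + t0.1.trace * z' := by linear_combination h
      rw [this]

lemma conj_lin {F : Type*} [Field F] (t0 t y : SL F) (x z : F) (ht : t.1 = x • 1 + z • t0.1) :
    (y⁻¹ * t * y).1 = x • 1 + z • (y⁻¹ * t0 * y).1 := by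
  have h : (y⁻¹).1 * y.1 = 1 := by
    rw [← Matrix.SpecialLinearGroup.coe_mul]; simp
  simp only [Matrix.SpecialLinearGroup.coe_mul]
  rw [ht]
  simp only [add_mul, mul_add, smul_mul_assoc, mul_smul_comm, mul_one, h]

lemma cI_conj' {F : Type*} [Field F] (g t : SL F) :
    cI (g⁻¹ * t * g).1 t.1 = cI g.1 t.1 * ((4 - t.1.trace ^ 2) - cI g.1 t.1) := by
  have := cI_conj g.1 t.1
  rw [g.2, t.2] at this
  simp only [Matrix.SpecialLinearGroup.coe_mul, Matrix.SpecialLinearGroup.coe_inv]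
  rw [this]; ring

set_option maxHeartbeats 1000000 in
lemma count_main {F : Type*} [Field F] [Fintype F] (H : Subgroup (SL F)) (t0 y : SL F)
    (h0 : t0 ∈ H) (hy : y ∈ H) (hD : cI (y⁻¹ * t0 * y).1 t0.1 ≠ 0) :
    (orderOf t0 - 8) * orderOf t0 ^ 2 ≤ 8 * Nat.card H := by
  classical
  set D := cI (y⁻¹ * t0 * y).1 t0.1 with hDdef
  have hex : ∀ t : SL F, ∃ xz : F × F, t ∈ Subgroup.zpowers t0 → t.1 = xz.1 • 1 + xz.2 • t0.1 := by
    intro t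
    by_cases h : t ∈ Subgroup.zpowers t0
    · obtain ⟨x, z, e⟩ := mem_lin t0 t h
      exact ⟨(x, z), fun _ => e⟩
    · exact ⟨0, fun h' => absurd h' h⟩
  choose XZ hXZ using hex
  set T : Finset (SL F) := Finset.univ.filter (· ∈ Subgroup.zpowers t0) with hT
  have hTc : T.card = orderOf t0 := by
    rw [← Nat.card_zpowers, Nat.card_eq_fintype_card, Fintype.card_subtype]
  have mT : ∀ t, t ∈ T ↔ t ∈ Subgroup.zpowers t0 := by intro t; simp [hT]
  have hfour : ∀ k : F, (T.filter (fun t => (XZ t).2 ^ 2 = k)).card ≤ 4 := by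
    intro k
    rcases (T.filter (fun t => (XZ t).2 ^ 2 = k)).eq_empty_or_nonempty with h | ⟨u, hu⟩
    · rw [h]; simp
    · refine (Finset.card_le_card (t := {u, -u, u⁻¹, -u⁻¹}) ?_).trans Finset.card_le_four
      intro t ht
      rw [Finset.mem_filter, mT] at ht hu
      have := four_lin t0 t u _ _ _ _ (hXZ t ht.1) (hXZ u hu.1) (ht.2.trans hu.2.symm)
      simpa using this
  set E : F := 4 - t0.1.trace ^ 2 with hE
  have hIg : ∀ t ∈ T, cI (y⁻¹ * t * y).1 t0.1 = (XZ t).2 ^ 2 * D := by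
    intro t ht
    rw [conj_lin t0 t y _ _ (hXZ t ((mT t).1 ht)), cI_lin]
  set G := T.filter (fun t => (XZ t).2 ^ 2 ≠ 0 ∧ (XZ t).2 ^ 2 ≠ E / D) with hG
  have hGT : G ⊆ T := Finset.filter_subset _ _
  have hGc : orderOf t0 - 8 ≤ G.card := by
    have : T ⊆ G ∪ (T.filter (fun t => (XZ t).2 ^ 2 = 0) ∪ T.filter (fun t => (XZ t).2 ^ 2 = E / D)) := by
      intro t ht
      simp only [hG, Finset.mem_union, Finset.mem_filter]
      tauto
    have h1 := Finset.card_le_card this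
    have h2 := Finset.card_union_le G (T.filter (fun t => (XZ t).2 ^ 2 = 0) ∪ T.filter (fun t => (XZ t).2 ^ 2 = E / D))
    have h3 := Finset.card_union_le (T.filter (fun t => (XZ t).2 ^ 2 = 0)) (T.filter (fun t => (XZ t).2 ^ 2 = E / D))
    have h4 := hfour 0
    have h5 := hfour (E / D)
    omega
  have comm : ∀ t ∈ T, t.1 * t0.1 = t0.1 * t.1 := by
    intro t ht
    rw [hXZ t ((mT t).1 ht)]
    simp [add_mul, mul_add]
  have cI0 : ∀ t ∈ T, cI t.1 t0.1 = 0 := by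
    intro t ht
    rw [cI, comm t ht, sub_self]; simp
  let f : (SL F) × (SL F) × (SL F) → (SL F) := fun p => p.2.1 * (y⁻¹ * p.1 * y) * p.2.2
  set S := G ×ˢ T ×ˢ T with hS
  have hSc : S.card = G.card * (orderOf t0 * orderOf t0) := by
    rw [hS, Finset.card_product, Finset.card_product, hTc]
  have hfib : ∀ a ∈ S.image f, (S.filter (fun p => f p = a)).card ≤ 8 := by
    intro a _
    set P := S.filter (fun p => f p = a) with hP
    have mP : ∀ p ∈ P, p.1 ∈ G ∧ p.2.1 ∈ T ∧ p.2.2 ∈ T ∧ p.2.1 * (y⁻¹ * p.1 * y) * p.2.2 = a := by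
      intro p hp
      simp only [hP, hS, Finset.mem_filter, Finset.mem_product] at hp
      exact ⟨hp.1.1, hp.1.2.1, hp.1.2.2, hp.2⟩
    have h1 : (P.image Prod.fst).card ≤ 4 := by
      refine (Finset.card_le_card ?_).trans (hfour (cI a.1 t0.1 / D))
      intro t ht
      rw [Finset.mem_image] at ht
      obtain ⟨p, hp, rfl⟩ := ht
      obtain ⟨p1, p2, p3, p4⟩ := mP p hp
      rw [Finset.mem_filter]
      refine ⟨hGT p1, ?_⟩
      rw [eq_div_iff hD, ← hIg _ (hGT p1), ← p4]
      exact (cI_double (y⁻¹ * p.1 * y).1 t0.1 p.2.1.1 p.2.2.1 p.2.1.2 p.2.2.2 (comm _ p2) (comm _ p3)).symm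
    have h2 : P.card ≤ 2 * (P.image Prod.fst).card := by
      apply Finset.card_le_mul_card_image
      intro t ht
      rw [Finset.mem_image] at ht
      obtain ⟨⟨t', u, u'⟩, hp, h'⟩ := ht
      dsimp only at h'
      subst h'
      refine (Finset.card_le_card (t := {(t', u, u'), (t', -u, -u')}) ?_).trans Finset.card_le_two
      rintro ⟨t, s, s'⟩ hq
      rw [Finset.mem_filter] at hq
      obtain ⟨hq, rfl⟩ := hq
      obtain ⟨p1, p2, p3, p4⟩ := mP _ hp
      obtain ⟨q1, q2, q3, q4⟩ := mP _ hq
      dsimp only at *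
      set g := y⁻¹ * t * y with hg
      have hgI := hIg t (hGT p1)
      rw [hG, Finset.mem_filter] at p1
      have hK : cI (g⁻¹ * t0 * g).1 t0.1 ≠ 0 := by
        rw [cI_conj', hgI]
        refine mul_ne_zero (mul_ne_zero p1.2.1 hD) ?_
        intro h
        apply p1.2.2
        rw [eq_div_iff hD]; linear_combination -h
      have he : u⁻¹ * s ∈ T := by
        rw [mT] at *; exact Subgroup.mul_mem _ (Subgroup.inv_mem _ p2) q2
      have he' : u' * s'⁻¹ ∈ T := by
        rw [mT] at *; exact Subgroup.mul_mem _ p3 (Subgroup.inv_mem _ q3)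
      have hee : g⁻¹ * (u⁻¹ * s) * g = u' * s'⁻¹ := by
        have : s * g * s' = u * g * u' := q4.trans p4.symm
        have h3 : s * g = u * g * u' * s'⁻¹ := by rw [← this]; group
        rw [mul_assoc, mul_assoc u⁻¹, h3]; group
      have hz := cI0 _ he'
      rw [← hee, conj_lin t0 _ g _ _ (hXZ _ ((mT _).1 he)), cI_lin] at hz
      have hz2 : (XZ (u⁻¹ * s)).2 ^ 2 = 0 := (mul_eq_zero.mp hz).resolve_right hK
      have := four_lin t0 (u⁻¹ * s) 1 _ _ 1 0 (hXZ _ ((mT _).1 he)) (by simp) (by rw [hz2]; simp)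
      have hpm : u⁻¹ * s = 1 ∨ u⁻¹ * s = -1 := by
        rw [inv_one] at this
        rcases this with h | h | h | h
        · exact Or.inl h
        · exact Or.inr h
        · exact Or.inl h
        · exact Or.inr h
      simp only [Finset.mem_insert, Finset.mem_singleton, Prod.mk.injEq, true_and]
      rcases hpm with h | h
      · left
        rw [h] at hee
        have h1 : s = u := by rw [inv_mul_eq_one] at h; exact h.symm
        have h2 : u' = s' := by rw [← mul_inv_eq_one, ← hee]; group
        exact ⟨h1, h2.symm⟩
      · right
        rw [h] at hee
        have h1 : s = -u := by rw [inv_mul_eq_iff_eq_mul] at h; rw [h]; simp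
        have h2 : u' * s'⁻¹ = -1 := by rw [← hee]; simp
        have h3 : s' = -u' := by
          rw [mul_inv_eq_iff_eq_mul] at h2; rw [h2]; simp
        exact ⟨h1, h3⟩
    omega
  have hcard := Finset.card_le_mul_card_image S 8 hfib
  have himg : (S.image f).card ≤ Nat.card H := by
    rw [Nat.card_eq_fintype_card, Fintype.card_subtype]
    apply Finset.card_le_card
    intro a ha
    rw [Finset.mem_image] at ha
    obtain ⟨⟨t, s, s'⟩, hp, rfl⟩ := ha
    simp only [hS, Finset.mem_product] at hp
    have hTH : ∀ t ∈ T, t ∈ H := fun t ht => (Subgroup.zpowers_le.mpr h0) ((mT t).1 ht)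
    simp only [Finset.mem_filter, Finset.mem_univ, true_and, f]
    exact H.mul_mem (H.mul_mem (hTH _ hp.2.1) (H.mul_mem (H.mul_mem (H.inv_mem hy) (hTH _ (hGT hp.1))) hy)) (hTH _ hp.2.2)
  calc _ ≤ G.card * orderOf t0 ^ 2 := Nat.mul_le_mul_right _ hGc
    _ = S.card := by rw [hSc]; ring
    _ ≤ _ := hcard.trans (Nat.mul_le_mul_left _ himg)

lemma gen_main {F : Type*} [Field F] [Fintype F] (H : Subgroup (SL F)) (t0 y : SL F)
    (h0 : t0 ∈ H) (hy : y ∈ H) (hI : cI y.1 t0.1 ≠ 0) (h1 : y.1.trace ≠ 0) (h2 : y.1.trace ^ 2 ≠ 1)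
    (hq : Fintype.card F ≤ orderOf t0 + 1) (hbig : 2 * Nat.factorial 48 + 100 < Fintype.card F) : H = ⊤ := by
  have hc : (orderOf t0 - 8) * orderOf t0 ^ 2 ≤ 8 * Nat.card H := by
    by_cases hE : cI y.1 t0.1 = 4 - t0.1.trace ^ 2
    · apply count_main H t0 (y ^ 2) h0 (H.pow_mem hy 2)
      rw [cI_conj']
      have : cI (y ^ 2).1 t0.1 = y.1.trace ^ 2 * cI y.1 t0.1 := by
        have : (y ^ 2).1 = (-1 : F) • 1 + y.1.trace • y.1 := by
          rw [sq, Matrix.SpecialLinearGroup.coe_mul, sq_mat _ y.2]; module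
        rw [this, cI_lin]
      rw [this, ← hE]
      refine mul_ne_zero (mul_ne_zero (pow_ne_zero 2 h1) hI) ?_
      rw [show cI y.1 t0.1 - y.1.trace ^ 2 * cI y.1 t0.1 = (1 - y.1.trace ^ 2) * cI y.1 t0.1 by ring]
      exact mul_ne_zero (sub_ne_zero.mpr h2.symm) hI
    · apply count_main H t0 y h0 hy
      rw [cI_conj']
      exact mul_ne_zero hI (sub_ne_zero.mpr (Ne.symm hE))
  apply top_of_index H 48
  · by_contra hcon
    have hcon : 49 ≤ H.index := by omega
    have e1 := H.card_mul_index
    have e2 := card_SL_le (F := F)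
    have e3 : Nat.card H * 49 ≤ 3 * Fintype.card F ^ 3 := by
      refine (Nat.mul_le_mul_left _ hcon).trans ?_
      rw [e1]; exact e2
    obtain ⟨r, hr⟩ : ∃ r, Fintype.card F = r + 100 := ⟨Fintype.card F - 100, by omega⟩
    have e4 : (r + 91) * (r + 99) ^ 2 ≤ 8 * Nat.card H := by
      refine le_trans ?_ hc
      gcongr <;> omega
    rw [hr] at e3
    have : 49 * ((r + 91) * (r + 99) ^ 2) ≤ 24 * (r + 100) ^ 3 := by linarith
    have h5 : 24 * (r + 100) ^ 3 < 49 * ((r + 91) * (r + 99) ^ 2) := by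
      ring_nf; nlinarith
    omega
  · omega
lemma fixed_mem {F : Type*} [Field F] [Fintype F] (K : Type*) [Field K] [Algebra F K] (a : K)
    (ha : a ^ Fintype.card F = a) : ∃ b : F, algebraMap F K b = a := by
  classical
  have hne := FiniteField.X_pow_card_sub_X_ne_zero K (Fintype.one_lt_card (α := F))
  set P : Polynomial K := Polynomial.X ^ Fintype.card F - Polynomial.X with hP
  have mem : ∀ a : K, a ∈ P.roots.toFinset ↔ a ^ Fintype.card F = a := by
    intro a
    rw [Multiset.mem_toFinset, Polynomial.mem_roots hne, Polynomial.IsRoot.def]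
    simp [hP, sub_eq_zero]
  have hsub : Finset.univ.image (algebraMap F K) ⊆ P.roots.toFinset := by
    intro a h
    rw [Finset.mem_image] at h
    obtain ⟨b, _, rfl⟩ := h
    rw [mem, ← map_pow, FiniteField.pow_card]
  have heq := Finset.eq_of_subset_of_card_le hsub (by
    rw [Finset.card_image_of_injective _ (algebraMap F K).injective, Finset.card_univ]
    refine (Multiset.toFinset_card_le _).trans ((Polynomial.card_roots' _).trans ?_)
    rw [hP, FiniteField.X_pow_card_sub_X_natDegree_eq K (Fintype.one_lt_card (α := F))])
  have := (mem a).2 ha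
  rw [← heq, Finset.mem_image] at this
  obtain ⟨b, _, h⟩ := this
  exact ⟨b, h⟩

lemma dvd_two_mul_iff (n m : ℕ) (hn : 0 < n) : n ∣ 2 * m ↔ n / Nat.gcd 2 n ∣ m := by
  rcases Nat.even_or_odd' n with ⟨k, rfl | rfl⟩
  · rw [Nat.gcd_mul_right_right, Nat.mul_div_cancel_left _ (by norm_num)]
    exact Nat.mul_dvd_mul_iff_left (by norm_num)
  · have : Nat.gcd 2 (2 * k + 1) = 1 := by simp
    rw [this, Nat.div_one]
    exact Nat.Coprime.dvd_mul_left (Nat.Coprime.symm this)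

lemma exists_tor (F : Type*) [Field F] [Fintype F] (n : ℕ) (hn : n + 1 = Fintype.card F ∨ n = Fintype.card F + 1)
    (h2 : 2 < n) : ∃ t0 : SL F, orderOf t0 = n ∧
      orderOf (QuotientGroup.mk t0 : (SL F) ⧸ Subgroup.center (SL F)) = n / Nat.gcd 2 n ∧
      t0.1.trace ^ 2 ≠ 4 ∧
      (n + 1 = Fintype.card F → ∃ l : F, l ^ 2 - t0.1.trace * l + 1 = 0) ∧
      (n = Fintype.card F + 1 → ∀ l : F, l ^ 2 - t0.1.trace * l + 1 ≠ 0) := by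
  set K := AlgebraicClosure F
  have hq0 : (Fintype.card F : F) = 0 := FiniteField.cast_card_eq_zero F
  have hn0 : NeZero (n : F) := by
    constructor
    rcases hn with h | h
    · intro h'
      have : ((n + 1 : ℕ) : F) = 0 := by rw [h, hq0]
      push_cast at this; rw [h'] at this; simp at this
    · rw [h]; push_cast; rw [hq0]; simp
  obtain ⟨w, hw⟩ := HasEnoughRootsOfUnity.exists_primitiveRoot K n
  have w0 : w ≠ 0 := hw.ne_zero (by omega)
  have hwq : w ^ Fintype.card F = w ∨ w ^ Fintype.card F = w⁻¹ := by
    rcases hn with h | h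
    · left; rw [← h, pow_succ, hw.pow_eq_one, one_mul]
    · right; apply eq_inv_of_mul_eq_one_left; rw [← pow_succ, ← h, hw.pow_eq_one]
  obtain ⟨T, hT⟩ := fixed_mem (F := F) K (w + w⁻¹) (by
    have := map_add (FiniteField.frobeniusAlgHom F K) w w⁻¹
    simp only [FiniteField.coe_frobeniusAlgHom] at this
    rw [this, inv_pow]
    rcases hwq with h | h
    · rw [h]
    · rw [h, inv_inv, add_comm])
  have hw2 : w - w⁻¹ ≠ 0 := by
    intro h
    have : w ^ 2 = 1 := by
      rw [sub_eq_zero] at h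
      rw [sq]; nth_rw 2 [h]; exact mul_inv_cancel₀ w0
    have := Nat.le_of_dvd (by norm_num) (hw.dvd_of_pow_eq_one _ this)
    omega
  have hwi : w * w⁻¹ = 1 := mul_inv_cancel₀ w0
  let t0 : SL F := ⟨!![0, -1; 1, T], by simp⟩
  have ht0 : t0.1 = !![0, -1; 1, T] := rfl
  have htr : t0.1.trace = T := by rw [ht0]; simp [Matrix.trace_fin_two]
  have hlin : ∀ m : ℕ, ∃ x z : F, (t0 ^ m).1 = x • 1 + z • t0.1 ∧
      w ^ m = algebraMap F K x + algebraMap F K z * w ∧ w⁻¹ ^ m = algebraMap F K x + algebraMap F K z * w⁻¹ := by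
    intro m
    induction m with
    | zero => exact ⟨1, 0, by simp, by simp, by simp⟩
    | succ k ih =>
      obtain ⟨x, z, h, h', h''⟩ := ih
      refine ⟨-z, x + z * T, ?_, ?_, ?_⟩
      · rw [pow_succ, Matrix.SpecialLinearGroup.coe_mul, h, add_mul, smul_mul_assoc, smul_mul_assoc,
          sq_mat _ t0.2, one_mul, htr]
        module
      · rw [pow_succ, h']
        simp only [map_neg, map_add, map_mul, hT]
        linear_combination -(algebraMap F K z) * hwi
      · rw [pow_succ, h'']
        simp only [map_neg, map_add, map_mul, hT]
        linear_combination -(algebraMap F K z) * hwi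
  have hinj := (algebraMap F K).injective
  have hc : ∀ m : ℕ, t0 ^ m ∈ Subgroup.center (SL F) ↔ n ∣ 2 * m := by
    intro m
    obtain ⟨x, z, h, h', h''⟩ := hlin m
    have e1 : n ∣ 2 * m ↔ z = 0 := by
      rw [← hw.pow_eq_one_iff_dvd]
      have : w ^ m * w⁻¹ ^ m = 1 := by rw [← mul_pow, hwi, one_pow]
      have e : w ^ m - w⁻¹ ^ m = algebraMap F K z * (w - w⁻¹) := by rw [h', h'']; ring
      constructor
      · intro h1
        have : w ^ m - w⁻¹ ^ m = 0 := by
          have : w ^ m * (w ^ m - w⁻¹ ^ m) = 0 := by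
            rw [mul_sub, this, ← pow_add, ← two_mul, h1, sub_self]
          exact (mul_eq_zero.mp this).resolve_left (pow_ne_zero _ w0)
        rw [this] at e
        have := (mul_eq_zero.mp e.symm).resolve_right hw2
        exact hinj (by rw [this, map_zero])
      · intro hz
        rw [hz, map_zero, zero_mul, sub_eq_zero] at e
        rw [two_mul, pow_add]; nth_rw 2 [e]; exact this
    rw [e1, Matrix.SpecialLinearGroup.mem_center_iff]
    constructor
    · rintro ⟨r, -, hr⟩
      rw [h, ht0] at hr
      have := congrFun (congrFun hr 1) 0
      simp at this
      exact this.symm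
    · intro hz
      have hd := (t0 ^ m).2
      rw [h, hz, det_lin] at hd
      refine ⟨x, ?_, ?_⟩
      · simp at hd ⊢; simpa using hd
      · rw [h, hz, zero_smul, add_zero]
        ext i j; fin_cases i <;> fin_cases j <;> simp
  refine ⟨t0, ?_, ?_, ?_, ?_, ?_⟩
  · apply Nat.dvd_right_iff_eq.mp
    intro m
    rw [orderOf_dvd_iff_pow_eq_one, ← hw.pow_eq_one_iff_dvd]
    obtain ⟨x, z, h, h', h''⟩ := hlin m
    constructor
    · intro h1
      rw [h1, ht0] at h
      have e1 := congrFun (congrFun h 1) 0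
      have e2 := congrFun (congrFun h 0) 0
      simp at e1 e2
      rw [h', ← e1, ← e2]; simp
    · intro h1
      have h3 : w⁻¹ ^ m = 1 := by rw [inv_pow, h1, inv_one]
      have hz : algebraMap F K z * (w - w⁻¹) = 0 := by linear_combination h'' - h' - h3 + h1
      have hz : z = 0 := hinj (by rw [(mul_eq_zero.mp hz).resolve_right hw2, map_zero])
      have hx : x = 1 := hinj (by rw [hz, h1] at h'; rw [map_one, h']; simp)
      apply Subtype.ext
      rw [h, hz, hx]; simp
  · apply Nat.dvd_right_iff_eq.mp
    intro m
    rw [orderOf_dvd_iff_pow_eq_one, ← dvd_two_mul_iff n m (by omega), ← hc, ← QuotientGroup.mk_pow,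
      QuotientGroup.eq_one_iff]
  · intro h
    rw [htr] at h
    have := congrArg (algebraMap F K) h
    rw [map_pow, hT] at this
    simp only [map_ofNat] at this
    have : (w - w⁻¹) ^ 2 = 0 := by linear_combination this - 4 * hwi
    exact hw2 (pow_eq_zero_iff (by norm_num) |>.mp this)
  · intro h
    obtain ⟨l, hl⟩ := fixed_mem (F := F) K w (by rw [← h, pow_succ, hw.pow_eq_one, one_mul])
    refine ⟨l, hinj ?_⟩
    rw [htr]
    simp only [map_add, map_sub, map_mul, map_pow, map_one, map_zero, hT, hl]
    linear_combination -hwi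
  · intro h l hl
    have hl := congrArg (algebraMap F K) hl
    rw [htr] at hl
    simp only [map_add, map_sub, map_mul, map_pow, map_one, map_zero, hT] at hl
    have hm : (algebraMap F K l - w) * (algebraMap F K l - w⁻¹) = 0 := by linear_combination hl + hwi
    have hfix : (algebraMap F K l) ^ Fintype.card F = algebraMap F K l := by
      rw [← map_pow, FiniteField.pow_card]
    have hwf : w ^ Fintype.card F = w⁻¹ := by
      apply eq_inv_of_mul_eq_one_left; rw [← pow_succ, ← h, hw.pow_eq_one]
    apply hw2
    rcases mul_eq_zero.mp hm with h | h
    · rw [sub_eq_zero.mp h, hwf] at hfix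
      rw [hfix, sub_self]
    · rw [sub_eq_zero.mp h, inv_pow, hwf, inv_inv] at hfix
      rw [← hfix, sub_self]
lemma inv_gen {F : Type*} [Field F] [Fintype F] (t0 y : SL F)
    (hq : Fintype.card F ≤ orderOf t0 + 1) (hbig : 2 * Nat.factorial 48 + 100 < Fintype.card F)
    (h1 : y.1.trace ≠ 0) (h2 : y.1.trace ^ 2 ≠ 1)
    (hno : ∀ t' y' : SL F, t'.1.trace = t0.1.trace → y'.1.trace = y.1.trace → cI y'.1 t'.1 ≠ 0) :
    InvGen (QuotientGroup.mk t0 : PSL2 F) (QuotientGroup.mk y : PSL2 F) := by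
  intro g h
  obtain ⟨g, rfl⟩ := QuotientGroup.mk_surjective g
  obtain ⟨h, rfl⟩ := QuotientGroup.mk_surjective h
  set L := Subgroup.closure {(QuotientGroup.mk g : PSL2 F) * QuotientGroup.mk t0 * (QuotientGroup.mk g)⁻¹,
    (QuotientGroup.mk h : PSL2 F) * QuotientGroup.mk y * (QuotientGroup.mk h)⁻¹} with hL
  have trc : ∀ a b : SL F, (a * b * a⁻¹).1.trace = b.1.trace := by
    intro a b
    have e : (a⁻¹).1 * a.1 = 1 := by
      rw [← Matrix.SpecialLinearGroup.coe_mul]; simp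
    rw [Matrix.SpecialLinearGroup.coe_mul, Matrix.SpecialLinearGroup.coe_mul, Matrix.trace_mul_comm,
      ← mul_assoc, e, one_mul]
  have hord : orderOf (g * t0 * g⁻¹) = orderOf t0 := by
    rw [← MulAut.conj_apply]; exact MulEquiv.orderOf_eq _ _
  have htop : L.comap (QuotientGroup.mk' (Subgroup.center (SL F))) = ⊤ := by
    apply gen_main _ (g * t0 * g⁻¹) (h * y * h⁻¹)
    · rw [Subgroup.mem_comap]
      exact Subgroup.subset_closure (by simp)
    · rw [Subgroup.mem_comap]
      exact Subgroup.subset_closure (by simp)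
    · exact hno _ _ (trc _ _) (trc _ _)
    · rw [trc]; exact h1
    · rw [trc]; exact h2
    · rw [hord]; exact hq
    · exact hbig
  rw [eq_top_iff]
  intro a _
  obtain ⟨a, rfl⟩ := QuotientGroup.mk_surjective a
  have : a ∈ L.comap (QuotientGroup.mk' (Subgroup.center (SL F))) := by rw [htop]; trivial
  exact this

lemma card_PSL {F : Type*} [Field F] [Fintype F] : Nat.card (SL F) ≤ 2 * Nat.card (PSL2 F) := by
  classical
  have h := Subgroup.card_eq_card_quotient_mul_card_subgroup (Subgroup.center (SL F))
  have hc : Nat.card (Subgroup.center (SL F)) ≤ 2 := by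
    rw [Nat.card_eq_fintype_card, Fintype.card_subtype]
    refine (Finset.card_le_card (t := {1, -1}) ?_).trans Finset.card_le_two
    intro a ha
    rw [Finset.mem_filter, Matrix.SpecialLinearGroup.mem_center_iff] at ha
    obtain ⟨-, r, hr, h⟩ := ha
    rw [Fintype.card_fin] at hr
    rcases sq_eq_sq_iff_eq_or_eq_neg.mp (hr.trans (one_pow 2).symm) with rfl | rfl
    · rw [Finset.mem_insert]; left; apply Subtype.ext; rw [← h]; simp
    · rw [Finset.mem_insert, Finset.mem_singleton]; right; apply Subtype.ext; rw [← h]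
      ext i j; fin_cases i <;> fin_cases j <;> simp
  rw [h, mul_comm]
  exact Nat.mul_le_mul_right _ hc

theorem stmt_2 :
    ∃ C : ℝ, 0 < C ∧
      ∀ (F : Type) [Field F] [Fintype F],
        ∃ x₁ x₂ : PSL2 F,
          orderOf x₁ = (Fintype.card F - 1) / Nat.gcd 2 (Fintype.card F - 1) ∧
          orderOf x₂ = (Fintype.card F + 1) / Nat.gcd 2 (Fintype.card F - 1) ∧
          (Nat.card {y : PSL2 F // InvGen x₁ y ∨ InvGen x₂ y} : ℝ) ≥
            (1 - C / Fintype.card F) * Nat.card (PSL2 F) := by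
  obtain ⟨B, hB⟩ : ∃ B : ℕ, B = 2 * Nat.factorial 48 + 100 := ⟨_, rfl⟩
  refine ⟨B + 100, by positivity, ?_⟩
  intro F _ _
  classical
  set q := Fintype.card F with hqdef
  have hq2 : 2 ≤ q := Fintype.one_lt_card
  have hgcd : Nat.gcd 2 (q + 1) = Nat.gcd 2 (q - 1) := by
    have : q + 1 = (q - 1) + 2 := by omega
    rw [this]; simp
  have hex1 : ∃ x₁ : PSL2 F, orderOf x₁ = (q - 1) / Nat.gcd 2 (q - 1) ∧ (3 < q → ∃ t0 : SL F,
      x₁ = QuotientGroup.mk t0 ∧ orderOf t0 = q - 1 ∧ t0.1.trace ^ 2 ≠ 4 ∧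
      ∃ l : F, l ^ 2 - t0.1.trace * l + 1 = 0) := by
    by_cases h : 3 < q
    · obtain ⟨t0, a, b, c, d, -⟩ := exists_tor F (q - 1) (Or.inl (by omega)) (by omega)
      exact ⟨QuotientGroup.mk t0, b, fun _ => ⟨t0, rfl, a, c, d (by omega)⟩⟩
    · refine ⟨1, ?_, fun h' => absurd h' h⟩
      rw [orderOf_one]
      have : q = 2 ∨ q = 3 := by omega
      rcases this with h | h <;> rw [h] <;> norm_num
  obtain ⟨x₁, ho1, hx1⟩ := hex1
  obtain ⟨t2, b1, b2, b3, -, b5⟩ := exists_tor F (q + 1) (Or.inr rfl) (by omega)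
  have b5 := b5 rfl
  refine ⟨x₁, QuotientGroup.mk t2, ho1, by rw [b2, hgcd], ?_⟩
  have hqr : (0 : ℝ) < q := by positivity
  by_cases hbig : B < q
  swap
  · have h1 : (1 : ℝ) - (B + 100) / q ≤ 0 := by
      rw [sub_nonpos, le_div_iff₀ hqr]
      have : (q : ℝ) ≤ B := by exact_mod_cast not_lt.mp hbig
      linarith
    exact (mul_nonpos_of_nonpos_of_nonneg h1 (by positivity)).trans (by positivity)
  obtain ⟨t1, rfl, a1, a3, l1, a4⟩ := hx1 (by omega)
  have hgood : ∀ y : SL F, y.1.trace ≠ 0 → y.1.trace ≠ 1 → y.1.trace ≠ -1 → y.1.trace ≠ 2 →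
      y.1.trace ≠ -2 → InvGen (QuotientGroup.mk t1 : PSL2 F) (QuotientGroup.mk y : PSL2 F) ∨
        InvGen (QuotientGroup.mk t2 : PSL2 F) (QuotientGroup.mk y : PSL2 F) := by
    intro y y0 y1 y1' y2 y2'
    have ysq : y.1.trace ^ 2 ≠ 1 := by
      intro h; have := sq_eq_sq_iff_eq_or_eq_neg.mp (h.trans (one_pow 2).symm)
      rcases this with h | h
      · exact y1 h
      · exact y1' h
    have ysq4 : y.1.trace ^ 2 ≠ 4 := by
      intro h
      have : (y.1.trace - 2) * (y.1.trace + 2) = 0 := by linear_combination h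
      rcases mul_eq_zero.mp this with h | h
      · exact y2 (sub_eq_zero.mp h)
      · exact y2' (eq_neg_of_add_eq_zero_left h)
    by_cases hl : ∃ l : F, l ^ 2 - y.1.trace * l + 1 = 0
    · right
      obtain ⟨l, hl⟩ := hl
      apply inv_gen t2 y (by rw [b1]; omega) (by omega) y0 ysq
      intro t' y' et ey h0
      obtain ⟨m, hm⟩ := cI_split y'.1 t'.1 y'.2 t'.2 l (by rw [ey]; exact hl) (by rw [ey]; exact ysq4) h0
      rw [et] at hm
      exact b5 m hm
    · left
      apply inv_gen t1 y (by rw [a1]; omega) (by omega) y0 ysq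
      intro t' y' et ey h0
      rw [cI_swap] at h0
      obtain ⟨m, hm⟩ := cI_split t'.1 y'.1 t'.2 y'.2 l1 (by rw [et]; exact a4) (by rw [et]; exact a3) h0
      rw [ey] at hm
      exact hl ⟨m, hm⟩
  set p : PSL2 F → Prop := fun y => InvGen (QuotientGroup.mk t1 : PSL2 F) y ∨
        InvGen (QuotientGroup.mk t2 : PSL2 F) y with hp
  letI : Fintype (PSL2 F) := Fintype.ofFinite _
  have hsum : Nat.card (PSL2 F) = Nat.card {y : PSL2 F // p y} + (Finset.univ.filter (fun y => ¬ p y)).card := by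
    rw [Nat.card_eq_fintype_card, Nat.card_eq_fintype_card, Fintype.card_subtype,
      Finset.card_filter_add_card_filter_not, Finset.card_univ]
  let A : F → Finset (SL F) := fun T => Finset.univ.filter (fun g : SL F => g.1.trace = T)
  have hbad : (Finset.univ.filter (fun y => ¬ p y)).card ≤ 15 * q ^ 2 := by
    have hsub : (Finset.univ.filter (fun y => ¬ p y)) ⊆
        (({0, 1, -1, 2, -2} : Finset F).biUnion A).image (QuotientGroup.mk : (SL F) → PSL2 F) := by
      intro y hy
      obtain ⟨y, rfl⟩ := QuotientGroup.mk_surjective y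
      rw [Finset.mem_image]
      refine ⟨y, ?_, rfl⟩
      by_contra hcon
      simp only [Finset.mem_biUnion, Finset.mem_insert, Finset.mem_singleton, A, Finset.mem_filter,
        Finset.mem_univ, true_and, exists_eq_right', not_or] at hcon
      exact (Finset.mem_filter.mp hy).2 (hgood y hcon.1 hcon.2.1 hcon.2.2.1 hcon.2.2.2.1 hcon.2.2.2.2)
    refine (Finset.card_le_card hsub).trans (Finset.card_image_le.trans ?_)
    refine (Finset.card_biUnion_le_card_mul _ _ (3 * q ^ 2) (fun T _ => card_trace T)).trans ?_
    have : ({0, 1, -1, 2, -2} : Finset F).card ≤ 5 := Finset.card_le_five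
    nlinarith
  have hc1 := card_PSL (F := F)
  have hc2 := le_card_SL (F := F)
  rw [← hqdef] at hc2
  have hc3 : q ^ 2 * q ≤ 4 * Nat.card (PSL2 F) := by
    have : q ≤ 2 * (q - 1) := by omega
    have := Nat.mul_le_mul_left (q ^ 2) this
    nlinarith
  have hfin : (15 * q ^ 2 : ℝ) ≤ (B + 100) / q * Nat.card (PSL2 F) := by
    have h3 : ((q : ℝ) ^ 2 * q) ≤ 4 * Nat.card (PSL2 F) := by exact_mod_cast hc3
    rw [div_mul_eq_mul_div, le_div_iff₀ hqr]
    have : (0 : ℝ) ≤ B * Nat.card (PSL2 F) := by positivity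
    nlinarith
  have hs : (Nat.card (PSL2 F) : ℝ) = Nat.card {y : PSL2 F // p y} + ((Finset.univ.filter (fun y => ¬ p y)).card : ℕ) := by
    exact_mod_cast hsum
  have hb : (((Finset.univ.filter (fun y => ¬ p y)).card : ℕ) : ℝ) ≤ 15 * q ^ 2 := by exact_mod_cast hbad
  have : (1 - ((B : ℝ) + 100) / q) * Nat.card (PSL2 F) = Nat.card (PSL2 F) - (B + 100) / q * Nat.card (PSL2 F) := by ring
  rw [ge_iff_le, this]
  linarith
end
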